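/- Let p be a prime and let Γ be a nontrivial simple group containing a subgroup isomorphic to the direct sum ⨁_{i ∈ ℕ} ℤ/pℤ of countably many copies of ℤ/pℤ. Let M be a compact topological manifold (a compact Hausdorff space locally homeomorphic to ℝⁿ for some n). Then every group homomorphism from Γ to the group of homeomorphisms of M is trivial; in particular Γ has no nontrivial action on M by homeomorphisms. -/

import Mathlib

/-!
# Simple groups containing an infinite elementary abelian group do not act on compact manifolds

An infinite simple group permutes the finitely many connected components of a compact manifold trivially,
and if it acts nontrivially on one of them it acts faithfully there (`MS.reduction`). So it suffices that an
infinite elementary abelian `p`-group `V` does not act faithfully on a compact connected manifold `M`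
(`MS.no_faithful`). This qualitative form of the theorem of Mann and Su is proved here from scratch.

**Homology.** Cochains are Alexander–Spanier cochains with coefficients in `ℤ/p`, encoded as functions on
lists of points, modulo functions vanishing on small lists. Chains are linear functionals on cochains that
kill the cochains with zero germ. They are used globally, or locally at a point `x` (localization at the
filter `⊤`, respectively `𝓝 x`). Their key properties are: exact decomposition along closed sets, the
vanishing of the equivariant theory above the dimension for free actions (`MS.Van_free`), the local homology
of a manifold (`MS.loc_zero`, `MS.loc_one`), and the finiteness of the homology of `M` (`MS.finite_hom`).

**Smith theory.** For a group of order `p`, the total dimension of the homology of the fixed set is at most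
that of the space (`MS.SmithData.sum_le`). Locally, the homology at `x` of the fixed set of a finite subgroup
fixing `x` is again a line, in a dimension that does not increase with the subgroup (`MS.row_step`).
Newman's theorem, that a nontrivial action of `ℤ/p` on a connected manifold has a fixed set without interior,
makes the first drop strict (`MS.row_vec`).

**The rank bound.** If `(ℤ/p)^r` acts and the homology relative to the points with nontrivial isotropy is
nonzero, of total dimension at most `b + 1`, and zero in degrees at least `N`, then `r + N + 1 ≤ b (N + 2)`
(`MS.ALData.rank_le`, `MS.AL_rank`). The relative chains are free, hence acyclic for the tensor product of
the `r` periodic resolutions. Dimension shifting bounds the group homology of the lowest homology module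
in degree `N + 2` by `b` times the number of multi-indices of degree `N + 1`, while a trivial quotient
line, provided by Nakayama's lemma, forces it to be as large as the number of those of degree `N + 2`.

**Isotropy ranks are bounded** (`MS.isotropy_bound`). Otherwise there are a point `x`, a subgroup `W` fixing
it, and a subgroup `U` of `W` of corank at least two, such that the fixed set of `U` has local dimension
larger than the common local dimension of the fixed sets of all larger subgroups of `W`. Then `(ℤ/p)²` acts on the
fixed set of `U` and the local homology relative to its singular part consists of two lines, contradicting the
rank bound with `b = 1` (`MS.no_gap`).

**Conclusion.** Choose `W` of maximal rank with nonempty fixed set `X`. A complement of `W` acts freely on `X`,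
whose homology has total dimension bounded by that of `M`, by Smith theory. The rank bound then bounds the
rank of the complement, which is infinite.
-/

/-- The group of homeomorphisms of a topological space, under composition
(`f * g` is `f ∘ g`). -/
instance homeomorphGroup (M : Type*) [TopologicalSpace M] : Group (M ≃ₜ M) where
  mul f g := g.trans f
  one := Homeomorph.refl M
  inv := Homeomorph.symm
  mul_assoc _ _ _ := Homeomorph.ext fun _ => rfl
  one_mul _ := Homeomorph.ext fun _ => rfl
  mul_one _ := Homeomorph.ext fun _ => rfl
  inv_mul_cancel f := f.self_trans_symm

namespace MS
open Set Filter Topology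
set_option linter.unusedSectionVars false
set_option linter.style.haveILetI false

noncomputable section

/-! ### Alexander–Spanier cochains as functions on lists -/

section Basic
variable {k : Type*} [Field k] {M : Type*}

/-- The alternating sum of the values of `φ` on the faces of a list, by recursion on its first entry. -/
def dAux : List M → (List M → k) → k
  | [], _ => 0
  | x :: t, φ => φ t - dAux t (fun s => φ (x :: s))

lemma dAux_add (t : List M) : ∀ (φ ψ : List M → k), dAux t (φ + ψ) = dAux t φ + dAux t ψ := by
  induction t with
  | nil => intro φ ψ; simp [dAux]
  | cons x t ih =>
    intro φ ψ
    have := ih (fun s => φ (x :: s)) (fun s => ψ (x :: s))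
    simp only [dAux, Pi.add_apply]
    rw [show (fun s => φ (x :: s) + ψ (x :: s)) = (fun s => φ (x :: s)) + (fun s => ψ (x :: s)) from rfl, this]
    ring

lemma dAux_smul (t : List M) : ∀ (c : k) (φ : List M → k), dAux t (c • φ) = c * dAux t φ := by
  induction t with
  | nil => intro c φ; simp [dAux]
  | cons x t ih =>
    intro c φ
    have := ih c (fun s => φ (x :: s))
    simp only [dAux, Pi.smul_apply, smul_eq_mul]
    rw [show (fun s => c * φ (x :: s)) = c • (fun s => φ (x :: s)) from rfl, this]
    ring

/-- The Alexander–Spanier coboundary on functions on lists. A list of length `m` is a simplex of dimension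
`m - 1`; the empty list plays the role of the augmentation, so that cohomology is reduced. -/
def d : (List M → k) →ₗ[k] (List M → k) where
  toFun φ t := dAux t φ
  map_add' φ ψ := by ext t; exact dAux_add t φ ψ
  map_smul' c φ := by ext t; exact dAux_smul t c φ

/-- Insertion of `x` as first entry. -/
def sh (x : M) : (List M → k) →ₗ[k] (List M → k) where
  toFun φ t := φ (x :: t)
  map_add' _ _ := rfl
  map_smul' _ _ := rfl

@[simp] lemma sh_apply (x : M) (φ : List M → k) (t) : sh x φ t = φ (x :: t) := rfl
@[simp] lemma d_nil (φ : List M → k) : d φ [] = 0 := rfl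
lemma d_cons (φ : List M → k) (x : M) (t : List M) : d φ (x :: t) = φ t - d (sh x φ) t := rfl

lemma sh_d (x : M) (φ : List M → k) : sh x (d φ) = φ - d (sh x φ) := by
  ext t; simp [d_cons]

lemma d_d (φ : List M → k) : d (d φ) = 0 := by
  ext t
  induction t generalizing φ with
  | nil => simp
  | cons x t ih => rw [d_cons, sh_d, map_sub, Pi.sub_apply, ih]; simp

lemma d_congr {φ ψ : List M → k} (t : List M)
    (h : ∀ s, s.Sublist t → s.length + 1 = t.length → φ s = ψ s) : d φ t = d ψ t := by
  induction t generalizing φ ψ with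
  | nil => simp
  | cons x t ih =>
    rw [d_cons, d_cons, h t (List.sublist_cons_self x t) (by simp), ih (φ := sh x φ) (ψ := sh x ψ)]
    intro s hs hl
    exact h _ (hs.cons_cons x) (by simp [hl])

lemma d_congr' {φ ψ : List M → k} {P : M → Prop} (t : List M) (ht : ∀ z ∈ t, P z)
    (h : ∀ s, s.length + 1 = t.length → (∀ z ∈ s, P z) → φ s = ψ s) : d φ t = d ψ t :=
  d_congr t fun s hs hl => h s hl fun z hz => ht z (hs.subset hz)

lemma d_eq_zero {φ : List M → k} {P : M → Prop} (t : List M) (ht : ∀ z ∈ t, P z)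
    (h : ∀ s, s.length + 1 = t.length → (∀ z ∈ s, P z) → φ s = 0) : d φ t = 0 := by
  rw [d_congr' (ψ := 0) t ht h]; simp

lemma d_map (r : M → M) (φ : List M → k) (t : List M) :
    d (fun s => φ (s.map r)) t = d φ (t.map r) := by
  induction t generalizing φ with
  | nil => simp
  | cons x t ih => rw [List.map_cons, d_cons, d_cons, ← ih]; rfl

/-- The value of the prism operator at a list, by recursion on its first entry. -/
def hAux (r : M → M) : List M → (List M → k) → k
  | [], _ => 0
  | x :: t, φ => φ (x :: r x :: t.map r) - hAux r t (fun s => φ (x :: s))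

lemma hAux_sub (r : M → M) (t : List M) :
    ∀ (φ ψ : List M → k), hAux r t (φ - ψ) = hAux r t φ - hAux r t ψ := by
  induction t with
  | nil => intro φ ψ; simp [hAux]
  | cons x t ih =>
    intro φ ψ
    have := ih (fun s => φ (x :: s)) (fun s => ψ (x :: s))
    simp only [hAux, Pi.sub_apply]
    rw [show (fun s => φ (x :: s) - ψ (x :: s)) = (fun s => φ (x :: s)) - (fun s => ψ (x :: s)) from rfl, this]
    ring

/-- The prism operator, a homotopy between the identity and the pull-back along `r`. No continuity is
required of `r`. -/
def prism (r : M → M) (φ : List M → k) : List M → k := fun t => hAux r t φ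

lemma prism_cons (r : M → M) (φ : List M → k) (x : M) (t : List M) :
    prism r φ (x :: t) = φ (x :: r x :: t.map r) - prism r (sh x φ) t := rfl
@[simp] lemma prism_nil (r : M → M) (φ : List M → k) : prism r φ [] = 0 := rfl
lemma prism_sub (r : M → M) (φ ψ : List M → k) : prism r (φ - ψ) = prism r φ - prism r ψ := by
  ext t; exact hAux_sub r t φ ψ

/-- The homotopy formula for the prism operator. -/
lemma prism_id (r : M → M) (φ : List M → k) (t : List M) :
    d (prism r φ) t + prism r (d φ) t = φ (t.map r) - φ t := by
  induction t generalizing φ with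
  | nil => simp
  | cons x t ih =>
    have e1 : sh x (prism r φ) = (fun s => sh (r x) (sh x φ) (s.map r)) - prism r (sh x φ) := by
      ext s; rfl
    rw [d_cons, prism_cons, e1, map_sub, Pi.sub_apply, d_map, sh_d, prism_sub, d_cons]
    have := ih (sh x φ)
    simp only [Pi.sub_apply, List.map_cons, sh_apply, d_cons] at this ⊢
    linear_combination this

lemma prism_eq_zero {r : M → M} {P : M → Prop} (t : List M) {φ : List M → k}
    (ht : ∀ z ∈ t, P z ∧ P (r z))
    (h : ∀ s, s.length = t.length + 1 → (∀ z ∈ s, P z) → φ s = 0) : prism r φ t = 0 := by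
  induction t generalizing φ with
  | nil => rfl
  | cons x t ih =>
    have hx := ht x (by simp)
    rw [prism_cons, h, ih (φ := sh x φ), sub_zero]
    · intro z hz; exact ht z (by simp [hz])
    · intro s hs hP
      exact h _ (by simp [hs]) (by simpa [hx.1] using hP)
    · simp
    · intro z hz
      simp only [List.mem_cons, List.mem_map] at hz
      rcases hz with rfl | rfl | ⟨w, hw, rfl⟩
      · exact hx.1
      · exact hx.2
      · exact (ht w (by simp [hw])).2

lemma prism_map (r a : M → M) (hra : ∀ z, r (a z) = a (r z)) (φ : List M → k) (t : List M) :
    prism r φ (t.map a) = prism r (fun s => φ (s.map a)) t := by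
  induction t generalizing φ with
  | nil => rfl
  | cons x t ih =>
    rw [List.map_cons, prism_cons, prism_cons, ih]
    have e : t.map (r ∘ a) = t.map (a ∘ r) := List.map_congr_left fun z _ => hra z
    simp only [List.map_cons, List.map_map, hra, e]
    rfl

/-- Multiplication by the indicator function of a set of lists. -/
def cut (S : Set (List M)) : (List M → k) →ₗ[k] (List M → k) where
  toFun φ := S.indicator φ
  map_add' φ ψ := Set.indicator_add S φ ψ
  map_smul' c φ := Set.indicator_const_smul S c φ

open Classical in
lemma cut_apply (S : Set (List M)) (φ : List M → k) (t) : cut S φ t = if t ∈ S then φ t else 0 := rfl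

end Basic

section Top
variable {k : Type*} [Field k] {M : Type*} [TopologicalSpace M]

/-- The functions whose part in length `m` has zero germ along `A`: each point of `A` has a neighbourhood
such that they vanish on the lists of length `m` with entries in it. The first clause makes the functions
of `I k 0 A` vanish at the empty list even when `A` is empty. -/
def I (k : Type*) [Field k] (m : ℕ) (A : Set M) : Submodule k (List M → k) where
  carrier := {φ | (m = 0 → φ [] = 0) ∧
    ∀ y ∈ A, ∃ U ∈ 𝓝 y, ∀ t : List M, t.length = m → (∀ z ∈ t, z ∈ U) → φ t = 0}
  add_mem' := by
    rintro φ ψ ⟨h0, h1⟩ ⟨h0', h1'⟩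
    refine ⟨fun h => by simp [h0 h, h0' h], fun y hy => ?_⟩
    obtain ⟨U, hU, h⟩ := h1 y hy
    obtain ⟨V, hV, h'⟩ := h1' y hy
    refine ⟨U ∩ V, inter_mem hU hV, fun t ht hz => ?_⟩
    simp [h t ht fun z hz' => (hz z hz').1, h' t ht fun z hz' => (hz z hz').2]
  zero_mem' := ⟨fun _ => rfl, fun _ _ => ⟨univ, univ_mem, fun _ _ _ => rfl⟩⟩
  smul_mem' := by
    rintro c φ ⟨h0, h1⟩
    refine ⟨fun h => by simp [h0 h], fun y hy => ?_⟩
    obtain ⟨U, hU, h⟩ := h1 y hy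
    exact ⟨U, hU, fun t ht hz => by simp [h t ht hz]⟩

lemma mem_I {m : ℕ} {A : Set M} {φ : List M → k} : φ ∈ I k m A ↔ (m = 0 → φ [] = 0) ∧
    ∀ y ∈ A, ∃ U ∈ 𝓝 y, ∀ t : List M, t.length = m → (∀ z ∈ t, z ∈ U) → φ t = 0 := Iff.rfl

lemma I_anti {m : ℕ} {A B : Set M} (h : A ⊆ B) : I k m B ≤ I k m A :=
  fun _ hφ => ⟨hφ.1, fun y hy => hφ.2 y (h hy)⟩

lemma mem_I_union {m : ℕ} {A B : Set M} {φ : List M → k} (hA : φ ∈ I k m A) (hB : φ ∈ I k m B) :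
    φ ∈ I k m (A ∪ B) :=
  ⟨hA.1, fun y hy => hy.elim (hA.2 y) (hB.2 y)⟩

lemma d_mem_I {m : ℕ} {A : Set M} {φ : List M → k} (h : φ ∈ I k m A) : d φ ∈ I k (m + 1) A := by
  refine ⟨fun h => by simp at h, fun y hy => ?_⟩
  obtain ⟨U, hU, h⟩ := h.2 y hy
  exact ⟨U, hU, fun t ht hz => d_eq_zero t hz fun s hs hs' => h s (by omega) hs'⟩

lemma cut_mem_I {m : ℕ} {A : Set M} {φ : List M → k} (S : Set (List M)) (h : φ ∈ I k m A) :
    cut S φ ∈ I k m A := by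
  refine ⟨fun h0 => ?_, fun y hy => ?_⟩
  · rw [cut_apply]; simp [h.1 h0]
  · obtain ⟨U, hU, h⟩ := h.2 y hy
    exact ⟨U, hU, fun t ht hz => by rw [cut_apply]; simp [h t ht hz]⟩

lemma mem_I_zero {A : Set M} {φ : List M → k} : φ ∈ I k 0 A ↔ φ [] = 0 := by
  refine ⟨fun h => h.1 rfl, fun h => ⟨fun _ => h, fun y _ => ⟨univ, univ_mem, fun t ht _ => ?_⟩⟩⟩
  rw [List.length_eq_zero_iff.1 ht, h]

lemma mem_I_empty {m : ℕ} (hm : m ≠ 0) (φ : List M → k) : φ ∈ I k m (∅ : Set M) :=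
  ⟨fun h => (hm h).elim, fun _ hy => hy.elim⟩

/-- Germs along `A` extend to an open neighbourhood of `A`. -/
lemma exists_open_I {m : ℕ} {A : Set M} {φ : List M → k} (h : φ ∈ I k m A) :
    ∃ O : Set M, IsOpen O ∧ A ⊆ O ∧ φ ∈ I k m O := by
  obtain ⟨h0, h1⟩ := mem_I.1 h
  let O : Set M := {y | ∀ᶠ U in (𝓝 y).smallSets, ∀ t : List M, t.length = m → (∀ z ∈ t, z ∈ U) → φ t = 0}
  have hO : O = ⋃₀ {U | IsOpen U ∧ ∀ t : List M, t.length = m → (∀ z ∈ t, z ∈ U) → φ t = 0} := by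
    ext y
    simp only [O, mem_setOf_eq, mem_sUnion, eventually_smallSets]
    constructor
    · rintro ⟨s, hs, h⟩
      exact ⟨interior s, ⟨isOpen_interior, h _ interior_subset⟩, mem_interior_iff_mem_nhds.2 hs⟩
    · rintro ⟨U, ⟨hU, h⟩, hy⟩
      exact ⟨U, hU.mem_nhds hy, fun t ht s hs hz => h s hs fun z hz' => ht (hz z hz')⟩
  refine ⟨O, ?_, ?_, mem_I.2 ⟨h0, ?_⟩⟩
  · rw [hO]; exact isOpen_sUnion fun U hU => hU.1
  · intro y hy
    obtain ⟨U, hU, h⟩ := h1 y hy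
    exact eventually_smallSets.2 ⟨U, hU, fun t ht s hs hz => h s hs fun z hz' => ht (hz z hz')⟩
  · intro y hy
    obtain ⟨U, hU, h⟩ := eventually_smallSets.1 hy
    exact ⟨U, hU, h U Subset.rfl⟩

end Top

/-! ### Invariant cochains and equivariant selections -/

section Equi
variable (Q : Type*) [Group Q] {M : Type*} [MulAction Q M]

/-- Lists all of whose entries are fixed by a common nontrivial group element. -/
def SQ : Set (List M) := {t | ∃ g : Q, g ≠ 1 ∧ ∀ z ∈ t, g • z = z}

/-- Invariant cochains vanishing on the singular lists. -/
def KK (k : Type*) [Field k] : Submodule k (List M → k) where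
  carrier := {φ | (∀ (g : Q) t, φ (t.map (g • ·)) = φ t) ∧ ∀ t ∈ SQ Q, φ t = 0}
  add_mem' := by
    rintro φ ψ ⟨h, h'⟩ ⟨h1, h1'⟩
    exact ⟨fun g t => by simp [h, h1], fun t ht => by simp [h' t ht, h1' t ht]⟩
  zero_mem' := ⟨fun _ _ => rfl, fun _ _ => rfl⟩
  smul_mem' := by
    rintro c φ ⟨h, h'⟩
    exact ⟨fun g t => by simp [h], fun t ht => by simp [h' t ht]⟩

variable {Q}
/-- `A` is stable under `Q`. -/
def Inv (Q : Type*) [Group Q] [MulAction Q M] (A : Set M) : Prop := ∀ (g : Q), ∀ z ∈ A, g • z ∈ A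

lemma Inv.iff {A : Set M} (h : Inv Q A) (g : Q) (z : M) : g • z ∈ A ↔ z ∈ A :=
  ⟨fun h' => by simpa using h g⁻¹ _ h', h g z⟩
lemma Inv.inter {A B : Set M} (h : Inv Q A) (h' : Inv Q B) : Inv Q (A ∩ B) :=
  fun g z hz => ⟨h g z hz.1, h' g z hz.2⟩
lemma Inv.union {A B : Set M} (h : Inv Q A) (h' : Inv Q B) : Inv Q (A ∪ B) :=
  fun g z hz => hz.imp (h g z) (h' g z)
lemma Inv.compl {A : Set M} (h : Inv Q A) : Inv Q Aᶜ :=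
  fun g z hz h' => hz ((h.iff g z).1 h')

variable {k : Type*} [Field k]

lemma mem_KK {φ : List M → k} : φ ∈ KK Q k ↔
    (∀ (g : Q) t, φ (t.map (g • ·)) = φ t) ∧ ∀ t ∈ SQ Q, φ t = 0 := Iff.rfl

lemma SQ_mono {s t : List M} (h : ∀ z ∈ s, z ∈ t) (ht : t ∈ SQ Q) : s ∈ SQ Q := by
  obtain ⟨g, hg, h'⟩ := ht
  exact ⟨g, hg, fun z hz => h' z (h z hz)⟩

lemma d_mem_KK {φ : List M → k} (h : φ ∈ KK Q k) : d φ ∈ KK Q k := by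
  obtain ⟨h1, h2⟩ := mem_KK.1 h
  refine mem_KK.2 ⟨fun g t => ?_, fun t ht => ?_⟩
  · rw [← d_map]; simp_rw [h1]
  · exact d_eq_zero (P := fun z => z ∈ t) t (fun z hz => hz) fun s _ hs => h2 s (SQ_mono hs ht)

lemma prism_mem_KK {φ : List M → k} (h : φ ∈ KK Q k) {r : M → M} (hr : ∀ (g : Q) z, r (g • z) = g • r z) :
    prism r φ ∈ KK Q k := by
  obtain ⟨h1, h2⟩ := mem_KK.1 h
  refine mem_KK.2 ⟨fun g t => ?_, fun t ht => ?_⟩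
  · rw [prism_map r _ (hr g)]; simp_rw [h1]
  · obtain ⟨g, hg, ht⟩ := ht
    refine prism_eq_zero (P := fun z => g • z = z) t (fun z hz => ⟨ht z hz, ?_⟩) fun s _ hs => h2 s ⟨g, hg, hs⟩
    rw [← hr, ht z hz]

end Equi

section Select
variable {Q : Type*} [Group Q] [Fintype Q] {M : Type*} [MetricSpace M] [CompactSpace M] [MulAction Q M]
  [ContinuousConstSMul Q M]

/-- The isotropy group of a point near `y` is contained in that of `y`. -/
lemma stab_near (y : M) : ∀ᶠ z in 𝓝 y, ∀ g : Q, g • z = z → g • y = y := by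
  rw [eventually_all]
  intro g
  by_cases h : g • y = y
  · exact Eventually.of_forall fun _ _ => h
  · have : IsClosed {z : M | g • z = z} := isClosed_eq (continuous_const_smul g) continuous_id
    filter_upwards [this.isOpen_compl.mem_nhds (show y ∈ {z : M | g • z = z}ᶜ from h)] with z hz hz'
    exact (hz hz').elim

/-- Equivariant (discontinuous) nearest point selection onto a closed invariant set. -/
lemma exists_selection {Z : Set M} (hZ : IsClosed Z) (hZi : Inv Q Z) :
    ∃ r : M → M, (∀ (g : Q) z, r (g • z) = g • r z) ∧ (∀ y ∈ Z, r y = y) ∧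
      (∀ y ∈ Z, Tendsto r (𝓝 y) (𝓝 y)) ∧ ∀ y ∈ Z, ∀ᶠ z in 𝓝 y, r z ∈ Z := by
  classical
  -- an invariant metric
  let δ : M → M → ℝ := fun z w => ∑ g : Q, dist (g • z) (g • w)
  have δinv : ∀ (g : Q) z w, δ (g • z) (g • w) = δ z w := by
    intro g z w
    simp only [δ, smul_smul]
    exact Fintype.sum_equiv (Equiv.mulRight g) _ _ (fun x => rfl)
  have δle : ∀ z w, dist z w ≤ δ z w := by
    intro z w
    have := Finset.single_le_sum (f := fun g : Q => dist (g • z) (g • w)) (fun _ _ => dist_nonneg) (Finset.mem_univ 1)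
    simpa using this
  have δcont : Continuous fun q : M × M => δ q.1 q.2 := by
    refine continuous_finsetSum _ fun g _ => ?_
    exact ((continuous_const_smul g).comp continuous_fst).dist ((continuous_const_smul g).comp continuous_snd)
  -- equivariance forces the image of `z` to be fixed by the isotropy group of `z`
  let C : M → Set M := fun z => Z ∩ {w | ∀ g : Q, g • z = z → g • w = w}
  have hC : ∀ z, IsCompact (C z) := by
    intro z
    refine (hZ.inter ?_).isCompact
    simp only [Set.ofPred_forall]
    refine isClosed_iInter fun g => isClosed_iInter fun _ => ?_
    exact isClosed_eq (continuous_const_smul g) continuous_id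
  have : ∀ z, ∃ w, (∀ g : Q, g • z = z → g • w = w) ∧ ∀ w' ∈ C z, w ∈ Z ∧ δ z w ≤ δ z w' := by
    intro z
    rcases (C z).eq_empty_or_nonempty with h | h
    · exact ⟨z, fun _ h => h, by simp [h]⟩
    · obtain ⟨w, hw, hmin⟩ := (hC z).exists_isMinOn h (f := fun w => δ z w)
        (δcont.comp (Continuous.prodMk_right z)).continuousOn
      exact ⟨w, hw.2, fun w' hw' => ⟨hw.1, hmin hw'⟩⟩
  choose r0 hr0 hr0' using this
  -- nearest points are chosen on orbit representatives and transported along the orbits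
  let rep : M → M := fun z => (Quotient.mk (MulAction.orbitRel Q M) z).out
  have hrep : ∀ z, ∃ g : Q, g • rep z = z := by
    intro z
    have : (MulAction.orbitRel Q M) (rep z) z := Quotient.exact (Quotient.out_eq _)
    obtain ⟨g, hg⟩ := (MulAction.orbitRel Q M).symm this
    exact ⟨g, hg⟩
  choose γ hγ using hrep
  have rep_smul : ∀ (g : Q) z, rep (g • z) = rep z := by
    intro g z
    simp only [rep]
    congr 1
    exact Quotient.sound ⟨g, rfl⟩
  have key : ∀ z, ∀ w' ∈ C z, γ z • r0 (rep z) ∈ Z ∧ δ z (γ z • r0 (rep z)) ≤ δ z w' := by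
    intro z w' hw'
    have h1 : (γ z)⁻¹ • w' ∈ C (rep z) := by
      refine ⟨hZi _ _ hw'.1, fun g hg => ?_⟩
      have := hw'.2 (γ z * g * (γ z)⁻¹) (by
        have hz : (γ z)⁻¹ • z = rep z := by rw [inv_smul_eq_iff, hγ]
        rw [mul_smul, mul_smul, hz, hg, hγ])
      rw [eq_inv_smul_iff]
      simpa [mul_smul] using this
    obtain ⟨h2, h3⟩ := hr0' _ _ h1
    refine ⟨hZi _ _ h2, ?_⟩
    calc δ z (γ z • r0 (rep z)) = δ (γ z • rep z) (γ z • r0 (rep z)) := by rw [hγ]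
      _ ≤ δ (rep z) ((γ z)⁻¹ • w') := by rw [δinv]; exact h3
      _ = δ z w' := by rw [← δinv (γ z), hγ, smul_inv_smul]
  have near : ∀ y ∈ Z, ∀ᶠ z in 𝓝 y, y ∈ C z := by
    intro y hy
    filter_upwards [stab_near (Q := Q) y] with z hz using ⟨hy, hz⟩
  refine ⟨fun z => γ z • r0 (rep z), ?_, ?_, ?_, ?_⟩
  · intro g z
    simp only [rep_smul]
    have := hr0 (rep z) ((g * γ z)⁻¹ * γ (g • z)) (by
      rw [mul_smul]
      conv_lhs => rw [← rep_smul g z, hγ]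
      rw [inv_smul_eq_iff, mul_smul, hγ])
    rw [mul_smul, inv_smul_eq_iff, mul_smul] at this
    exact this
  · intro y hy
    have := (key y y ⟨hy, fun _ h => h⟩).2
    have h0 : δ y y = 0 := by simp [δ]
    have := (δle y _).trans (this.trans h0.le)
    exact (dist_le_zero.1 this).symm
  · intro y hy
    have h0 : Tendsto (fun z => dist z (γ z • r0 (rep z))) (𝓝 y) (𝓝 0) := by
      have hd : Tendsto (fun z => δ z y) (𝓝 y) (𝓝 0) := by
        have := (δcont.comp (Continuous.prodMk_left y)).tendsto y
        simpa [δ, Function.comp_def] using this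
      refine squeeze_zero' (Eventually.of_forall fun _ => dist_nonneg) ?_ hd
      filter_upwards [near y hy] with z hz using (δle _ _).trans (key z y hz).2
    exact tendsto_of_tendsto_of_dist (f₁ := fun z => z) tendsto_id h0
  · intro y hy
    filter_upwards [near y hy] with z hz using (key z y hz).1

end Select

/-! ### Equivariant cohomology of germs: gluing and slicing -/

section
variable {Q : Type*} [Group Q] [Fintype Q] {M : Type*} [MetricSpace M] [CompactSpace M] [MulAction Q M]
  [ContinuousConstSMul Q M] {k : Type*} [Field k]

/-- Splitting a cochain with trivial germ along `A ∩ B`. -/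
lemma split {A B : Set M} (hA : IsClosed A) (hAi : Inv Q A) (hB : IsClosed B) (hBi : Inv Q B) {m : ℕ}
    {κ : List M → k} (hκ : κ ∈ KK Q k) (hκI : κ ∈ I k m (A ∩ B)) :
    ∃ α ∈ KK Q k, α ∈ I k m A ∧ κ - α ∈ I k m B := by
  classical
  let f : Set M → M → ENNReal := fun A z => ∑ g : Q, Metric.infEDist (g • z) A
  have fcont : ∀ A, Continuous (f A) := fun A =>
    continuous_finsetSum _ fun g _ => Metric.continuous_infEDist.comp (continuous_const_smul g)
  have finv : ∀ A (g : Q) z, f A (g • z) = f A z := by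
    intro A g z
    simp only [f, smul_smul]
    exact Fintype.sum_equiv (Equiv.mulRight g) _ _ (fun x => rfl)
  have f0 : ∀ A, Inv Q A → ∀ z ∈ A, f A z = 0 := by
    intro A hA z hz
    exact Finset.sum_eq_zero fun g _ => Metric.infEDist_zero_of_mem (hA g z hz)
  have fpos : ∀ A, IsClosed A → ∀ z ∉ A, 0 < f A z := by
    intro A hA z hz
    rw [pos_iff_ne_zero]
    intro h
    have := (Finset.sum_eq_zero_iff.1 h) 1 (Finset.mem_univ _)
    rw [one_smul] at this
    exact hz ((Metric.mem_iff_infEDist_zero_of_closed hA).2 this)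
  let O : Set (List M) := {t | ∃ z s, t = z :: s ∧ f B z < f A z}
  have hO : ∀ (g : Q) t, t.map (g • ·) ∈ O ↔ t ∈ O := by
    intro g t
    cases t with
    | nil => simp [O]
    | cons z s => simp [O, finv]
  obtain ⟨h1, h2⟩ := mem_KK.1 hκ
  obtain ⟨i0, i1⟩ := mem_I.1 hκI
  refine ⟨cut O κ, mem_KK.2 ⟨fun g t => ?_, fun t ht => ?_⟩, mem_I.2 ⟨fun h => ?_, fun y hy => ?_⟩,
    mem_I.2 ⟨fun h => ?_, fun y hy => ?_⟩⟩
  · simp only [cut_apply, hO, h1]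
  · simp [cut_apply, h2 t ht]
  · simp [cut_apply, i0 h]
  · by_cases hyB : y ∈ B
    · obtain ⟨U, hU, h⟩ := i1 y ⟨hy, hyB⟩
      exact ⟨U, hU, fun t ht hz => by simp [cut_apply, h t ht hz]⟩
    · refine ⟨{z | f A z < f B z}, (isOpen_lt (fcont A) (fcont B)).mem_nhds ?_, fun t ht hz => ?_⟩
      · change f A y < f B y
        rw [f0 A hAi y hy]; exact fpos B hB y hyB
      · cases t with
        | nil => simp [cut_apply, i0 (by simpa using ht.symm)]
        | cons z s =>
          have : z :: s ∉ O := by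
            rintro ⟨z', s', h, h'⟩
            obtain ⟨rfl, rfl⟩ := List.cons_eq_cons.1 h
            exact lt_asymm h' (hz z (by simp))
          simp [cut_apply, this]
  · simp [cut_apply, i0 h]
  · by_cases hyA : y ∈ A
    · obtain ⟨U, hU, h⟩ := i1 y ⟨hyA, hy⟩
      exact ⟨U, hU, fun t ht hz => by simp [cut_apply, h t ht hz]⟩
    · refine ⟨{z | f B z < f A z}, (isOpen_lt (fcont B) (fcont A)).mem_nhds ?_, fun t ht hz => ?_⟩
      · change f B y < f A y
        rw [f0 B hBi y hy]; exact fpos A hA y hyA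
      · cases t with
        | nil => simp [cut_apply, i0 (by simpa using ht.symm)]
        | cons z s =>
          have : z :: s ∈ O := ⟨z, s, rfl, hz z (by simp)⟩
          simp [cut_apply, this]

variable (Q k) in
/-- Vanishing of the equivariant cohomology of germs along `A` in length `m`. -/
def Van (m : ℕ) (A : Set M) : Prop :=
  ∀ φ ∈ KK Q k, d φ ∈ I k (m + 1) A → ∃ ψ ∈ KK Q k, φ - d ψ ∈ I k m A

lemma Van_empty {m : ℕ} (hm : m ≠ 0) : Van Q k m (∅ : Set M) :=
  fun _ _ _ => ⟨0, zero_mem _, mem_I_empty hm _⟩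

/-- Mayer–Vietoris gluing of primitives. -/
lemma mv {A B : Set M} (hA : IsClosed A) (hAi : Inv Q A) (hB : IsClosed B) (hBi : Inv Q B) {m : ℕ}
    (hV : Van Q k m (A ∩ B)) {φ ψA ψB : List M → k} (hψA : ψA ∈ KK Q k) (hψB : ψB ∈ KK Q k)
    (h1 : φ - d ψA ∈ I k (m + 1) A) (h2 : φ - d ψB ∈ I k (m + 1) B) :
    ∃ ψ ∈ KK Q k, φ - d ψ ∈ I k (m + 1) (A ∪ B) := by
  have hd : d (ψA - ψB) ∈ I k (m + 1) (A ∩ B) := by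
    have := sub_mem (I_anti (inter_subset_right (s := A) (t := B)) h2) (I_anti (inter_subset_left (s := A) (t := B)) h1)
    rwa [sub_sub_sub_cancel_left, ← map_sub] at this
  obtain ⟨χ, hχ, h⟩ := hV _ (sub_mem hψA hψB) hd
  obtain ⟨α, hα, hαA, hαB⟩ := split hA hAi hB hBi (sub_mem (sub_mem hψA hψB) (d_mem_KK hχ)) h
  refine ⟨ψA - α - d χ, sub_mem (sub_mem hψA hα) (d_mem_KK hχ), mem_I_union ?_ ?_⟩
  · have := add_mem h1 (d_mem_I hαA)
    rw [map_sub, map_sub, d_d, sub_zero]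
    convert this using 1; abel
  · have := sub_mem h2 (d_mem_I hαB)
    rw [map_sub, map_sub, d_d, sub_zero] 
    rw [map_sub, map_sub, map_sub, d_d, sub_zero] at this
    convert this using 1; abel

lemma Van_union {A B : Set M} (hA : IsClosed A) (hAi : Inv Q A) (hB : IsClosed B) (hBi : Inv Q B) {m : ℕ}
    (hV : Van Q k m (A ∩ B)) (h1 : Van Q k (m + 1) A) (h2 : Van Q k (m + 1) B) :
    Van Q k (m + 1) (A ∪ B) := by
  intro φ hφ hd
  obtain ⟨ψA, hψA, h1⟩ := h1 φ hφ (I_anti subset_union_left hd)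
  obtain ⟨ψB, hψB, h2⟩ := h2 φ hφ (I_anti subset_union_right hd)
  exact mv hA hAi hB hBi hV hψA hψB h1 h2

/-- If all slices of `D` by an invariant function have vanishing cohomology, so has `D`. -/
lemma Van_slice {D : Set M} (hD : IsClosed D) (hDi : Inv Q D) {F : M → ℝ} (hF : ContinuousOn F D)
    (hFi : ∀ (g : Q), ∀ z ∈ D, F (g • z) = F z) {m : ℕ}
    (h0 : ∀ c ∈ F '' D, Van Q k m (D ∩ F ⁻¹' {c})) (hconn : m = 0 → (F '' D).OrdConnected)
    (h1 : ∀ c ∈ F '' D, Van Q k (m + 1) (D ∩ F ⁻¹' {c})) : Van Q k (m + 1) D := by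
  rcases D.eq_empty_or_nonempty with rfl | hne
  · exact Van_empty (by simp)
  have hK : IsCompact (F '' D) := hD.isCompact.image_of_continuousOn hF
  obtain ⟨lo, hlo, hlo'⟩ := hK.exists_isLeast (hne.image F)
  obtain ⟨hi, hhi, hhi'⟩ := hK.exists_isGreatest (hne.image F)
  have h0 : ∀ c ∈ Icc lo hi, Van Q k m (D ∩ F ⁻¹' {c}) := by
    intro c hcI
    by_cases hc : c ∈ F '' D
    · exact h0 c hc
    · have : D ∩ F ⁻¹' {c} = ∅ := by
        ext z; constructor
        · rintro ⟨hz, rfl⟩; exact (hc ⟨z, hz, rfl⟩).elim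
        · simp
      rw [this]
      exact Van_empty fun hm => hc ((hconn hm).out hlo hhi hcI)
  intro φ hφ hd
  let T : ℝ → ℝ → Set M := fun a b => D ∩ F ⁻¹' Icc a b
  have hT : ∀ a b, IsClosed (T a b) := fun a b => hF.preimage_isClosed_of_isClosed hD isClosed_Icc
  have hTi : ∀ a b, Inv Q (T a b) := fun a b g z hz => ⟨hDi g z hz.1, by
    have := hz.2
    simp only [mem_preimage] at this ⊢
    rwa [hFi g z hz.1]⟩
  -- a primitive on `T lo hi` is obtained by continuous induction on the right end of the slab
  let G : ℝ → ℝ → Prop := fun a b => ∃ ψ ∈ KK Q k, φ - d ψ ∈ I k (m + 1) (T a b)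
  have Gmono : ∀ {a b a' b'}, a ≤ a' → b' ≤ b → G a b → G a' b' := by
    rintro a b a' b' ha hb ⟨ψ, hψ, h⟩
    exact ⟨ψ, hψ, I_anti (inter_subset_inter_right _ (preimage_mono (Icc_subset_Icc ha hb))) h⟩
  have Gglue : ∀ {a b c}, a ≤ b → b ≤ c → b ∈ Icc lo hi → G a b → G b c → G a c := by
    rintro a b c hab hbc hbI ⟨ψ, hψ, h⟩ ⟨ψ', hψ', h'⟩
    have hI : Van Q k m (T a b ∩ T b c) := by
      convert h0 b hbI using 1
      ext z
      simp only [T, mem_inter_iff, mem_preimage, mem_Icc, mem_singleton_iff]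
      constructor
      · rintro ⟨⟨h1, h2, h3⟩, -, h4, h5⟩; exact ⟨h1, le_antisymm h3 h4⟩
      · rintro ⟨h1, h2⟩; rw [h2]; exact ⟨⟨h1, hab, le_rfl⟩, h1, le_rfl, hbc⟩
    obtain ⟨ψ'', hψ'', h''⟩ := mv (hT _ _) (hTi _ _) (hT _ _) (hTi _ _) hI hψ hψ' h h'
    refine ⟨ψ'', hψ'', I_anti ?_ h''⟩
    rintro z ⟨hz, hz1, hz2⟩
    rcases le_total (F z) b with hb | hb
    · exact Or.inl ⟨hz, hz1, hb⟩
    · exact Or.inr ⟨hz, hb, hz2⟩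
  have Gloc : ∀ c, ∃ ε > 0, G (c - ε) (c + ε) := by
    intro c
    by_cases hc : c ∈ F '' D
    · obtain ⟨ψ, hψ, h⟩ := h1 c hc φ hφ (I_anti inter_subset_left hd)
      obtain ⟨O, hO, hsub, hOI⟩ := exists_open_I h
      have hK : IsCompact (F '' (D \ O)) :=
        (hD.inter hO.isClosed_compl).isCompact.image_of_continuousOn (hF.mono inter_subset_left)
      have hcK : c ∉ F '' (D \ O) := by
        rintro ⟨z, hz, rfl⟩; exact hz.2 (hsub ⟨hz.1, rfl⟩)
      obtain ⟨ε, hε, hball⟩ := Metric.nhds_basis_closedBall.mem_iff.1 (hK.isClosed.isOpen_compl.mem_nhds hcK)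
      refine ⟨ε, hε, ψ, hψ, I_anti ?_ hOI⟩
      rintro z ⟨hz, hz'⟩
      by_contra hzO
      refine hball ?_ ⟨z, ⟨hz, hzO⟩, rfl⟩
      rw [Real.closedBall_eq_Icc]; exact hz'
    · have hK : IsCompact (F '' D) := hD.isCompact.image_of_continuousOn hF
      obtain ⟨ε, hε, hball⟩ := Metric.nhds_basis_closedBall.mem_iff.1 (hK.isClosed.isOpen_compl.mem_nhds hc)
      refine ⟨ε, hε, 0, zero_mem _, I_anti ?_ (mem_I_empty (by simp) _)⟩
      rintro z ⟨hz, hz'⟩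
      refine absurd (⟨z, hz, rfl⟩ : F z ∈ F '' D) (hball ?_)
      rw [Real.closedBall_eq_Icc]; exact hz'
  have hfin : G lo hi := by
    refine IsClosed.mem_of_ge_of_forall_exists_gt (s := {x | G lo x}) (a := lo) (b := hi) ?_ ?_ (hlo' hhi) ?_
    · refine isClosed_of_closure_subset fun x hx => ?_
      have hxI : x ∈ Icc lo hi := closure_minimal inter_subset_right isClosed_Icc hx
      refine ⟨?_, hxI⟩
      obtain ⟨ε, hε, h⟩ := Gloc x
      obtain ⟨y, ⟨hy, hyI⟩, hyx⟩ := Metric.mem_closure_iff.1 hx ε hε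
      rw [Real.dist_eq, abs_lt] at hyx
      rcases le_total x y with hxy | hxy
      · exact Gmono le_rfl hxy hy
      · exact Gglue hyI.1 hxy hyI hy (Gmono (by linarith) (by linarith) h)
    · obtain ⟨ε, hε, h⟩ := Gloc lo
      exact Gmono (by linarith) (by linarith) h
    · rintro x ⟨hx, hx1, hx2⟩
      obtain ⟨ε, hε, h⟩ := Gloc x
      have hlt : x < min hi (x + ε) := by simp [hx2, hε]
      exact ⟨min hi (x + ε), Gglue hx1 hlt.le ⟨hx1, hx2.le⟩ hx
        (Gmono (by linarith) (min_le_right _ _) h), hlt, min_le_left _ _⟩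
  obtain ⟨ψ, hψ, h⟩ := hfin
  exact ⟨ψ, hψ, I_anti (B := T lo hi) (fun z hz => ⟨hz, hlo' ⟨z, hz, rfl⟩, hhi' ⟨z, hz, rfl⟩⟩) h⟩

end

/-! ### Vanishing of equivariant cohomology above the dimension -/

section
variable {Q : Type*} [Group Q] [Fintype Q] {M : Type*} [MetricSpace M] [CompactSpace M] [MulAction Q M]
  [ContinuousConstSMul Q M] {k : Type*} [Field k]

/-- A single orbit has no cohomology in lengths at least two. -/
lemma Van_orbit {D : Set M} (hDi : Inv Q D) (hD1 : ∀ z ∈ D, ∀ w ∈ D, ∃ g : Q, w = g • z)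
    {m : ℕ} (hm : 2 ≤ m) : Van Q k m D := by
  intro φ hφ hd
  have hDfin : D.Finite := by
    rcases D.eq_empty_or_nonempty with rfl | ⟨y, hy⟩
    · exact finite_empty
    · refine (finite_range fun g : Q => g • y).subset fun w hw => ?_
      obtain ⟨g, rfl⟩ := hD1 y hy w hw
      exact ⟨g, rfl⟩
  obtain ⟨r, hr, hr1, hr2, hr3⟩ := exists_selection hDfin.isClosed hDi
  obtain ⟨h1, h2⟩ := mem_KK.1 hφ
  let ψ : List M → k := fun t => match t with
    | [] => 0
    | z :: s => φ (r z :: z :: s)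
  refine ⟨ψ, mem_KK.2 ⟨fun g t => ?_, fun t ht => ?_⟩, mem_I.2 ⟨fun h => by omega, fun y hy => ?_⟩⟩
  · cases t with
    | nil => rfl
    | cons z s =>
      simp only [ψ, List.map_cons, hr]
      exact h1 g (r z :: z :: s)
  · cases t with
    | nil => rfl
    | cons z s =>
      obtain ⟨g, hg, ht⟩ := ht
      refine h2 _ ⟨g, hg, fun w hw => ?_⟩
      rcases List.mem_cons.1 hw with rfl | hw
      · rw [← hr, ht z (by simp)]
      · exact ht w hw
  · obtain ⟨U, hU, h⟩ := (mem_I.1 hd).2 y hy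
    have hry : ∀ᶠ z in 𝓝 y, r z = y := by
      have hc : (D \ {y})ᶜ ∈ 𝓝 y := (hDfin.subset sdiff_subset).isClosed.isOpen_compl.mem_nhds (by simp)
      filter_upwards [hr3 y hy, hr2 y hy hc] with z hz hz'
      by_contra hne
      exact hz' ⟨hz, hne⟩
    refine ⟨U ∩ {z | r z = y}, inter_mem hU hry, fun t ht hz => ?_⟩
    have e : d ψ t = d (sh y φ) t := by
      refine d_congr' (P := fun z => r z = y) t (fun z hz' => (hz z hz').2) fun s hs hs' => ?_
      cases s with
      | nil => simp at hs; omega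
      | cons w s => simp [ψ, hs' w (by simp)]
    have := h (y :: t) (by simp [ht]) (by
      intro z hz'
      rcases List.mem_cons.1 hz' with rfl | hz'
      · exact mem_of_mem_nhds hU
      · exact (hz z hz').1)
    rw [Pi.sub_apply, e, ← this, d_cons]

/-- Cohomological dimension of a free piece with `n` invariant coordinates separating orbits. -/
lemma Van_cd (n : ℕ) : ∀ {D : Set M}, IsClosed D → Inv Q D → ∀ (F : Fin n → M → ℝ),
    (∀ i, ContinuousOn (F i) D) → (∀ i (g : Q), ∀ z ∈ D, F i (g • z) = F i z) →
    (∀ z ∈ D, ∀ w ∈ D, (∀ i, F i z = F i w) → ∃ g : Q, w = g • z) →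
    ∀ m, n + 2 ≤ m → Van Q k m D := by
  induction n with
  | zero =>
    intro D hD hDi F _ _ h m hm
    exact Van_orbit hDi (fun z hz w hw => h z hz w hw fun i => i.elim0) hm
  | succ n ih =>
    intro D hD hDi F hF hFi h m hm
    obtain ⟨m, rfl⟩ : ∃ m', m = m' + 1 := ⟨m - 1, by omega⟩
    have key : ∀ c, ∀ m', n + 2 ≤ m' → Van Q k m' (D ∩ F 0 ⁻¹' {c}) := by
      intro c
      refine ih ((hF 0).preimage_isClosed_of_isClosed hD isClosed_singleton) ?_ (fun i => F i.succ)
        (fun i => (hF _).mono inter_subset_left) (fun i g z hz => hFi _ g z hz.1) ?_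
      · intro g z hz
        refine ⟨hDi g z hz.1, ?_⟩
        have := hz.2
        simp only [mem_preimage, mem_singleton_iff] at this ⊢
        rw [hFi 0 g z hz.1, this]
      · intro z hz w hw hzw
        refine h z hz.1 w hw.1 fun i => ?_
        refine Fin.cases ?_ hzw i
        exact hz.2.trans hw.2.symm
    exact Van_slice hD hDi (hF 0) (hFi 0) (fun c _ => key c m (by omega)) (fun hm => by omega)
      fun c _ => key c (m + 1) (by omega)

/-- `M` admits, near every point, `n` continuous real functions separating points. -/
def LocCoord (M : Type*) [TopologicalSpace M] (n : ℕ) : Prop :=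
  ∀ y : M, ∃ N ∈ 𝓝 y, ∃ f : Fin n → M → ℝ, (∀ i, ContinuousOn (f i) N) ∧
    InjOn (fun z i => f i z) N

/-- A point with trivial isotropy has a closed invariant neighbourhood all of whose closed invariant subsets
have no equivariant cohomology above dimension `n`: the coordinate functions, made invariant, cut it into
single orbits. -/
lemma exists_piece {n : ℕ} (hM : LocCoord M n) {y : M} (hy : ∀ g : Q, g • y = y → g = 1) :
    ∃ D ∈ 𝓝 y, IsClosed D ∧ Inv Q D ∧
      ∀ C ⊆ D, IsClosed C → Inv Q C → ∀ m, n + 2 ≤ m → Van Q k m C := by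
  classical
  obtain ⟨N0, hN0, f, hf, hinj⟩ := hM y
  have h1 : ∀ g : Q, ∃ N ∈ 𝓝 y, g ≠ 1 → ∀ z ∈ N, g • z ∉ N := by
    intro g
    by_cases hg : g = 1
    · exact ⟨univ, univ_mem, fun h => (h hg).elim⟩
    obtain ⟨u, v, hu, hv, hgu, hyv, huv⟩ := t2_separation (fun h => hg (hy g h) : g • y ≠ y)
    refine ⟨(fun z => g • z) ⁻¹' u ∩ v, ((hu.preimage (continuous_const_smul g)).inter hv).mem_nhds ⟨hgu, hyv⟩, ?_⟩
    intro _ z hz hz'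
    exact huv.le_bot ⟨hz.1, hz'.2⟩
  choose N1 hN1 hN1' using h1
  obtain ⟨N, hN, hNc, hNsub⟩ := exists_mem_nhds_isClosed_subset
    (inter_mem hN0 (iInter_mem.2 hN1))
  have hdisj : ∀ g : Q, ∀ z ∈ N, g • z ∈ N → g = 1 := by
    intro g z hz hz'
    by_contra hg
    exact hN1' g hg z (mem_iInter.1 (hNsub hz).2 g) (mem_iInter.1 (hNsub hz').2 g)
  let P : Q → Set M := fun g => {z | g⁻¹ • z ∈ N}
  have hP : ∀ g, IsClosed (P g) := fun g => hNc.preimage (continuous_const_smul g⁻¹)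
  let D : Set M := ⋃ g, P g
  have hDc : IsClosed D := isClosed_iUnion_of_finite hP
  have hDi : Inv Q D := by
    intro g z hz
    obtain ⟨a, ha⟩ := mem_iUnion.1 hz
    refine mem_iUnion.2 ⟨g * a, ?_⟩
    simpa [P, mul_smul] using ha
  have huniq : ∀ g a : Q, ∀ z, z ∈ P g → z ∈ P a → g = a := by
    intro g a z hz hz'
    have := hdisj (a⁻¹ * g) (g⁻¹ • z) hz (by rw [mul_smul, smul_inv_smul]; exact hz')
    exact (inv_mul_eq_one.1 this).symm
  let F : Fin n → M → ℝ := fun i z => if h : ∃ g : Q, z ∈ P g then f i (h.choose⁻¹ • z) else 0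
  have hFeq : ∀ i (g : Q) z, z ∈ P g → F i z = f i (g⁻¹ • z) := by
    intro i g z hz
    have h : ∃ g : Q, z ∈ P g := ⟨g, hz⟩
    simp only [F, dif_pos h]
    rw [huniq _ _ z h.choose_spec hz]
  have hFc : ∀ i, ContinuousOn (F i) D := by
    intro i
    refine (locallyFinite_of_finite P).continuousOn_iUnion hP fun g => ?_
    refine ContinuousOn.congr ?_ (fun z hz => hFeq i g z hz)
    exact (hf i).comp (continuous_const_smul g⁻¹).continuousOn fun z hz => (hNsub hz).1
  have hFi : ∀ i (g : Q), ∀ z ∈ D, F i (g • z) = F i z := by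
    intro i g z hz
    obtain ⟨a, ha⟩ := mem_iUnion.1 hz
    rw [hFeq i a z ha, hFeq i (g * a) (g • z) (by simpa [P, mul_smul] using ha)]
    simp [mul_smul]
  refine ⟨D, mem_of_superset hN fun z hz => mem_iUnion.2 ⟨1, by simpa [P] using hz⟩, hDc, hDi, ?_⟩
  intro C hCD hC hCi
  refine Van_cd n hC hCi F (fun i => (hFc i).mono hCD) (fun i g z hz => hFi i g z (hCD hz)) ?_
  intro z hz w hw hzw
  obtain ⟨a, ha⟩ := mem_iUnion.1 (hCD hz)
  obtain ⟨b, hb⟩ := mem_iUnion.1 (hCD hw)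
  have : a⁻¹ • z = b⁻¹ • w := by
    refine hinj (hNsub ha).1 (hNsub hb).1 (funext fun i => ?_)
    change f i _ = f i _
    rw [← hFeq i a z ha, ← hFeq i b w hb, hzw]
  exact ⟨b * a⁻¹, by rw [mul_smul, this, smul_inv_smul]⟩

/-- Equivariant cohomology vanishes above the dimension along a closed invariant set on which the action
is free. -/
lemma Van_free {n : ℕ} (hM : LocCoord M n) {A : Set M} (hA : IsClosed A) (hAi : Inv Q A)
    (hfree : ∀ y ∈ A, ∀ g : Q, g • y = y → g = 1) {m : ℕ} (hm : n + 3 ≤ m) : Van Q k m A := by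
  classical
  choose! D hD hDc hDi hDV using fun y (hy : y ∈ A) => exists_piece (k := k) hM (hfree y hy)
  obtain ⟨s, hs, hcov⟩ := hA.isCompact.elim_nhds_subcover D hD
  have key : ∀ s : Finset M, (∀ y ∈ s, y ∈ A) → ∀ C ⊆ ⋃ y ∈ s, D y, IsClosed C → Inv Q C →
      Van Q k m C := by
    intro s
    induction s using Finset.induction_on with
    | empty =>
      intro _ C hC _ _
      have : C = ∅ := by simpa using hC
      rw [this]; exact Van_empty (by omega)
    | insert a s ha ih =>
      intro hsA C hC hCc hCi
      have haA := hsA a (by simp)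
      have hC' : C = (C ∩ ⋃ y ∈ s, D y) ∪ (C ∩ D a) := by
        rw [← inter_union_distrib_left, eq_comm, inter_eq_left]
        simpa [union_comm] using hC
      have hUc : IsClosed (⋃ y ∈ s, D y) :=
        isClosed_biUnion_finset fun y hy => hDc y (hsA y (by simp [hy]))
      have hUi : Inv Q (⋃ y ∈ s, D y) := by
        intro g z hz
        simp only [mem_iUnion] at hz ⊢
        obtain ⟨y, hy, hz⟩ := hz
        exact ⟨y, hy, hDi y (hsA y (by simp [hy])) g z hz⟩
      obtain ⟨m', rfl⟩ : ∃ m', m = m' + 1 := ⟨m - 1, by omega⟩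
      rw [hC']
      refine Van_union (hCc.inter hUc) (hCi.inter hUi) (hCc.inter (hDc a haA)) (hCi.inter (hDi a haA)) ?_ ?_ ?_
      · exact hDV a haA _ (fun z hz => hz.2.2) ((hCc.inter hUc).inter (hCc.inter (hDc a haA)))
          ((hCi.inter hUi).inter (hCi.inter (hDi a haA))) _ (by omega)
      · exact ih (fun y hy => hsA y (by simp [hy])) _ inter_subset_right (hCc.inter hUc) (hCi.inter hUi)
      · exact hDV a haA _ inter_subset_right (hCc.inter (hDc a haA)) (hCi.inter (hDi a haA)) _ (by omega)
  exact key s (fun y hy => hs y hy) A hcov hA hAi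

/-- Vanishing of the equivariant cohomology of all closed invariant sets in large lengths. -/
lemma Van_large {n : ℕ} (hM : LocCoord M n) {A : Set M} (hA : IsClosed A) (hAi : Inv Q A)
    {m : ℕ} (hm : n + 4 ≤ m) : Van Q k m A := by
  classical
  intro φ hφ hd
  let st : M → Finset Q := fun z => Finset.univ.filter fun g => g • z = z
  let Y : ℕ → Set M := fun i => {z | i ≤ (st z).card}
  have hst : ∀ y, ∀ᶠ z in 𝓝 y, st z ⊆ st y := by
    intro y
    filter_upwards [stab_near (Q := Q) y] with z hz g hg
    simp only [st, Finset.mem_filter, Finset.mem_univ, true_and] at hg ⊢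
    exact hz g hg
  have hYc : ∀ i, IsClosed (Y i) := by
    intro i
    rw [← isOpen_compl_iff, isOpen_iff_mem_nhds]
    intro y hy
    filter_upwards [hst y] with z hz hz'
    exact hy (le_trans hz' (Finset.card_le_card hz))
  have hYi : ∀ i, Inv Q (Y i) := by
    intro i g z hz
    refine le_trans hz (Finset.card_le_card_of_injOn (fun a => g * a * g⁻¹) ?_ ?_)
    · intro a ha
      simp only [st, Finset.coe_filter, Finset.mem_univ, true_and, mem_ofPred_eq] at ha ⊢
      simp [mul_smul, ha]
    · intro a _ b _ h
      simpa using h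
  have claim : ∀ j i : ℕ, 2 ≤ i → i + j = Fintype.card Q + 1 →
      ∃ ψ ∈ KK Q k, φ - d ψ ∈ I k m (A ∩ Y i) := by
    intro j
    induction j with
    | zero =>
      intro i _ hi
      refine ⟨0, zero_mem _, I_anti ?_ (mem_I_empty (by omega) _)⟩
      rintro z ⟨-, hz⟩
      have h1 : (st z).card ≤ Fintype.card Q := Finset.card_le_univ _
      have h2 : i ≤ (st z).card := hz
      omega
    | succ j ih =>
      intro i hi2 hi
      obtain ⟨ψ, hψ, hψI⟩ := ih (i + 1) (by omega) (by omega)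
      set φ1 := φ - d ψ with hφ1
      have hφ1K : φ1 ∈ KK Q k := sub_mem hφ (d_mem_KK hψ)
      have hφ1d : d φ1 ∈ I k (m + 1) A := by rw [hφ1, map_sub, d_d, sub_zero]; exact hd
      obtain ⟨r, hr, hr1, hr2, hr3⟩ := exists_selection (hA.inter (hYc i)) (hAi.inter (hYi i))
      refine ⟨ψ - prism r φ1, sub_mem hψ (prism_mem_KK hφ1K hr), ?_⟩
      have e : φ - d (ψ - prism r φ1) = (fun t => φ1 (t.map r)) - prism r (d φ1) := by
        ext t
        have := prism_id r φ1 t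
        have e2 : φ1 t = φ t - d ψ t := rfl
        simp only [map_sub, Pi.sub_apply]
        linear_combination this - e2
      rw [e]
      have hφ1S := (mem_KK.1 hφ1K).2
      refine sub_mem (mem_I.2 ⟨fun h => by omega, fun y hy => ?_⟩) (mem_I.2 ⟨fun h => by omega, fun y hy => ?_⟩)
      · by_cases hy1 : y ∈ Y (i + 1)
        · obtain ⟨U, hU, h⟩ := (mem_I.1 hψI).2 y ⟨hy.1, hy1⟩
          refine ⟨r ⁻¹' U, hr2 y hy hU, fun t ht hz => h _ (by simpa using ht) ?_⟩
          intro z hz'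
          obtain ⟨w, hw, rfl⟩ := List.mem_map.1 hz'
          exact hz w hw
        · refine ⟨{z | r z ∈ A ∩ Y i ∧ st (r z) ⊆ st y}, inter_mem (hr3 y hy) (hr2 y hy (hst y)), ?_⟩
          intro t ht hz
          have hcard : (st y).card = i := le_antisymm (by
            have : ¬ (i + 1 ≤ (st y).card) := hy1
            omega) hy.2
          obtain ⟨g, hg, hg1⟩ := Finset.exists_mem_ne (s := st y) (by omega) 1
          refine hφ1S _ ⟨g, hg1, fun z hz' => ?_⟩
          obtain ⟨w, hw, rfl⟩ := List.mem_map.1 hz'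
          obtain ⟨h1, h2⟩ := hz w hw
          have h3 : st (r w) = st y := Finset.eq_of_subset_of_card_le h2 (by rw [hcard]; exact h1.2)
          rw [← h3] at hg
          simpa [st] using hg
      · obtain ⟨U, hU, h⟩ := (mem_I.1 hφ1d).2 y hy.1
        refine ⟨U ∩ r ⁻¹' U, inter_mem hU (hr2 y hy hU), fun t ht hz => ?_⟩
        exact prism_eq_zero (P := (· ∈ U)) t (fun z hz' => ⟨(hz z hz').1, (hz z hz').2⟩)
          fun s hs hs' => h s (by omega) hs'
  obtain ⟨ψ, hψ, hψI⟩ := claim (Fintype.card Q - 1) 2 le_rfl (by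
    have := Fintype.card_pos (α := Q); omega)
  obtain ⟨O, hO, hsub, hOI⟩ := exists_open_I hψI
  have hO1 : IsOpen (⋂ g : Q, (fun z : M => g • z) ⁻¹' O) :=
    isOpen_iInter_of_finite fun g => hO.preimage (continuous_const_smul g)
  have hZsub : A ∩ Y 2 ⊆ ⋂ g : Q, (fun z : M => g • z) ⁻¹' O := fun z hz =>
    mem_iInter.2 fun g => hsub ((hAi.inter (hYi 2)) g z hz)
  obtain ⟨W0, hW0, hW0Z, hW0O⟩ := normal_exists_closure_subset (hA.inter (hYc 2)) hO1 hZsub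
  let W : Set M := ⋃ g : Q, (fun z : M => g • z) ⁻¹' W0
  let B : Set M := ⋃ g : Q, (fun z : M => g • z) ⁻¹' closure W0
  have hW : IsOpen W := isOpen_iUnion fun g => hW0.preimage (continuous_const_smul g)
  have hB : IsClosed B := isClosed_iUnion_of_finite fun g => isClosed_closure.preimage (continuous_const_smul g)
  have hinv : ∀ S : Set M, Inv Q (⋃ g : Q, (fun z : M => g • z) ⁻¹' S) := by
    intro S g z hz
    obtain ⟨a, ha⟩ := mem_iUnion.1 hz
    exact mem_iUnion.2 ⟨a * g⁻¹, by simpa [mul_smul] using ha⟩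
  have hWB : W ⊆ B := iUnion_mono fun g => preimage_mono subset_closure
  have hBO : B ⊆ O := by
    intro z hz
    obtain ⟨a, ha⟩ := mem_iUnion.1 hz
    have := mem_iInter.1 (hW0O ha) a⁻¹
    simpa using this
  have hZW : A ∩ Y 2 ⊆ W := fun z hz => mem_iUnion.2 ⟨1, by simpa using hW0Z hz⟩
  have hA'c : IsClosed (A ∩ Wᶜ) := hA.inter hW.isClosed_compl
  have hA'i : Inv Q (A ∩ Wᶜ) := hAi.inter (hinv _).compl
  have hfree : ∀ y ∈ A ∩ Wᶜ, ∀ g : Q, g • y = y → g = 1 := by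
    intro y hy g hg
    by_contra hg1
    refine hy.2 (hZW ⟨hy.1, ?_⟩)
    have : ({1, g} : Finset Q) ⊆ st y := by
      intro a ha
      simp only [Finset.mem_insert, Finset.mem_singleton] at ha
      rcases ha with rfl | rfl <;> simp [st, hg]
    have h2 := Finset.card_le_card this
    rwa [Finset.card_pair (Ne.symm hg1)] at h2
  obtain ⟨m, rfl⟩ : ∃ m', m = m' + 1 := ⟨m - 1, by omega⟩
  have hφ2 : φ - d ψ ∈ KK Q k := sub_mem hφ (d_mem_KK hψ)
  obtain ⟨ψA, hψA, hψA'⟩ := Van_free (m := m + 1) hM hA'c hA'i hfree (by omega) (φ - d ψ) hφ2 (by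
    rw [map_sub, d_d, sub_zero]; exact I_anti inter_subset_left hd)
  obtain ⟨χ, hχ, hχ'⟩ := mv (φ := φ - d ψ) (ψB := 0) hA'c hA'i hB (hinv _)
    (Van_free (m := m) hM (hA'c.inter hB) (hA'i.inter (hinv _)) (fun y hy => hfree y hy.1) (by omega))
    hψA (zero_mem _) hψA' (by simpa using I_anti hBO hOI)
  refine ⟨ψ + χ, add_mem hψ hχ, ?_⟩
  rw [map_add, ← sub_sub]
  refine I_anti ?_ hχ'
  intro z hz
  by_cases hzW : z ∈ W
  · exact Or.inr (hWB hzW)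
  · exact Or.inl ⟨hz, hzW⟩

/-- Version of `Van_large` for cochains restricted to lists in a closed invariant set `X`. -/
lemma Van_large_sub {n : ℕ} (hM : LocCoord M n) {X A : Set M} (hX : IsClosed X) (hXi : Inv Q X)
    (hA : IsClosed A) (hAi : Inv Q A) {m : ℕ} (hm : n + 4 ≤ m) {φ : List M → k} (hφ : φ ∈ KK Q k)
    (hd : cut {t | ∀ z ∈ t, z ∈ X} (d φ) ∈ I k (m + 1) A) :
    ∃ ψ ∈ KK Q k, cut {t | ∀ z ∈ t, z ∈ X} (φ - d ψ) ∈ I k m A := by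
  obtain ⟨r, hr, hr1, hr2, hr3⟩ := exists_selection hX hXi
  obtain ⟨h1, h2⟩ := mem_KK.1 hφ
  have hK : (fun t => φ (t.map r)) ∈ KK Q k := by
    refine mem_KK.2 ⟨fun g t => ?_, fun t ht => ?_⟩
    · rw [← h1 g (t.map r)]
      simp [Function.comp_def, hr]
    · obtain ⟨g, hg, ht⟩ := ht
      refine h2 _ ⟨g, hg, fun z hz => ?_⟩
      obtain ⟨w, hw, rfl⟩ := List.mem_map.1 hz
      rw [← hr, ht w hw]
  obtain ⟨ψ, hψ, hψI⟩ := Van_large hM (hA.inter hX) (hAi.inter hXi) hm _ hK (by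
    refine mem_I.2 ⟨fun h => by omega, fun y hy => ?_⟩
    obtain ⟨U, hU, h⟩ := (mem_I.1 hd).2 y hy.1
    refine ⟨r ⁻¹' U ∩ {z | r z ∈ X}, inter_mem (hr2 y hy.2 hU) (hr3 y hy.2), fun t ht hz => ?_⟩
    have := h (t.map r) (by simpa using ht) (by
      intro z hz'
      obtain ⟨w, hw, rfl⟩ := List.mem_map.1 hz'
      exact (hz w hw).1)
    rw [cut_apply, if_pos] at this
    · rw [d_map, this]
    · intro z hz'
      obtain ⟨w, hw, rfl⟩ := List.mem_map.1 hz'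
      exact (hz w hw).2)
  refine ⟨ψ, hψ, mem_I.2 ⟨fun h => by omega, fun y hy => ?_⟩⟩
  by_cases hyX : y ∈ X
  · obtain ⟨U, hU, h⟩ := (mem_I.1 hψI).2 y ⟨hy, hyX⟩
    refine ⟨U, hU, fun t ht hz => ?_⟩
    rw [cut_apply]
    split_ifs with htX
    · have := h t ht hz
      have e : t.map r = t := by
        conv_rhs => rw [← List.map_id t]
        exact List.map_congr_left fun z hz' => hr1 z (htX z hz')
      simpa [e] using this
    · rfl
  · refine ⟨Xᶜ, hX.isOpen_compl.mem_nhds hyX, fun t ht hz => ?_⟩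
    rw [cut_apply, if_neg]
    intro htX
    cases t with
    | nil => simp at ht; omega
    | cons w s => exact hz w (by simp) (htX w (by simp))

end

/-! ### Reduced and compactly supported cohomology -/

/-- The trivial action of the trivial group. -/
@[reducible] def trivAct (M : Type*) : MulAction Unit M where
  smul _ z := z
  one_smul _ := rfl
  mul_smul _ _ _ := rfl

section
variable {M : Type*} [MetricSpace M] [CompactSpace M] {k : Type*} [Field k]

variable (k) in
/-- Vanishing of (reduced) cohomology of germs along `A` in length `m`. -/
def V1 (m : ℕ) (A : Set M) : Prop :=
  ∀ φ : List M → k, d φ ∈ I k (m + 1) A → ∃ ψ, φ - d ψ ∈ I k m A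

lemma KK_triv : letI := trivAct M; ∀ φ : List M → k, φ ∈ KK Unit k := by
  intro φ
  refine mem_KK.2 ⟨fun g t => ?_, ?_⟩
  · have : (fun z : M => g • z) = id := rfl
    rw [this, List.map_id]
  · rintro t ⟨g, hg, -⟩
    exact (hg rfl).elim

lemma split1 {A B : Set M} (hA : IsClosed A) (hB : IsClosed B) {m : ℕ}
    {κ : List M → k} (hκI : κ ∈ I k m (A ∩ B)) : ∃ α, α ∈ I k m A ∧ κ - α ∈ I k m B := by
  letI := trivAct M
  haveI : ContinuousConstSMul Unit M := ⟨fun _ => continuous_id⟩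
  obtain ⟨α, -, h⟩ := split (Q := Unit) hA (fun _ _ h => h) hB (fun _ _ h => h) (KK_triv κ) hκI
  exact ⟨α, h⟩

lemma mv1 {A B : Set M} (hA : IsClosed A) (hB : IsClosed B) {m : ℕ} {φ ψA ψB χ : List M → k}
    (h1 : φ - d ψA ∈ I k (m + 1) A) (h2 : φ - d ψB ∈ I k (m + 1) B)
    (h : ψA - ψB - d χ ∈ I k m (A ∩ B)) : ∃ ψ, φ - d ψ ∈ I k (m + 1) (A ∪ B) := by
  obtain ⟨α, hαA, hαB⟩ := split1 hA hB h
  refine ⟨ψA - α - d χ, mem_I_union ?_ ?_⟩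
  · have := add_mem h1 (d_mem_I hαA)
    rw [map_sub, map_sub, d_d, sub_zero]
    convert this using 1; abel
  · have := sub_mem h2 (d_mem_I hαB)
    rw [map_sub, map_sub, d_d, sub_zero]
    rw [map_sub, map_sub, map_sub, d_d, sub_zero] at this
    convert this using 1; abel

lemma V1_union_zero {A B : Set M} (h : V1 k 0 A) : V1 k 0 (A ∪ B) := by
  intro φ hφ
  obtain ⟨ψ, hψ⟩ := h φ (I_anti subset_union_left hφ)
  exact ⟨ψ, mem_I_zero.2 (mem_I_zero.1 hψ)⟩

lemma V1_union {A B : Set M} (hA : IsClosed A) (hB : IsClosed B) {m : ℕ}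
    (hV : V1 k m (A ∩ B)) (h1 : V1 k (m + 1) A) (h2 : V1 k (m + 1) B) : V1 k (m + 1) (A ∪ B) := by
  intro φ hd
  obtain ⟨ψA, h1⟩ := h1 φ (I_anti subset_union_left hd)
  obtain ⟨ψB, h2⟩ := h2 φ (I_anti subset_union_right hd)
  have hd : d (ψA - ψB) ∈ I k (m + 1) (A ∩ B) := by
    have := sub_mem (I_anti (inter_subset_right (s := A) (t := B)) h2) (I_anti (inter_subset_left (s := A) (t := B)) h1)
    rwa [sub_sub_sub_cancel_left, ← map_sub] at this
  obtain ⟨χ, h⟩ := hV _ hd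
  exact mv1 hA hB h1 h2 h

lemma V1_slice {D : Set M} (hD : IsClosed D) {F : M → ℝ} (hF : ContinuousOn F D) {m : ℕ}
    (h0 : ∀ c ∈ F '' D, V1 k m (D ∩ F ⁻¹' {c})) (hconn : (F '' D).OrdConnected)
    (h1 : ∀ c ∈ F '' D, V1 k (m + 1) (D ∩ F ⁻¹' {c})) : V1 k (m + 1) D := by
  letI := trivAct M
  haveI : ContinuousConstSMul Unit M := ⟨fun _ => continuous_id⟩
  have e : ∀ (m : ℕ) (A : Set M), Van Unit k m A ↔ V1 k m A := by
    intro m A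
    constructor
    · intro h φ hφ
      obtain ⟨ψ, -, h⟩ := h φ (KK_triv φ) hφ
      exact ⟨ψ, h⟩
    · intro h φ _ hφ
      obtain ⟨ψ, h⟩ := h φ hφ
      exact ⟨ψ, KK_triv ψ, h⟩
  rw [← e]
  refine Van_slice hD (fun _ _ h => h) hF (fun _ _ _ => rfl) (fun c hc => (e _ _).2 (h0 c hc)) (fun _ => hconn)
    (fun c hc => (e _ _).2 (h1 c hc))

lemma V1_point (y : M) (m : ℕ) : V1 k m ({y} : Set M) := by
  intro φ hφ
  refine ⟨sh y φ, ?_⟩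
  have key : φ - d (sh y φ) = sh y (d φ) := (sh_d y φ).symm
  rw [key]
  obtain ⟨U, hU, h⟩ := (mem_I.1 hφ).2 y rfl
  refine mem_I.2 ⟨fun h0 => ?_, fun y' hy' => ⟨U, by rwa [mem_singleton_iff.1 hy'], fun t ht hz => ?_⟩⟩
  · exact h [y] (by simp [h0]) (by simpa using mem_of_mem_nhds hU)
  · refine h (y :: t) (by simp [ht]) fun z hz' => ?_
    rcases List.mem_cons.1 hz' with rfl | hz'
    · exact mem_of_mem_nhds hU
    · exact hz z hz'

variable (k) in
/-- `A` has the reduced cohomology of a sphere, concentrated in length `ℓ`. -/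
def Coh1 (ℓ : ℕ) (A : Set M) : Prop :=
  (∀ m, m ≠ ℓ → V1 k m A) ∧ ∃ ω : List M → k, d ω ∈ I k (ℓ + 1) A ∧
    (∀ φ : List M → k, d φ ∈ I k (ℓ + 1) A → ∃ (c : k) (ψ : List M → k), φ - c • ω - d ψ ∈ I k ℓ A) ∧
    ¬ ∃ ψ, ω - d ψ ∈ I k ℓ A

lemma Coh1_empty : Coh1 k 0 (∅ : Set M) := by
  refine ⟨fun m hm φ _ => ⟨0, mem_I_empty hm _⟩, fun _ => 1, mem_I_empty (by simp) _, fun φ _ => ?_, ?_⟩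
  · exact ⟨φ [], 0, mem_I_zero.2 (by simp)⟩
  · rintro ⟨ψ, h⟩
    simpa using mem_I_zero.1 h

lemma Coh1_union {A B : Set M} (hA : IsClosed A) (hB : IsClosed B) {ℓ : ℕ}
    (h1 : ∀ m, V1 k m A) (h2 : ∀ m, V1 k m B) (h : Coh1 k ℓ (A ∩ B)) : Coh1 k (ℓ + 1) (A ∪ B) := by
  obtain ⟨hz, ω, hω, hgen, hne⟩ := h
  have iA : ∀ {m}, I k m A ≤ I k m (A ∩ B) := fun {_} => I_anti inter_subset_left
  have iB : ∀ {m}, I k m B ≤ I k m (A ∩ B) := fun {_} => I_anti inter_subset_right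
  refine ⟨fun m hm => ?_, ?_⟩
  · cases m with
    | zero => exact V1_union_zero (h1 0)
    | succ m => exact V1_union hA hB (hz m (by omega)) (h1 _) (h2 _)
  obtain ⟨α, hαA, hαB⟩ := split1 hA hB hω
  have hdα : d α ∈ I k (ℓ + 1 + 1) B := by
    have := d_mem_I hαB
    rw [map_sub, d_d, zero_sub] at this
    simpa using this
  refine ⟨α, mem_I_union (d_mem_I hαA) hdα, fun φ hφ => ?_, ?_⟩
  · obtain ⟨ψA, hψA⟩ := h1 (ℓ + 1) φ (I_anti subset_union_left hφ)
    obtain ⟨ψB, hψB⟩ := h2 (ℓ + 1) φ (I_anti subset_union_right hφ)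
    obtain ⟨c, χ, hc⟩ := hgen (ψB - ψA) (by
      have := sub_mem (iA hψA) (iB hψB)
      rwa [sub_sub_sub_cancel_left, ← map_sub] at this)
    obtain ⟨ψ, hψ⟩ := mv1 (φ := φ - c • α) (ψA := ψA) (ψB := ψB - c • ω) (χ := -χ) hA hB
      (by
        have := sub_mem hψA ((I k (ℓ + 1) A).smul_mem c hαA)
        convert this using 1; abel)
      (by
        have := add_mem hψB ((I k (ℓ + 1) B).smul_mem c hαB)
        convert this using 1
        rw [map_sub, map_smul, smul_sub]; abel)
      (by
        have := neg_mem hc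
        convert this using 1
        rw [map_neg]; abel)
    exact ⟨c, ψ, hψ⟩
  · rintro ⟨ψ, hψ⟩
    have hψA := I_anti (subset_union_left (s := A) (t := B)) hψ
    have hψB := I_anti (subset_union_right (s := A) (t := B)) hψ
    obtain ⟨χA, hχA⟩ := h1 ℓ ψ (by
      have := sub_mem hαA hψA
      simpa using this)
    obtain ⟨χB, hχB⟩ := h2 ℓ (ω - ψ) (by
      have := add_mem hαB hψB
      convert this using 1
      rw [map_sub]; abel)
    refine hne ⟨χA + χB, ?_⟩
    have := add_mem (iA hχA) (iB hχB)
    convert this using 1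
    rw [map_add]; abel

variable (k) in
/-- The cohomology of the open set `V` with compact supports vanishes in length `m + 1`. Cochains with
support in `V` are those with zero germ along the complement of `V`. -/
def HcZero (m : ℕ) (V : Set M) : Prop :=
  ∀ φ : List M → k, φ ∈ I k (m + 1) Vᶜ → d φ ∈ I k (m + 2) univ →
    ∃ ψ ∈ I k m Vᶜ, φ - d ψ ∈ I k (m + 1) univ

variable (k) in
/-- The cohomology of `V` with compact supports is a line in length `m + 1`. -/
def HcOne (m : ℕ) (V : Set M) : Prop :=
  ∃ α : List M → k, α ∈ I k (m + 1) Vᶜ ∧ d α ∈ I k (m + 2) univ ∧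
    (∀ φ : List M → k, φ ∈ I k (m + 1) Vᶜ → d φ ∈ I k (m + 2) univ →
      ∃ c : k, ∃ ψ ∈ I k m Vᶜ, φ - c • α - d ψ ∈ I k (m + 1) univ) ∧
    ¬ ∃ ψ ∈ I k m Vᶜ, α - d ψ ∈ I k (m + 1) univ

variable (k) in
/-- Extension by zero from `V'` to `V` is onto in cohomology with compact supports in length `m + 1`. -/
def HcSurj (m : ℕ) (V' V : Set M) : Prop :=
  ∀ φ : List M → k, φ ∈ I k (m + 1) Vᶜ → d φ ∈ I k (m + 2) univ →
    ∃ φ' : List M → k, φ' ∈ I k (m + 1) V'ᶜ ∧ d φ' ∈ I k (m + 2) univ ∧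
      ∃ ψ ∈ I k m Vᶜ, φ - φ' - d ψ ∈ I k (m + 1) univ

lemma HcSurj.trans {m : ℕ} {V V' V'' : Set M} (hV : V' ⊆ V) (h : HcSurj k m V'' V') (h' : HcSurj k m V' V) :
    HcSurj k m V'' V := by
  intro φ hφ hd
  obtain ⟨φ', h1, h2, ψ, hψ, h3⟩ := h' φ hφ hd
  obtain ⟨φ'', h1', h2', ψ', hψ', h3'⟩ := h φ' h1 h2
  refine ⟨φ'', h1', h2', ψ + ψ', add_mem hψ (I_anti (compl_subset_compl.2 hV) hψ'), ?_⟩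
  have := add_mem h3 h3'
  convert this using 1
  rw [map_add]; abel

lemma mem_I_univ {m : ℕ} {K V : Set M} (hVK : V ⊆ K) {φ : List M → k} (h : φ ∈ I k m K) (h' : φ ∈ I k m Vᶜ) :
    φ ∈ I k m univ := by
  refine I_anti ?_ (mem_I_union h h')
  intro z _
  by_cases hz : z ∈ V
  · exact Or.inl (hVK hz)
  · exact Or.inr hz

lemma HcZero_of {K V : Set M} (hK : IsClosed K) (hV : IsOpen V) (hVK : V ⊆ K) {m : ℕ}
    (hK1 : V1 k (m + 1) K) (hb : V1 k m (K ∩ Vᶜ)) : HcZero k m V := by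
  intro φ hφ hd
  obtain ⟨ψ, hψ⟩ := hK1 φ (I_anti (subset_univ _) hd)
  obtain ⟨χ, hχ⟩ := hb ψ (by
    have := sub_mem (I_anti (inter_subset_right (s := K)) hφ) (I_anti (inter_subset_left (t := Vᶜ)) hψ)
    simpa using this)
  rw [inter_comm] at hχ
  obtain ⟨κ, hκ, hκ'⟩ := split1 hV.isClosed_compl hK hχ
  refine ⟨κ, hκ, mem_I_univ hVK ?_ (sub_mem hφ (d_mem_I hκ))⟩
  have := add_mem hψ (d_mem_I hκ')
  rw [map_sub, map_sub, d_d, sub_zero] at this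
  convert this using 1; abel

lemma HcOne_of {K V : Set M} (hK : IsClosed K) (hV : IsOpen V) (hVK : V ⊆ K) {m : ℕ}
    (hK1 : ∀ m, V1 k m K) (hb : Coh1 k m (K ∩ Vᶜ)) : HcOne k m V := by
  obtain ⟨-, ω, hω, hgen, hne⟩ := hb
  rw [inter_comm] at hω hgen hne
  have iK : ∀ {m}, I k m K ≤ I k m (Vᶜ ∩ K) := fun {_} => I_anti inter_subset_right
  have iV : ∀ {m}, I k m Vᶜ ≤ I k m (Vᶜ ∩ K) := fun {_} => I_anti inter_subset_left
  obtain ⟨α, hα, hα'⟩ := split1 hV.isClosed_compl hK hω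
  refine ⟨α, hα, mem_I_univ hVK ?_ (d_mem_I hα), fun φ hφ hd => ?_, ?_⟩
  · have := d_mem_I hα'
    rw [map_sub, d_d, zero_sub] at this
    simpa using this
  · obtain ⟨ψ, hψ⟩ := hK1 _ φ (I_anti (subset_univ _) hd)
    obtain ⟨c, χ, hχ⟩ := hgen ψ (by
      have := sub_mem (iV hφ) (iK hψ)
      simpa using this)
    obtain ⟨κ, hκ, hκ'⟩ := split1 hV.isClosed_compl hK hχ
    refine ⟨c, κ, hκ, mem_I_univ hVK ?_ (sub_mem (sub_mem hφ ((I k _ _).smul_mem c hα)) (d_mem_I hκ))⟩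
    have := add_mem (add_mem hψ (d_mem_I hκ')) ((I k _ _).smul_mem c hα')
    rw [map_sub, map_sub, map_sub, d_d, sub_zero, map_smul, smul_sub] at this
    convert this using 1; abel
  · rintro ⟨ψ, hψ, h⟩
    obtain ⟨χ, hχ⟩ := hK1 m (ω - ψ) (by
      have := add_mem hα' (I_anti (subset_univ _) h)
      convert this using 1
      rw [map_sub]; abel)
    refine hne ⟨χ, ?_⟩
    have := add_mem (iK hχ) (iV hψ)
    convert this using 1; abel

/-- Cutting off a closed piece `P` of `V` whose relative cohomology vanishes. -/
lemma HcSurj_of {P V V' : Set M} (hP : IsClosed P) (hV : IsOpen V) (hVV' : V ⊆ V' ∪ P) {m : ℕ}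
    (hP1 : V1 k (m + 1) P) (hb : V1 k m (P ∩ Vᶜ)) : HcSurj k m V' V := by
  intro φ hφ hd
  obtain ⟨ψ, hψ⟩ := hP1 φ (I_anti (subset_univ _) hd)
  obtain ⟨χ, hχ⟩ := hb ψ (by
    have := sub_mem (I_anti (inter_subset_right (s := P)) hφ) (I_anti (inter_subset_left (t := Vᶜ)) hψ)
    simpa using this)
  rw [inter_comm] at hχ
  obtain ⟨κ, hκ, hκ'⟩ := split1 hV.isClosed_compl hP hχ
  refine ⟨φ - d κ, I_anti ?_ (mem_I_union (A := P) (B := Vᶜ) ?_ (sub_mem hφ (d_mem_I hκ))), ?_, κ, hκ, ?_⟩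
  · intro z hz
    by_cases hzV : z ∈ V
    · exact Or.inl ((hVV' hzV).resolve_left hz)
    · exact Or.inr hzV
  · have := add_mem hψ (d_mem_I hκ')
    rw [map_sub, map_sub, d_d, sub_zero] at this
    convert this using 1; abel
  · rw [map_sub, d_d, sub_zero]; exact hd
  · simp

end

/-! ### Local cohomology of a manifold -/

section
variable {M : Type*} [MetricSpace M] [CompactSpace M] {k : Type*} [Field k] {n : ℕ}

/-- The part of the chart domain of `e` lying over `S`. -/
def Bx (e : OpenPartialHomeomorph M (Fin n → ℝ)) (S : Set (Fin n → ℝ)) : Set M := e.source ∩ e ⁻¹' S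

variable {e : OpenPartialHomeomorph M (Fin n → ℝ)}

lemma Bx_inter (S T : Set (Fin n → ℝ)) : Bx e (S ∩ T) = Bx e S ∩ Bx e T := by
  ext z; simp only [Bx, mem_inter_iff, mem_preimage]; tauto

lemma Bx_union (S T : Set (Fin n → ℝ)) : Bx e (S ∪ T) = Bx e S ∪ Bx e T := by
  ext z; simp only [Bx, mem_inter_iff, mem_union, mem_preimage]; tauto

lemma Bx_closed {a b : Fin n → ℝ} (h : Icc a b ⊆ e.target) {S : Set (Fin n → ℝ)} (hS : IsClosed S) :
    IsClosed (Bx e (Icc a b ∩ S)) := by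
  have hc : IsCompact (Icc a b ∩ S) := isCompact_Icc.inter_right hS
  have ht : Icc a b ∩ S ⊆ e.target := inter_subset_left.trans h
  have : Bx e (Icc a b ∩ S) = e.symm '' (Icc a b ∩ S) := by
    rw [e.symm_image_eq_source_inter_preimage ht]; rfl
  rw [this]
  exact (hc.image_of_continuousOn (e.continuousOn_symm.mono ht)).isClosed

lemma Bx_closed' {a b : Fin n → ℝ} (h : Icc a b ⊆ e.target) : IsClosed (Bx e (Icc a b)) := by
  have := Bx_closed h isClosed_univ
  rwa [inter_univ] at this

lemma V1_zero_of_nonempty {A : Set M} (h : A.Nonempty) : V1 k 0 A := by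
  obtain ⟨y, hy⟩ := h
  have := V1_union_zero (k := k) (B := A) (V1_point y 0)
  rwa [union_eq_self_of_subset_left (singleton_subset_iff.2 hy)] at this

lemma face {a b : Fin n → ℝ} {j : Fin n} {c : ℝ} (hc : c ∈ Icc (a j) (b j)) :
    Icc a b ∩ {y | y j = c} = Icc (Function.update a j c) (Function.update b j c) := by
  ext y
  simp only [mem_inter_iff, mem_Icc, Pi.le_def]
  constructor
  · rintro ⟨⟨h1, h2⟩, h3⟩
    have h3 : y j = c := h3
    constructor <;> intro i <;> rw [Function.update_apply] <;> split_ifs with hi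
    · subst hi; exact h3.ge
    · exact h1 i
    · subst hi; exact h3.le
    · exact h2 i
  · rintro ⟨h1, h2⟩
    have h3 : y j = c := le_antisymm (by simpa using h2 j) (by simpa using h1 j)
    refine ⟨⟨fun i => ?_, fun i => ?_⟩, h3⟩ <;> by_cases hi : i = j
    · subst hi; rw [h3]; exact hc.1
    · simpa [hi] using h1 i
    · subst hi; rw [h3]; exact hc.2
    · simpa [hi] using h2 i

lemma update_le {a b : Fin n → ℝ} (h : a ≤ b) (j : Fin n) (c : ℝ) :
    Function.update a j c ≤ Function.update b j c := by
  intro i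
  rw [Function.update_apply, Function.update_apply]
  split_ifs
  · exact le_rfl
  · exact h i

lemma face_subset {a b : Fin n → ℝ} {j : Fin n} {c : ℝ} (hc : c ∈ Icc (a j) (b j))
    (h : Icc a b ⊆ e.target) : Icc (Function.update a j c) (Function.update b j c) ⊆ e.target := by
  rw [← face hc]; exact inter_subset_left.trans h

lemma Bx_mem {S : Set (Fin n → ℝ)} (h : S ⊆ e.target) {y : Fin n → ℝ} (hy : y ∈ S) :
    e.symm y ∈ Bx e S :=
  ⟨e.map_target (h hy), by rw [mem_preimage, e.right_inv (h hy)]; exact hy⟩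

/-- Closed boxes in a chart are acyclic. -/
lemma box_acyclic (s : Finset (Fin n)) : ∀ {a b : Fin n → ℝ}, a ≤ b → Icc a b ⊆ e.target →
    (∀ i ∉ s, a i = b i) → ∀ m, V1 k m (Bx e (Icc a b)) := by
  induction s using Finset.induction_on with
  | empty =>
    intro a b hab ht h m
    have hab' : a = b := funext fun i => h i (by simp)
    subst hab'
    have : Bx e (Icc a a) = {e.symm a} := by
      rw [Icc_self] at *
      ext z
      constructor
      · rintro ⟨h1, h2⟩
        rw [← mem_singleton_iff.1 h2, e.left_inv h1]; rfl
      · rintro rfl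
        exact Bx_mem ht rfl
    rw [this]
    exact V1_point _ _
  | insert j s hj ih =>
    intro a b hab ht h m
    cases m with
    | zero => exact V1_zero_of_nonempty ⟨_, Bx_mem ht (left_mem_Icc.2 hab)⟩
    | succ m =>
      have him : (fun z => e z j) '' Bx e (Icc a b) = Icc (a j) (b j) := by
        ext c
        constructor
        · rintro ⟨z, ⟨-, hz⟩, rfl⟩
          exact ⟨hz.1 j, hz.2 j⟩
        · intro hc
          have hy : Function.update a j c ∈ Icc a b ∩ {y | y j = c} := by
            rw [face hc]; exact left_mem_Icc.2 (update_le hab j c)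
          refine ⟨_, Bx_mem ht hy.1, ?_⟩
          simp only
          rw [e.right_inv (ht hy.1)]
          exact hy.2
      have hsl : ∀ c ∈ (fun z => e z j) '' Bx e (Icc a b), ∀ m,
          V1 k m (Bx e (Icc a b) ∩ (fun z => e z j) ⁻¹' {c}) := by
        intro c hc m
        rw [him] at hc
        have : Bx e (Icc a b) ∩ (fun z => e z j) ⁻¹' {c} =
            Bx e (Icc (Function.update a j c) (Function.update b j c)) := by
          rw [← face hc, Bx_inter]
          ext z
          simp only [Bx, mem_inter_iff, mem_preimage, mem_singleton_iff, mem_ofPred_eq]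
          tauto
        rw [this]
        refine ih (update_le hab j c) (face_subset hc ht) ?_ m
        intro i hi
        by_cases hij : i = j
        · subst hij; simp
        · simp [hij, h i (by simp [hij, hi])]
      refine V1_slice (Bx_closed' ht) (F := fun z => e z j) ?_ (fun c hc => hsl c hc _)
        (by rw [him]; exact ordConnected_Icc) (fun c hc => hsl c hc _)
      exact (continuous_apply j).comp_continuousOn (e.continuousOn.mono inter_subset_left)

lemma box_acyclic' {a b : Fin n → ℝ} (hab : a ≤ b) (ht : Icc a b ⊆ e.target) (m : ℕ) :
    V1 k m (Bx e (Icc a b)) :=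
  box_acyclic Finset.univ hab ht (by simp) m

lemma closed_face (j : Fin n) (c : ℝ) : IsClosed {y : Fin n → ℝ | y j = c} :=
  isClosed_eq (continuous_apply j) continuous_const

lemma closed_faces (J : List (Fin n × ℝ)) : IsClosed {y : Fin n → ℝ | ∃ q ∈ J, y q.1 = q.2} := by
  induction J with
  | nil => simp
  | cons q J ih =>
    have : {y : Fin n → ℝ | ∃ q' ∈ q :: J, y q'.1 = q'.2} = {y | y q.1 = q.2} ∪ {y | ∃ q ∈ J, y q.1 = q.2} := by
      ext y; simp
    rw [this]
    exact (closed_face _ _).union ih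

/-- A face of a box together with hyperplane sections in the other directions is acyclic. -/
lemma NL (J : List (Fin n × ℝ)) {j : Fin n} {c₀ : ℝ} : ∀ {a b : Fin n → ℝ}, a ≤ b → Icc a b ⊆ e.target →
    c₀ ∈ Icc (a j) (b j) → (∀ q ∈ J, q.1 ≠ j) → ∀ m,
    V1 k m (Bx e (Icc a b ∩ ({y | y j = c₀} ∪ {y | ∃ q ∈ J, y q.1 = q.2}))) := by
  induction J with
  | nil =>
    intro a b hab ht hc _ m
    have : {y : Fin n → ℝ | y j = c₀} ∪ {y | ∃ q ∈ ([] : List (Fin n × ℝ)), y q.1 = q.2} = {y | y j = c₀} := by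
      ext y; simp
    rw [this, face hc]
    exact box_acyclic' (update_le hab j c₀) (face_subset hc ht) m
  | cons q J ih =>
    intro a b hab ht hc hJ m
    have hJ' : ∀ q ∈ J, q.1 ≠ j := fun q' hq' => hJ q' (by simp [hq'])
    have hq : q.1 ≠ j := hJ q (by simp)
    have e1 : Icc a b ∩ ({y | y j = c₀} ∪ {y | ∃ q' ∈ q :: J, y q'.1 = q'.2}) =
        (Icc a b ∩ ({y | y j = c₀} ∪ {y | ∃ q ∈ J, y q.1 = q.2})) ∪ (Icc a b ∩ {y | y q.1 = q.2}) := by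
      ext y
      simp only [mem_inter_iff, mem_union, mem_ofPred_eq, List.mem_cons, exists_eq_or_imp]
      rw [← and_or_left]
      refine and_congr_right fun _ => ?_
      rw [or_assoc]; refine or_congr_right or_comm
    by_cases hq2 : q.2 ∈ Icc (a q.1) (b q.1)
    · rw [e1, Bx_union]
      have hcl := Bx_closed (e := e) ht ((closed_face j c₀).union (closed_faces J))
      cases m with
      | zero => exact V1_union_zero (ih hab ht hc hJ' 0)
      | succ m =>
        refine V1_union hcl (Bx_closed ht (closed_face _ _)) ?_ (ih hab ht hc hJ' _) ?_
        · rw [← Bx_inter]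
          have e2 : (Icc a b ∩ ({y | y j = c₀} ∪ {y | ∃ q ∈ J, y q.1 = q.2})) ∩ (Icc a b ∩ {y | y q.1 = q.2}) =
            (Icc a b ∩ {y | y q.1 = q.2}) ∩ ({y | y j = c₀} ∪ {y | ∃ q ∈ J, y q.1 = q.2}) := by
            ext y
            simp only [mem_inter_iff]
            tauto
          rw [e2, face hq2]
          refine ih (update_le hab _ _) (face_subset hq2 ht) ?_ hJ' m
          simpa [hq.symm] using hc
        · rw [face hq2]
          exact box_acyclic' (update_le hab _ _) (face_subset hq2 ht) _
    · have : Icc a b ∩ {y | y q.1 = q.2} = ∅ := by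
        refine eq_empty_of_forall_notMem fun y hy => hq2 ?_
        have h2 : y q.1 = q.2 := hy.2
        rw [← h2]
        exact ⟨hy.1.1 _, hy.1.2 _⟩
      rw [e1, this, union_empty]
      exact ih hab ht hc hJ' m

/-- The list of all hyperplanes carrying the faces in the directions `js`. -/
def facesOf (js : List (Fin n)) (a b : Fin n → ℝ) : List (Fin n × ℝ) := js.flatMap fun i => [(i, a i), (i, b i)]

lemma mem_facesOf {js : List (Fin n)} {a b y : Fin n → ℝ} :
    (∃ q ∈ facesOf js a b, y q.1 = q.2) ↔ ∃ i ∈ js, y i = a i ∨ y i = b i := by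
  simp only [facesOf, List.mem_flatMap]
  constructor
  · rintro ⟨q, ⟨i, hi, hq⟩, h⟩
    simp only [List.mem_cons, List.not_mem_nil, or_false] at hq
    rcases hq with rfl | rfl
    · exact ⟨i, hi, Or.inl h⟩
    · exact ⟨i, hi, Or.inr h⟩
  · rintro ⟨i, hi, h | h⟩
    · exact ⟨(i, a i), ⟨i, hi, by simp⟩, h⟩
    · exact ⟨(i, b i), ⟨i, hi, by simp⟩, h⟩

lemma facesOf_ne {js : List (Fin n)} {a b : Fin n → ℝ} {j : Fin n} (h : j ∉ js) :
    ∀ q ∈ facesOf js a b, q.1 ≠ j := by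
  rintro q hq rfl
  simp only [facesOf, List.mem_flatMap, List.mem_cons, List.not_mem_nil, or_false] at hq
  obtain ⟨i, hi, rfl | rfl⟩ := hq <;> exact h hi

/-- The boundary of a box is a cohomology sphere. -/
lemma Sph (js : List (Fin n)) : ∀ {a b : Fin n → ℝ}, a ≤ b → Icc a b ⊆ e.target → js.Nodup →
    (∀ j ∈ js, a j < b j) → Coh1 k js.length (Bx e (Icc a b ∩ {y | ∃ j ∈ js, y j = a j ∨ y j = b j})) := by
  induction js with
  | nil =>
    intro a b _ _ _ _
    have : Bx e (Icc a b ∩ {y | ∃ j ∈ ([] : List (Fin n)), y j = a j ∨ y j = b j}) = ∅ := by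
      ext z; simp [Bx]
    rw [this]
    exact Coh1_empty
  | cons j js ih =>
    intro a b hab ht hnd hlt
    have hj : j ∉ js := (List.nodup_cons.1 hnd).1
    have hb : b j ∈ Icc (a j) (b j) := ⟨hab j, le_rfl⟩
    have ha : a j ∈ Icc (a j) (b j) := ⟨le_rfl, hab j⟩
    have e1 : Icc a b ∩ {y | ∃ i ∈ j :: js, y i = a i ∨ y i = b i} = (Icc a b ∩ {y | y j = b j}) ∪
        (Icc a b ∩ ({y | y j = a j} ∪ {y | ∃ q ∈ facesOf js a b, y q.1 = q.2})) := by
      ext y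
      simp only [mem_inter_iff, mem_union, mem_ofPred_eq, List.mem_cons, exists_eq_or_imp, mem_facesOf]
      rw [← and_or_left]
      refine and_congr_right fun _ => ?_
      rw [or_comm (a := y j = a j), or_assoc]
    rw [e1, Bx_union]
    refine Coh1_union (Bx_closed ht (closed_face _ _)) (Bx_closed ht ((closed_face _ _).union (closed_faces _)))
      ?_ (NL _ hab ht ha (facesOf_ne hj)) ?_
    · rw [face hb]
      exact box_acyclic' (update_le hab _ _) (face_subset hb ht)
    · rw [← Bx_inter]
      have e2 : Icc a b ∩ {y | y j = b j} ∩ (Icc a b ∩ ({y | y j = a j} ∪ {y | ∃ q ∈ facesOf js a b, y q.1 = q.2})) =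
          Icc (Function.update a j (b j)) (Function.update b j (b j)) ∩
            {y | ∃ i ∈ js, y i = Function.update a j (b j) i ∨ y i = Function.update b j (b j) i} := by
        rw [← face hb]
        have e3 : ∀ y : Fin n → ℝ, (∃ i ∈ js, y i = Function.update a j (b j) i ∨ y i = Function.update b j (b j) i) ↔
            ∃ i ∈ js, y i = a i ∨ y i = b i := by
          intro y
          refine exists_congr fun i => and_congr_right fun hi => ?_
          have : i ≠ j := fun h => hj (h ▸ hi)
          simp [this]
        ext y
        simp only [mem_inter_iff, mem_union, mem_ofPred_eq, mem_facesOf, e3]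
        have := hlt j (by simp)
        constructor
        · rintro ⟨⟨h1, h2⟩, _, h3 | h3⟩
          · rw [h2] at h3; exact absurd h3 this.ne'
          · exact ⟨⟨h1, h2⟩, h3⟩
        · rintro ⟨⟨h1, h2⟩, h3⟩
          exact ⟨⟨h1, h2⟩, h1, Or.inr h3⟩
      rw [e2]
      refine ih (update_le hab _ _) (face_subset hb ht) (List.nodup_cons.1 hnd).2 fun i hi => ?_
      have : i ≠ j := fun h => hj (h ▸ hi)
      simpa [this] using hlt i (by simp [hi])

/-- The open box. -/
def Ob (a b : Fin n → ℝ) : Set (Fin n → ℝ) := {y | ∀ i, a i < y i ∧ y i < b i}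

lemma Ob_open (a b : Fin n → ℝ) : IsOpen (Ob a b) := by
  have : Ob a b = Set.pi univ fun i => Ioo (a i) (b i) := by
    ext y; simp [Ob]
  rw [this]
  exact isOpen_set_pi finite_univ fun i _ => isOpen_Ioo

lemma BxOb_open (a b : Fin n → ℝ) : IsOpen (Bx e (Ob a b)) := e.isOpen_inter_preimage (Ob_open a b)

lemma Ob_subset (a b : Fin n → ℝ) : Ob a b ⊆ Icc a b := fun _ hy => ⟨fun i => (hy i).1.le, fun i => (hy i).2.le⟩

lemma Bx_mono {S T : Set (Fin n → ℝ)} (h : S ⊆ T) : Bx e S ⊆ Bx e T := fun _ hz => ⟨hz.1, h hz.2⟩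

lemma Bx_inter_compl (S T : Set (Fin n → ℝ)) : Bx e S ∩ (Bx e T)ᶜ = Bx e (S ∩ Tᶜ) := by
  ext z; simp only [Bx, mem_inter_iff, mem_preimage, mem_compl_iff]; tauto

lemma bdry_eq (a b : Fin n → ℝ) : Icc a b ∩ (Ob a b)ᶜ =
    Icc a b ∩ {y | ∃ j ∈ Finset.univ.toList, y j = a j ∨ y j = b j} := by
  ext y
  simp only [mem_inter_iff, mem_compl_iff, Ob, mem_ofPred_eq, Finset.mem_toList, Finset.mem_univ, true_and,
    not_forall, not_and_or, not_lt]
  refine and_congr_right fun h => exists_congr fun i => ?_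
  constructor
  · rintro (h1 | h1)
    · exact Or.inl (le_antisymm h1 (h.1 i))
    · exact Or.inr (le_antisymm (h.2 i) h1)
  · rintro (h1 | h1)
    · exact Or.inl h1.le
    · exact Or.inr h1.ge

lemma Ob_HcZero {a b : Fin n → ℝ} (hab : ∀ i, a i < b i) (ht : Icc a b ⊆ e.target) {m : ℕ} (hm : m ≠ n) :
    HcZero k m (Bx e (Ob a b)) := by
  refine HcZero_of (Bx_closed' ht) (BxOb_open a b) (Bx_mono (Ob_subset a b))
    (box_acyclic' (fun i => (hab i).le) ht _) ?_
  rw [Bx_inter_compl, bdry_eq]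
  exact (Sph _ (fun i => (hab i).le) ht (Finset.nodup_toList _) fun j _ => hab j).1 m (by simpa using hm)

lemma Ob_HcOne {a b : Fin n → ℝ} (hab : ∀ i, a i < b i) (ht : Icc a b ⊆ e.target) :
    HcOne k n (Bx e (Ob a b)) := by
  refine HcOne_of (Bx_closed' ht) (BxOb_open a b) (Bx_mono (Ob_subset a b))
    (box_acyclic' (fun i => (hab i).le) ht) ?_
  rw [Bx_inter_compl, bdry_eq]
  have := Sph (k := k) (e := e) Finset.univ.toList (fun i => (hab i).le) ht (Finset.nodup_toList _) fun j _ => hab j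
  simpa using this

/-- Lowering one upper face of a box keeps all the cohomology with compact supports. -/
lemma cut_hi {a b : Fin n → ℝ} (hab : ∀ i, a i < b i) (ht : Icc a b ⊆ e.target) {j : Fin n} {c : ℝ}
    (h1 : a j < c) (h2 : c < b j) (m : ℕ) : HcSurj k m (Bx e (Ob a (Function.update b j c))) (Bx e (Ob a b)) := by
  have hle : Function.update a j c ≤ b := by
    intro i; rw [Function.update_apply]; split_ifs with h
    · subst h; exact h2.le
    · exact (hab i).le
  have hge : a ≤ Function.update a j c := by
    intro i; rw [Function.update_apply]; split_ifs with h
    · subst h; exact h1.le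
    · exact le_rfl
  have hP : Icc (Function.update a j c) b ⊆ e.target := (Icc_subset_Icc_left hge).trans ht
  refine HcSurj_of (P := Bx e (Icc (Function.update a j c) b)) (Bx_closed' hP) (BxOb_open a b) ?_
    (box_acyclic' hle hP _) ?_
  · rw [← Bx_union]
    refine Bx_mono fun y hy => ?_
    by_cases h : y j < c
    · left
      intro i
      refine ⟨(hy i).1, ?_⟩
      rw [Function.update_apply]; split_ifs with hi
      · subst hi; exact h
      · exact (hy i).2
    · right
      refine ⟨fun i => ?_, fun i => (hy i).2.le⟩
      rw [Function.update_apply]; split_ifs with hi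
      · subst hi; exact not_lt.1 h
      · exact (hy i).1.le
  · rw [Bx_inter_compl]
    have : Icc (Function.update a j c) b ∩ (Ob a b)ᶜ = Icc (Function.update a j c) b ∩ ({y | y j = b j} ∪
        {y | ∃ q ∈ facesOf (Finset.univ.erase j).toList a b, y q.1 = q.2}) := by
      ext y
      simp only [mem_inter_iff, mem_compl_iff, Ob, mem_ofPred_eq, not_forall, not_and_or, not_lt, mem_union,
        mem_facesOf, Finset.mem_toList, Finset.mem_erase, Finset.mem_univ, and_true]
      refine and_congr_right fun h => ?_
      have ha : ∀ i, a i ≤ y i := fun i => (hge i).trans (h.1 i)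
      constructor
      · rintro ⟨i, hi⟩
        by_cases hij : i = j
        · subst hij
          left
          have := h.1 i
          rw [Function.update_self] at this
          rcases hi with hi | hi
          · linarith
          · exact le_antisymm (h.2 i) hi
        · right
          exact ⟨i, hij, hi.imp (fun hi => le_antisymm hi (ha i)) fun hi => le_antisymm (h.2 i) hi⟩
      · rintro (hj | ⟨i, -, hi⟩)
        · exact ⟨j, Or.inr hj.ge⟩
        · exact ⟨i, hi.imp (fun h => h.le) fun h => h.ge⟩
    rw [this]
    exact NL _ hle hP ⟨hle j, le_rfl⟩ (facesOf_ne (by simp)) m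

/-- Raising one lower face of a box keeps all the cohomology with compact supports. -/
lemma cut_lo {a b : Fin n → ℝ} (hab : ∀ i, a i < b i) (ht : Icc a b ⊆ e.target) {j : Fin n} {c : ℝ}
    (h1 : a j < c) (h2 : c < b j) (m : ℕ) : HcSurj k m (Bx e (Ob (Function.update a j c) b)) (Bx e (Ob a b)) := by
  have hle : a ≤ Function.update b j c := by
    intro i; rw [Function.update_apply]; split_ifs with h
    · subst h; exact h1.le
    · exact (hab i).le
  have hge : Function.update b j c ≤ b := by
    intro i; rw [Function.update_apply]; split_ifs with h
    · subst h; exact h2.le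
    · exact le_rfl
  have hP : Icc a (Function.update b j c) ⊆ e.target := (Icc_subset_Icc_right hge).trans ht
  refine HcSurj_of (P := Bx e (Icc a (Function.update b j c))) (Bx_closed' hP) (BxOb_open a b) ?_
    (box_acyclic' hle hP _) ?_
  · rw [← Bx_union]
    refine Bx_mono fun y hy => ?_
    by_cases h : c < y j
    · left
      intro i
      refine ⟨?_, (hy i).2⟩
      rw [Function.update_apply]; split_ifs with hi
      · subst hi; exact h
      · exact (hy i).1
    · right
      refine ⟨fun i => (hy i).1.le, fun i => ?_⟩
      rw [Function.update_apply]; split_ifs with hi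
      · subst hi; exact not_lt.1 h
      · exact (hy i).2.le
  · rw [Bx_inter_compl]
    have : Icc a (Function.update b j c) ∩ (Ob a b)ᶜ = Icc a (Function.update b j c) ∩ ({y | y j = a j} ∪
        {y | ∃ q ∈ facesOf (Finset.univ.erase j).toList a b, y q.1 = q.2}) := by
      ext y
      simp only [mem_inter_iff, mem_compl_iff, Ob, mem_ofPred_eq, not_forall, not_and_or, not_lt, mem_union,
        mem_facesOf, Finset.mem_toList, Finset.mem_erase, Finset.mem_univ, and_true]
      refine and_congr_right fun h => ?_
      have ha : ∀ i, y i ≤ b i := fun i => (h.2 i).trans (hge i)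
      constructor
      · rintro ⟨i, hi⟩
        by_cases hij : i = j
        · subst hij
          left
          have := h.2 i
          rw [Function.update_self] at this
          rcases hi with hi | hi
          · exact le_antisymm hi (h.1 i)
          · linarith
        · right
          exact ⟨i, hij, hi.imp (fun hi => le_antisymm hi (h.1 i)) fun hi => le_antisymm (ha i) hi⟩
      · rintro (hj | ⟨i, -, hi⟩)
        · exact ⟨j, Or.inl hj.le⟩
        · exact ⟨i, hi.imp (fun h => h.le) fun h => h.ge⟩
    rw [this]
    exact NL _ hle hP ⟨le_rfl, hle j⟩ (facesOf_ne (by simp)) m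

/-- Extension by zero from a smaller box is onto in cohomology with compact supports. -/
lemma nested {a b a' b' : Fin n → ℝ} (h1 : ∀ i, a i < a' i) (h2 : ∀ i, a' i < b' i) (h3 : ∀ i, b' i < b i)
    (ht : Icc a b ⊆ e.target) (m : ℕ) : HcSurj k m (Bx e (Ob a' b')) (Bx e (Ob a b)) := by
  have key : ∀ s : Finset (Fin n), HcSurj k m (Bx e (Ob (s.piecewise a' a) (s.piecewise b' b))) (Bx e (Ob a b)) := by
    intro s
    induction s using Finset.induction_on with
    | empty =>
      simp only [Finset.piecewise_empty]
      intro φ hφ hd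
      exact ⟨φ, hφ, hd, 0, zero_mem _, by simp⟩
    | insert j s hj ih =>
      set as := s.piecewise a' a with has
      set bs := s.piecewise b' b with hbs
      have ha : ∀ i, a i ≤ as i ∧ as i ≤ a' i := by
        intro i; simp only [has, Finset.piecewise]; split_ifs
        · exact ⟨(h1 i).le, le_rfl⟩
        · exact ⟨le_rfl, (h1 i).le⟩
      have hb : ∀ i, bs i ≤ b i ∧ b' i ≤ bs i := by
        intro i; simp only [hbs, Finset.piecewise]; split_ifs
        · exact ⟨(h3 i).le, le_rfl⟩
        · exact ⟨le_rfl, (h3 i).le⟩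
      have haj : as j = a j := by simp [has, hj]
      have hbj : bs j = b j := by simp [hbs, hj]
      have hlt : ∀ i, as i < bs i := fun i => (ha i).2.trans_lt ((h2 i).trans_le (hb i).2)
      have hts : Icc as bs ⊆ e.target := (Icc_subset_Icc (fun i => (ha i).1) fun i => (hb i).1).trans ht
      have hle1 : as ≤ Function.update as j (a' j) := by
        intro i; rw [Function.update_apply]; split_ifs with h
        · subst h; exact (ha i).2
        · exact le_rfl
      have hle2 : Function.update bs j (b' j) ≤ bs := by
        intro i; rw [Function.update_apply]; split_ifs with h
        · subst h; exact (hb i).2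
        · exact le_rfl
      have hlt1 : ∀ i, Function.update as j (a' j) i < bs i := by
        intro i; rw [Function.update_apply]; split_ifs with h
        · subst h; exact (h2 i).trans_le (hb i).2
        · exact hlt i
      have s1 := cut_lo (k := k) hlt hts (j := j) (c := a' j) (by rw [haj]; exact h1 j)
        (by rw [hbj]; exact (h2 j).trans (h3 j)) m
      have s2 := cut_hi (k := k) (j := j) (c := b' j) hlt1 ((Icc_subset_Icc_left hle1).trans hts)
        (by simpa using h2 j) (by rw [hbj]; exact h3 j) m
      rw [Finset.piecewise_insert, Finset.piecewise_insert, ← has, ← hbs]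
      have sub1 : Ob (Function.update as j (a' j)) bs ⊆ Ob as bs :=
        fun y hy i => ⟨(hle1 i).trans_lt (hy i).1, (hy i).2⟩
      have sub2 : Ob as bs ⊆ Ob a b := fun y hy i => ⟨(ha i).1.trans_lt (hy i).1, (hy i).2.trans_le (hb i).1⟩
      exact HcSurj.trans (Bx_mono sub2) (HcSurj.trans (Bx_mono sub1) s2 s1) ih
  simpa using key Finset.univ

lemma exists_box {x : M} (hx : x ∈ e.source) {W : Set M} (hW : W ∈ 𝓝 x) :
    ∃ a b : Fin n → ℝ, (∀ i, a i < e x i) ∧ (∀ i, e x i < b i) ∧ Icc a b ⊆ e.target ∧ Bx e (Icc a b) ⊆ W := by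
  have hN : e.target ∩ e.symm ⁻¹' W ∈ 𝓝 (e x) := by
    refine inter_mem (e.open_target.mem_nhds (e.map_source hx)) ?_
    have := e.continuousAt_symm (e.map_source hx)
    refine this.preimage_mem_nhds ?_
    rwa [e.left_inv hx]
  obtain ⟨ε, hε, h⟩ := Metric.nhds_basis_closedBall.mem_iff.1 hN
  have hI : Icc (e x - fun _ => ε) (e x + fun _ => ε) ⊆ Metric.closedBall (e x) ε := by
    intro y hy
    rw [Metric.mem_closedBall, dist_pi_le_iff hε.le]
    intro i
    have h1 := hy.1 i
    have h2 := hy.2 i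
    simp only [Pi.sub_apply, Pi.add_apply] at h1 h2
    rw [Real.dist_eq, abs_le]
    constructor <;> linarith
  refine ⟨e x - fun _ => ε, e x + fun _ => ε, fun i => by simpa using hε, fun i => by simpa using hε,
    fun y hy => (h (hI hy)).1, ?_⟩
  rintro z ⟨hz, hz'⟩
  have := (h (hI hz')).2
  rwa [mem_preimage, e.left_inv hz] at this

variable (k) in
/-- The local (co)homological structure of an `n`-manifold. -/
structure LocStr (M : Type*) [MetricSpace M] (n : ℕ) : Prop where
  coord : LocCoord M n
  acyc : ∀ x : M, ∀ W ∈ 𝓝 x, ∃ K ∈ 𝓝 x, IsClosed K ∧ K ⊆ W ∧ ∀ m, V1 k m K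
  open' : ∀ x : M, ∀ W ∈ 𝓝 x, ∃ V, IsOpen V ∧ x ∈ V ∧ V ⊆ W ∧ (∀ m, m ≠ n → HcZero k m V) ∧ HcOne k n V ∧
    ∀ y ∈ V, ∀ W' ∈ 𝓝 y, ∃ V', IsOpen V' ∧ y ∈ V' ∧ V' ⊆ W' ∧ V' ⊆ V ∧ HcSurj k n V' V

lemma locStr (h : ∀ x : M, ∃ e : OpenPartialHomeomorph M (Fin n → ℝ), x ∈ e.source) : LocStr k M n where
  coord := by
    intro y
    obtain ⟨e, hy⟩ := h y
    refine ⟨e.source, e.open_source.mem_nhds hy, fun i z => e z i, fun i => ?_, ?_⟩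
    · exact (continuous_apply i).comp_continuousOn e.continuousOn
    · exact e.injOn
  acyc := by
    intro x W hW
    obtain ⟨e, hx⟩ := h x
    obtain ⟨a, b, ha, hb, ht, hs⟩ := exists_box hx hW
    refine ⟨Bx e (Icc a b), ?_, Bx_closed' ht, hs, fun m => box_acyclic' (fun i => ((ha i).trans (hb i)).le) ht m⟩
    exact mem_of_superset ((BxOb_open a b).mem_nhds ⟨hx, fun i => ⟨ha i, hb i⟩⟩) (Bx_mono (Ob_subset a b))
  open' := by
    intro x W hW
    obtain ⟨e, hx⟩ := h x
    obtain ⟨a, b, ha, hb, ht, hs⟩ := exists_box hx hW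
    have hab := fun i => (ha i).trans (hb i)
    refine ⟨Bx e (Ob a b), BxOb_open a b, ⟨hx, fun i => ⟨ha i, hb i⟩⟩, (Bx_mono (Ob_subset a b)).trans hs,
      fun m hm => Ob_HcZero hab ht hm, Ob_HcOne hab ht, ?_⟩
    rintro y hy W' hW'
    obtain ⟨a', b', ha', hb', ht', hs'⟩ := exists_box hy.1 (inter_mem hW' ((BxOb_open a b).mem_nhds hy))
    have hab' := fun i => (ha' i).trans (hb' i)
    have hOI : ∀ i, a i < a' i ∧ b' i < b i := by
      have hsubO : Icc a' b' ⊆ Ob a b := by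
        intro q hq
        have := (hs' (Bx_mem ht' hq)).2.2
        rwa [mem_preimage, e.right_inv (ht' hq)] at this
      intro i
      exact ⟨(hsubO (left_mem_Icc.2 fun i => (hab' i).le) i).1, (hsubO (right_mem_Icc.2 fun i => (hab' i).le) i).2⟩
    have hs'' := (Bx_mono (e := e) (Ob_subset a' b')).trans hs'
    exact ⟨Bx e (Ob a' b'), BxOb_open a' b', ⟨hy.1, fun i => ⟨ha' i, hb' i⟩⟩, hs''.trans inter_subset_left,
      hs''.trans inter_subset_right, nested (fun i => (hOI i).1) hab' (fun i => (hOI i).2) ht n⟩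

end

/-! ### Finiteness of the cohomology -/

section
variable {k : Type*} [Field k] {V W : Type*} [AddCommGroup V] [Module k V] [AddCommGroup W] [Module k W]

/-- The length (dimension) of `(P + Q) / Q`. -/
def L (P Q : Submodule k V) : ℕ∞ := Module.length k (P.map Q.mkQ)

lemma length_range_le {S A B : Type*} [AddCommGroup S] [Module k S] [AddCommGroup A] [Module k A]
    [AddCommGroup B] [Module k B] (f : S →ₗ[k] A) (g : S →ₗ[k] B) (h : g.ker ≤ f.ker) :
    Module.length k f.range ≤ Module.length k g.range := by
  rw [← (f.quotKerEquivRange).length_eq, ← (g.quotKerEquivRange).length_eq]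
  exact Module.length_le_of_surjective (Submodule.factor h) (Submodule.factor_surjective h)

/-- Comparison of subquotients along a linear relation `R`. -/
lemma L_rel (R : Submodule k (V × W)) {P Q : Submodule k V} {P' Q' : Submodule k W}
    (h1 : ∀ v ∈ P, ∃ w ∈ P', (v, w) ∈ R) (h2 : ∀ v w, v ∈ P → (v, w) ∈ R → w ∈ Q' → v ∈ Q) :
    L P Q ≤ L P' Q' := by
  let S : Submodule k (V × W) := R ⊓ (P.prod P')
  let f : S →ₗ[k] V ⧸ Q := Q.mkQ ∘ₗ LinearMap.fst k V W ∘ₗ S.subtype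
  let g : S →ₗ[k] W ⧸ Q' := Q'.mkQ ∘ₗ LinearMap.snd k V W ∘ₗ S.subtype
  have hker : g.ker ≤ f.ker := by
    rintro ⟨⟨v, w⟩, hR, hv, hw⟩ hx
    have hx' : w ∈ Q' := by simpa [g] using hx
    have : v ∈ Q := h2 v w hv hR hx'
    simpa [f] using this
  have hf : P.map Q.mkQ ≤ f.range := by
    rintro _ ⟨v, hv, rfl⟩
    obtain ⟨w, hw, hR⟩ := h1 v hv
    exact ⟨⟨(v, w), hR, hv, hw⟩, rfl⟩
  have hg : g.range ≤ P'.map Q'.mkQ := by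
    rintro _ ⟨⟨⟨v, w⟩, hR, hv, hw⟩, rfl⟩
    exact ⟨w, hw, rfl⟩
  calc L P Q ≤ Module.length k f.range :=
        Module.length_le_of_injective (Submodule.inclusion hf) (Submodule.inclusion_injective hf)
    _ ≤ Module.length k g.range := length_range_le f g hker
    _ ≤ _ := Module.length_le_of_injective (Submodule.inclusion hg) (Submodule.inclusion_injective hg)

lemma L_map (f : V →ₗ[k] W) {P Q : Submodule k V} {P' Q' : Submodule k W}
    (h1 : ∀ v ∈ P, f v ∈ P') (h2 : ∀ v ∈ P, f v ∈ Q' → v ∈ Q) : L P Q ≤ L P' Q' := by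
  refine L_rel (LinearMap.graph f) (fun v hv => ⟨f v, h1 v hv, by simp [LinearMap.mem_graph_iff]⟩) ?_
  intro v w hv hR hw
  rw [LinearMap.mem_graph_iff] at hR
  simp only at hR
  subst hR
  exact h2 v hv hw

lemma L_mono {P Q P' Q' : Submodule k V} (h1 : P ≤ P') (h2 : ∀ v ∈ P, v ∈ Q' → v ∈ Q) : L P Q ≤ L P' Q' :=
  L_map LinearMap.id (fun _ hv => h1 hv) fun v hv => h2 v hv

lemma L_eq_zero {P Q : Submodule k V} : L P Q = 0 ↔ P ≤ Q := by
  rw [L, Module.length_eq_zero_iff, Submodule.subsingleton_iff_eq_bot, ← LinearMap.le_ker_iff_map,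
    Submodule.ker_mkQ]

lemma L_add {P Q R : Submodule k V} (h1 : R ≤ Q) (h2 : Q ≤ P) : L P R = L P Q + L Q R := by
  have hm : Q.map R.mkQ ≤ P.map R.mkQ := Submodule.map_mono h2
  let f : Q.map R.mkQ →ₗ[k] P.map R.mkQ := Submodule.inclusion hm
  let g0 : V ⧸ R →ₗ[k] V ⧸ Q := Submodule.factor h1
  have hg : ∀ x ∈ P.map R.mkQ, g0 x ∈ P.map Q.mkQ := by
    rintro _ ⟨v, hv, rfl⟩
    exact ⟨v, hv, by simp [g0]⟩
  let g : P.map R.mkQ →ₗ[k] P.map Q.mkQ := g0.restrict hg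
  have := Module.length_eq_add_of_exact f g (Submodule.inclusion_injective hm) (by
    rintro ⟨_, v, hv, rfl⟩
    refine ⟨⟨R.mkQ v, v, hv, rfl⟩, ?_⟩
    apply Subtype.ext
    simp [g, g0, LinearMap.restrict_apply]) (by
    rintro ⟨_, v, hv, rfl⟩
    constructor
    · intro h
      have h' : g0 (R.mkQ v) = 0 := congrArg Subtype.val h
      have hvQ : v ∈ Q := by simpa [g0] using h'
      exact ⟨⟨R.mkQ v, v, hvQ, rfl⟩, rfl⟩
    · rintro ⟨⟨_, w, hw, rfl⟩, h⟩
      have h' : R.mkQ w = R.mkQ v := congrArg Subtype.val h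
      apply Subtype.ext
      change g0 (R.mkQ v) = 0
      rw [← h']
      simpa [g0] using hw)
  rw [L, this, add_comm]; rfl

/-- Splitting a bound for `L P R` along any intermediate condition `Q`. -/
lemma L_split {P R : Submodule k V} (Q : Submodule k V) : L P R ≤ L P Q + L (P ⊓ Q) R := by
  have h := L_add (P := P) (Q := P ⊓ Q) (R := P ⊓ Q ⊓ R) inf_le_left inf_le_left
  have h1 : L P R ≤ L P (P ⊓ Q ⊓ R) := L_mono le_rfl fun v _ hv => hv.2
  refine h1.trans (h.le.trans (add_le_add (L_mono le_rfl fun v hv hq => ⟨hv, hq⟩)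
    (L_mono le_rfl fun v hv hq => ⟨hv, hq⟩)))

end

section
variable {M : Type*} [MetricSpace M] [CompactSpace M] {k : Type*} [Field k]

variable (k) in
/-- Cocycles on a neighbourhood of `A`, in length `m`. -/
def Zc (m : ℕ) (A : Set M) : Submodule k (List M → k) := (I k (m + 1) A).comap d

variable (k) in
/-- Coboundaries modulo functions vanishing near `A`, in length `m`. -/
def Bc (m : ℕ) (A : Set M) : Submodule k (List M → k) := LinearMap.range d ⊔ I k m A

lemma mem_Bc {m : ℕ} {A : Set M} {φ : List M → k} : φ ∈ Bc k m A ↔ ∃ ψ, φ - d ψ ∈ I k m A := by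
  rw [Bc, Submodule.mem_sup]
  constructor
  · rintro ⟨_, ⟨ψ, rfl⟩, z, hz, rfl⟩
    exact ⟨ψ, by simpa using hz⟩
  · rintro ⟨ψ, h⟩
    exact ⟨d ψ, ⟨ψ, rfl⟩, _, h, by abel⟩

lemma Bc_anti {m : ℕ} {A B : Set M} (h : A ⊆ B) : Bc k m B ≤ Bc k m A := sup_le_sup_left (I_anti h) _

/-- Finiteness of the image of cohomology under restriction to a smaller closed set
(the Wilder argument). -/
lemma finite_restrict (hac : ∀ x : M, ∀ W ∈ 𝓝 x, ∃ K ∈ 𝓝 x, IsClosed K ∧ K ⊆ W ∧ ∀ m, V1 k m K) (m : ℕ) :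
    ∀ {K K' : Set M}, IsClosed K → IsClosed K' → K ⊆ interior K' → L (Zc k m K') (Bc k m K) < ⊤ := by
  induction m with
  | zero =>
    intro K K' _ _ _
    have h : L (Zc k 0 K') (Bc k 0 K) ≤ L (⊤ : Submodule k k) ⊥ := by
      refine L_map (LinearMap.proj ([] : List M)) (fun _ _ => trivial) fun φ _ h => ?_
      refine mem_Bc.2 ⟨0, mem_I_zero.2 ?_⟩
      simpa using h
    refine h.trans_lt ?_
    have h2 : L (⊤ : Submodule k k) ⊥ ≤ Module.length k k :=
      Module.length_le_of_surjective ((LinearMap.range (⊥ : Submodule k k).mkQ).subtype.codRestrict _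
        (fun x => by rw [Submodule.map_top]; exact x.2) ∘ₗ (⊥ : Submodule k k).mkQ.rangeRestrict) (by
        rintro ⟨_, v, -, rfl⟩
        exact ⟨v, rfl⟩)
    refine h2.trans_lt ?_
    rw [Module.length_eq_one]
    exact ENat.natCast_lt_top 1
  | succ m ih =>
    intro K K' hK hK' hKK'
    have hun : ∀ {A B A' B' : Set M}, IsClosed A → IsClosed B → IsClosed A' → IsClosed B' →
        A ⊆ interior A' → B ⊆ interior B' → L (Zc k (m + 1) K') (Bc k (m + 1) A') < ⊤ →
        L (Zc k (m + 1) K') (Bc k (m + 1) B') < ⊤ → L (Zc k (m + 1) K') (Bc k (m + 1) (A ∪ B)) < ⊤ := by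
      intro A B A' B' hA hB hA' hB' hAA hBB h1 h2
      refine (L_split (Bc k (m + 1) A')).trans_lt (ENat.add_lt_top.2 ⟨h1, ?_⟩)
      refine (L_split (Bc k (m + 1) B')).trans_lt (ENat.add_lt_top.2
        ⟨(L_mono inf_le_left fun _ _ h => h).trans_lt h2, ?_⟩)
      refine lt_of_le_of_lt ?_ (ih (hA.inter hB) (hA'.inter hB')
        (by rw [interior_inter]; exact inter_subset_inter hAA hBB))
      -- the connecting relation of the Mayer–Vietoris sequence
      let R : Submodule k ((List M → k) × (List M → k)) :=
        { carrier := {q | ∃ ψ ψ', q.1 - d ψ ∈ I k (m + 1) A' ∧ q.1 - d ψ' ∈ I k (m + 1) B' ∧ q.2 = ψ - ψ'}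
          add_mem' := by
            rintro ⟨v, w⟩ ⟨v', w'⟩ ⟨ψ, ψ', h1, h2, h3⟩ ⟨χ, χ', h1', h2', h3'⟩
            simp only at *
            refine ⟨ψ + χ, ψ' + χ', ?_, ?_, ?_⟩
            · have := add_mem h1 h1'
              simp only [Prod.mk_add_mk, map_add]
              convert this using 1; abel
            · have := add_mem h2 h2'
              simp only [Prod.mk_add_mk, map_add]
              convert this using 1; abel
            · simp only [Prod.mk_add_mk, h3, h3']; abel
          zero_mem' := ⟨0, 0, by simp, by simp, by simp⟩
          smul_mem' := by
            rintro c ⟨v, w⟩ ⟨ψ, ψ', h1, h2, h3⟩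
            simp only at *
            refine ⟨c • ψ, c • ψ', ?_, ?_, ?_⟩
            · have := (I k (m + 1) A').smul_mem c h1
              rwa [smul_sub, ← map_smul] at this
            · have := (I k (m + 1) B').smul_mem c h2
              rwa [smul_sub, ← map_smul] at this
            · simp [h3, smul_sub] }
      refine L_rel R ?_ ?_
      · rintro φ ⟨⟨-, hA1⟩, hB1⟩
        obtain ⟨ψ, hψ⟩ := mem_Bc.1 hA1
        obtain ⟨ψ', hψ'⟩ := mem_Bc.1 hB1
        refine ⟨ψ - ψ', ?_, ψ, ψ', hψ, hψ', rfl⟩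
        have := sub_mem (I_anti (inter_subset_right (s := A')) hψ') (I_anti (inter_subset_left (t := B')) hψ)
        rw [sub_sub_sub_cancel_left, ← map_sub] at this
        exact this
      · rintro φ χ - ⟨ψ, ψ', h1, h2, h3⟩ hχ
        obtain ⟨θ, hθ⟩ := mem_Bc.1 hχ
        simp only at h1 h2 h3
        rw [h3] at hθ
        exact mem_Bc.2 (mv1 hA hB (I_anti (hAA.trans interior_subset) h1) (I_anti (hBB.trans interior_subset) h2) hθ)
    have hG : ∃ A A' : Set M, IsClosed A ∧ IsClosed A' ∧ K ⊆ A ∧ A ⊆ interior A' ∧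
        L (Zc k (m + 1) K') (Bc k (m + 1) A') < ⊤ := by
      refine hK.isCompact.induction_on (p := fun s => ∃ A A' : Set M, IsClosed A ∧ IsClosed A' ∧ s ⊆ A ∧
        A ⊆ interior A' ∧ L (Zc k (m + 1) K') (Bc k (m + 1) A') < ⊤) ?_ ?_ ?_ ?_
      · refine ⟨∅, ∅, isClosed_empty, isClosed_empty, subset_rfl, empty_subset _, ?_⟩
        rw [L_eq_zero.2]
        · exact ENat.natCast_lt_top 0
        · intro φ _
          exact mem_Bc.2 ⟨0, mem_I_empty (by simp) _⟩
      · rintro s t hst ⟨A, A', h1, h2, h3, h4⟩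
        exact ⟨A, A', h1, h2, hst.trans h3, h4⟩
      · rintro s t ⟨A, A', h1, h2, h3, h4, h5⟩ ⟨B, B', h1', h2', h3', h4', h5'⟩
        obtain ⟨U, hU, hAU, hUA⟩ := normal_exists_closure_subset h1 isOpen_interior h4
        obtain ⟨U', hU', hAU', hUA'⟩ := normal_exists_closure_subset h1' isOpen_interior h4'
        refine ⟨A ∪ B, closure U ∪ closure U', h1.union h1', isClosed_closure.union isClosed_closure,
          union_subset_union h3 h3', ?_, hun isClosed_closure isClosed_closure h2 h2' hUA hUA' h5 h5'⟩
        refine (union_subset_union (hAU.trans ?_) (hAU'.trans ?_)).trans (subset_interior_iff_isOpen.2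
          (hU.union hU') |>.trans (interior_mono (union_subset_union subset_closure subset_closure))) <;> exact subset_rfl
      · intro x hx
        obtain ⟨A', hA', hcl, hsub, hV⟩ := hac x K' (mem_interior_iff_mem_nhds.1 (hKK' hx))
        obtain ⟨A, hA, hAcl, hAsub⟩ := exists_mem_nhds_isClosed_subset (isOpen_interior.mem_nhds (mem_interior_iff_mem_nhds.2 hA'))
        refine ⟨A, mem_nhdsWithin_of_mem_nhds hA, A, A', hAcl, hcl, subset_rfl, hAsub, ?_⟩
        rw [L_eq_zero.2]
        · exact ENat.natCast_lt_top 0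
        · intro φ hφ
          exact mem_Bc.2 (hV _ φ (I_anti hsub hφ))
    obtain ⟨A, A', -, -, h3, h4, h5⟩ := hG
    exact (L_mono le_rfl fun φ _ h => Bc_anti (h3.trans (h4.trans interior_subset)) h).trans_lt h5

/-- A compact manifold has finite-dimensional cohomology. -/
lemma finite_coh {n : ℕ} (h : LocStr k M n) (m : ℕ) : L (Zc k m (univ : Set M)) (Bc k m univ) < ⊤ :=
  finite_restrict h.acyc m isClosed_univ isClosed_univ (by simp)

end

/-! ### Homology of pairs of complexes -/

section
variable {k : Type*} [Field k] {V : Type*} [AddCommGroup V] [Module k V]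

/-- `A` is a subcomplex for the differential `del`. -/
def Cx (del : V →ₗ[k] V) (A : ℕ → Submodule k V) : Prop := ∀ n, ∀ a ∈ A (n + 1), del a ∈ A n

/-- Dimension of the `n`-th homology of the pair `(A, B)`; `A (n + 1)` is the group of `n`-chains. -/
def h (del : V →ₗ[k] V) (A B : ℕ → Submodule k V) (n : ℕ) : ℕ∞ :=
  L (A (n + 1) ⊓ (B n).comap del) ((A (n + 2)).map del ⊔ B (n + 1))

variable {del : V →ₗ[k] V} {A B C : ℕ → Submodule k V}

lemma mem_bd {n : ℕ} {x : V} : x ∈ (A (n + 2)).map del ⊔ B (n + 1) ↔ ∃ a ∈ A (n + 2), x - del a ∈ B (n + 1) := by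
  rw [Submodule.mem_sup]
  constructor
  · rintro ⟨_, ⟨a, ha, rfl⟩, b, hb, rfl⟩
    exact ⟨a, ha, by simpa using hb⟩
  · rintro ⟨a, ha, h⟩
    exact ⟨del a, ⟨a, ha, rfl⟩, _, h, by abel⟩

lemma h_eq_zero {n : ℕ} : h del A B n = 0 ↔
    ∀ a ∈ A (n + 1), del a ∈ B n → ∃ a' ∈ A (n + 2), a - del a' ∈ B (n + 1) := by
  rw [h, L_eq_zero]
  constructor
  · intro H a ha hb
    exact mem_bd.1 (H ⟨ha, hb⟩)
  · rintro H a ⟨ha, hb⟩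
    exact mem_bd.2 (H a ha hb)

/-- The linear relation `{(v, w) | v - w ∈ S}`. -/
def relSub (S : Submodule k V) : Submodule k (V × V) := S.comap (LinearMap.fst k V V - LinearMap.snd k V V)

lemma mem_relSub {S : Submodule k V} {v w : V} : (v, w) ∈ relSub S ↔ v - w ∈ S := by simp [relSub]

/-- The first of three inequalities from the long exact sequence of the triple `C ≤ B ≤ A`. -/
lemma h_triple1 (hdel : ∀ x, del (del x) = 0) (hBA : B ≤ A) (hCB : C ≤ B) (n : ℕ) :
    h del A C n ≤ h del A B n + h del B C n := by
  refine (L_split ((A (n + 2)).map del ⊔ B (n + 1))).trans (add_le_add ?_ ?_)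
  · exact L_mono (fun a ha => ⟨ha.1, hCB n ha.2⟩) fun _ _ h => h
  · refine L_rel (relSub ((A (n + 2)).map del)) ?_ ?_
    · rintro a ⟨⟨ha, hc⟩, hb⟩
      obtain ⟨a', ha', hb⟩ := mem_bd.1 hb
      refine ⟨a - del a', ⟨hb, ?_⟩, mem_relSub.2 ⟨a', ha', by abel⟩⟩
      change del (a - del a') ∈ C n
      rw [map_sub, hdel, sub_zero]; exact hc
    · rintro a b - hab hb
      obtain ⟨a', ha', e⟩ := mem_relSub.1 hab
      obtain ⟨b', hb', hc⟩ := mem_bd.1 hb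
      refine mem_bd.2 ⟨a' + b', add_mem ha' (hBA _ hb'), ?_⟩
      rw [map_add, e]; convert hc using 1; abel

/-- Exactness of the sequence of the triple `C ≤ B ≤ A` at the homology of `(B, C)`. -/
lemma h_triple2 (hdel : ∀ x, del (del x) = 0) (hBA : B ≤ A) (hCB : C ≤ B) (n : ℕ) :
    h del B C n ≤ h del A B (n + 1) + h del A C n := by
  rw [add_comm]
  refine (L_split ((A (n + 2)).map del ⊔ C (n + 1))).trans (add_le_add ?_ ?_)
  · exact L_mono (fun a ha => ⟨hBA _ ha.1, ha.2⟩) fun _ _ h => h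
  · refine L_rel ((C (n + 1)).comap (LinearMap.fst k V V - del ∘ₗ LinearMap.snd k V V)) ?_ ?_
    · rintro q ⟨⟨hq, hc⟩, hb⟩
      obtain ⟨a, ha, hc'⟩ := mem_bd.1 hb
      refine ⟨a, ⟨ha, ?_⟩, by simpa using hc'⟩
      have := sub_mem hq (hCB _ hc')
      simpa using this
    · rintro q a ⟨⟨hq, hc⟩, hb⟩ hqa ha
      obtain ⟨a', ha', hb'⟩ := mem_bd.1 ha
      refine mem_bd.2 ⟨a - del a', hb', ?_⟩
      rw [map_sub, hdel, sub_zero]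
      simpa using hqa

/-- Exactness of the sequence of the triple `C ≤ B ≤ A` at the homology of `(A, B)`. -/
lemma h_triple3 (hdel : ∀ x, del (del x) = 0) (hBA : B ≤ A) (hCB : C ≤ B) (n : ℕ) :
    h del A B (n + 1) ≤ h del A C (n + 1) + h del B C n := by
  rw [add_comm (h del A C (n + 1))]
  refine (L_split (((B (n + 2)).map del ⊔ C (n + 1)).comap del)).trans (add_le_add ?_ ?_)
  · refine L_map del (fun a ha => ⟨ha.2, ?_⟩) fun a _ h => h
    change del (del a) ∈ C n
    rw [hdel]; exact zero_mem _
  · refine L_rel (relSub (B (n + 2))) ?_ ?_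
    · rintro a ⟨⟨ha, hb⟩, hc⟩
      obtain ⟨b, hb, hc⟩ := mem_bd.1 hc
      refine ⟨a - b, ⟨sub_mem ha (hBA _ hb), ?_⟩, mem_relSub.2 (by simpa using hb)⟩
      change del (a - b) ∈ C (n + 1)
      rw [map_sub]; exact hc
    · rintro a a' - hb ha'
      obtain ⟨a'', ha'', hc⟩ := mem_bd.1 ha'
      refine mem_bd.2 ⟨a'', ha'', ?_⟩
      have := add_mem (mem_relSub.1 hb) (hCB _ hc)
      convert this using 1; abel

lemma h_bottom (hCB : C ≤ B) (h0 : B 0 ≤ C 0) : h del A B 0 ≤ h del A C 0 :=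
  L_mono (fun a ha => ⟨ha.1, h0 ha.2⟩) fun a _ ha => (sup_le_sup_left (hCB 1) _) ha

/-- Variant of `h_triple3` when the connecting homomorphism vanishes. -/
lemma h_triple3' (hBA : B ≤ A) (hCB : C ≤ B) (n : ℕ)
    (hinj : ∀ a ∈ A (n + 2), del a ∈ B (n + 1) → ∃ b ∈ B (n + 2), del a - del b ∈ C (n + 1)) :
    h del A B (n + 1) ≤ h del A C (n + 1) := by
  refine L_rel (relSub (B (n + 2))) ?_ ?_
  · rintro a ⟨ha, hb⟩
    obtain ⟨b, hb, hc⟩ := hinj a ha hb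
    refine ⟨a - b, ⟨sub_mem ha (hBA _ hb), ?_⟩, mem_relSub.2 (by simpa using hb)⟩
    change del (a - b) ∈ C (n + 1)
    rw [map_sub]; exact hc
  · rintro a a' - hb ha'
    obtain ⟨a'', ha'', hc⟩ := mem_bd.1 ha'
    refine mem_bd.2 ⟨a'', ha'', ?_⟩
    have := add_mem (mem_relSub.1 hb) (hCB _ hc)
    convert this using 1; abel

lemma h_mono_zero {A' : ℕ → Submodule k V} (hA : ∀ n, A n = A' n) (n : ℕ) : h del A B n = h del A' B n := by
  rw [funext hA]

/-- Excision. -/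
lemma h_excision (hA : Cx del A) (hB : Cx del B) (hAB : A ⊓ B ≤ C) (hCB : C ≤ B) (n : ℕ) :
    h del (A ⊔ B) B n ≤ h del A C n := by
  refine L_rel (relSub (B (n + 1))) ?_ ?_
  · rintro x ⟨hx, hb⟩
    obtain ⟨a, ha, b, hb', rfl⟩ := Submodule.mem_sup.1 hx
    refine ⟨a, ⟨ha, hAB n ⟨hA n a ha, ?_⟩⟩, mem_relSub.2 (by simpa using hb')⟩
    have := sub_mem hb (hB n b hb')
    simpa using this
  · rintro x a - hxa ha
    obtain ⟨a', ha', hc⟩ := mem_bd.1 ha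
    refine mem_bd.2 ⟨a', Submodule.mem_sup_left ha', ?_⟩
    have := add_mem (mem_relSub.1 hxa) (hCB _ hc)
    convert this using 1; abel

/-- If `A` and `B` meet inside `C`, the homology of `A ⊔ B` relative to `C` splits. -/
lemma h_add_le (hdel : ∀ x, del (del x) = 0) (hA : Cx del A) (hB : Cx del B) (hC : Cx del C)
    (hAB : A ⊓ B ≤ C) (hCA : C ≤ A) (n : ℕ) :
    h del A C n + h del B C n ≤ h del (A ⊔ B) C n := by
  set P := (A ⊔ B) (n + 1) ⊓ (C n).comap del with hP
  set R := ((A ⊔ B) (n + 2)).map del ⊔ C (n + 1) with hR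
  have hRP : R ≤ P := by
    intro x hx
    obtain ⟨y, hy, hc⟩ := mem_bd.1 hx
    have e : x = del y + (x - del y) := by abel
    have hdy : del y ∈ (A ⊔ B) (n + 1) := by
      obtain ⟨a, ha, b, hb, rfl⟩ := Submodule.mem_sup.1 hy
      rw [map_add]
      exact Submodule.add_mem_sup (hA _ a ha) (hB _ b hb)
    constructor
    · rw [e]; exact add_mem hdy (Submodule.mem_sup_left (hCA _ hc))
    · change del x ∈ C n
      rw [e, map_add, hdel, zero_add]; exact hC _ _ hc
  set Q := P ⊓ (A (n + 1) ⊔ (B (n + 2)).map del) with hQ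
  have hRQ : R ≤ Q := by
    refine le_inf hRP ?_
    intro x hx
    obtain ⟨y, hy, hc⟩ := mem_bd.1 hx
    obtain ⟨a, ha, b, hb, rfl⟩ := Submodule.mem_sup.1 hy
    have e : x = (del a + (x - del (a + b))) + del b := by rw [map_add]; abel
    rw [e]
    exact Submodule.add_mem_sup (add_mem (hA _ a ha) (hCA _ hc)) ⟨b, hb, rfl⟩
  have key : h del (A ⊔ B) C n = L P Q + L Q R := L_add hRQ inf_le_left
  rw [key, add_comm]
  refine add_le_add ?_ ?_
  · refine L_mono (fun x hx => ⟨Submodule.mem_sup_right hx.1, hx.2⟩) ?_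
    rintro x ⟨hx, -⟩ ⟨-, hx'⟩
    obtain ⟨a, ha, _, ⟨b, hb, rfl⟩, e⟩ := Submodule.mem_sup.1 hx'
    refine mem_bd.2 ⟨b, hb, hAB _ ⟨?_, sub_mem hx (hB _ b hb)⟩⟩
    rw [← e]; simpa using ha
  · refine L_mono (fun x hx => ⟨⟨Submodule.mem_sup_left hx.1, hx.2⟩, Submodule.mem_sup_left hx.1⟩) ?_
    rintro x ⟨hx, -⟩ hx'
    obtain ⟨y, hy, hc⟩ := mem_bd.1 hx'
    obtain ⟨a, ha, b, hb, rfl⟩ := Submodule.mem_sup.1 hy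
    refine mem_bd.2 ⟨a, ha, ?_⟩
    have h1 : del b ∈ A (n + 1) := by
      have := sub_mem (sub_mem hx (hA _ a ha)) (hCA _ hc)
      rw [map_add] at this
      convert this using 1; abel
    have := add_mem hc (hAB _ ⟨h1, hB _ b hb⟩)
    rw [map_add] at this
    convert this using 1; abel

end

/-! ### The tensor product of periodic resolutions -/

section
variable {k : Type*} [Field k] {V : Type*} [AddCommGroup V] [Module k V] {r : ℕ}

/-- Koszul sign attached to the `l`-th direction at the multi-index `α`. -/
def sg (k : Type*) [Field k] (l : Fin r) (α : Fin r → ℕ) : k := (-1) ^ ∑ i ∈ Finset.univ.filter (· < l), α i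

lemma sg_add (l m : Fin r) (α : Fin r → ℕ) :
    sg k l (α + Pi.single m 1) = if m < l then -sg k l α else sg k l α := by
  have hsum : ∑ x ∈ Finset.univ.filter (· < l), (Pi.single m 1 : Fin r → ℕ) x = if m < l then 1 else 0 := by
    simp [Pi.single_apply]
  simp only [sg, Pi.add_apply, Finset.sum_add_distrib, pow_add]
  split_ifs with h
  · rw [hsum, if_pos h]
    simp
  · rw [hsum, if_neg h]
    simp

lemma sg_mul_self (l : Fin r) (α : Fin r → ℕ) : sg k l α * sg k l α = 1 := by
  rw [sg, ← mul_pow]; simp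

/-- The differential of the total complex of the tensor product of `r` copies of the periodic
resolution; `T l m` is the `m`-th differential in direction `l`. -/
def kdel (T : Fin r → ℕ → V →ₗ[k] V) : ((Fin r → ℕ) → V) →ₗ[k] ((Fin r → ℕ) → V) :=
  LinearMap.pi fun α => ∑ l, sg k l α • (T l (α l + 1) ∘ₗ LinearMap.proj (α + Pi.single l 1))

variable {T : Fin r → ℕ → V →ₗ[k] V}

lemma kdel_apply (f : (Fin r → ℕ) → V) (α : Fin r → ℕ) :
    kdel T f α = ∑ l, sg k l α • T l (α l + 1) (f (α + Pi.single l 1)) := by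
  simp [kdel]

lemma kdel_kdel (hT2 : ∀ l m x, T l (m + 1) (T l (m + 2) x) = 0)
    (hTc : ∀ l l' m m' x, l ≠ l' → T l m (T l' m' x) = T l' m' (T l m x)) (f : (Fin r → ℕ) → V) :
    kdel T (kdel T f) = 0 := by
  funext α
  rw [kdel_apply]
  simp only [kdel_apply, map_sum, map_smul, Finset.smul_sum, smul_smul, Pi.zero_apply]
  rw [← Finset.sum_product']
  refine Finset.sum_involution (fun q _ => (q.2, q.1)) ?_ ?_ (by simp) (by simp)
  · rintro ⟨l, m⟩ -
    simp only
    by_cases hlm : l = m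
    · subst hlm
      simp [hT2]
    · have h1 : (α + Pi.single l 1 : Fin r → ℕ) m = α m := by simp [Ne.symm hlm]
      have h2 : (α + Pi.single m 1 : Fin r → ℕ) l = α l := by simp [hlm]
      rw [h1, h2, hTc m l _ _ _ (Ne.symm hlm), sg_add, sg_add,
        add_right_comm α (Pi.single m 1) (Pi.single l 1), ← add_smul]
      rcases lt_or_gt_of_ne hlm with h | h
      · rw [if_pos h, if_neg h.le.not_gt, mul_comm (sg k m α), mul_neg, neg_add_cancel, zero_smul]
      · rw [if_pos h, if_neg h.le.not_gt, mul_comm (sg k m α), neg_mul, add_neg_cancel, zero_smul]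
  · rintro ⟨l, m⟩ - hne heq
    apply hne
    have hlm : m = l := congrArg Prod.fst heq
    subst hlm
    simp [hT2]

/-- Total degree of a multi-index. -/
def deg (α : Fin r → ℕ) : ℕ := ∑ i, α i

lemma deg_add (α : Fin r → ℕ) (l : Fin r) : deg (α + Pi.single l 1) = deg α + 1 := by
  simp [deg, Finset.sum_add_distrib]

/-- Chains of degree `j - 1` with values in `P`. -/
def KC (P : Submodule k V) (r : ℕ) (j : ℕ) : Submodule k ((Fin r → ℕ) → V) where
  carrier := {f | ∀ α, f α ∈ P ∧ (deg α + 1 ≠ j → f α = 0)}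
  add_mem' := fun hf hg α => ⟨add_mem (hf α).1 (hg α).1, fun h => by simp [(hf α).2 h, (hg α).2 h]⟩
  zero_mem' := fun α => ⟨zero_mem _, fun _ => rfl⟩
  smul_mem' := fun c f hf α => ⟨P.smul_mem c (hf α).1, fun h => by simp [(hf α).2 h]⟩

lemma mem_KC {P : Submodule k V} {j : ℕ} {f : (Fin r → ℕ) → V} :
    f ∈ KC P r j ↔ ∀ α, f α ∈ P ∧ (deg α + 1 ≠ j → f α = 0) := Iff.rfl

lemma KC_mono {P P' : Submodule k V} (h : P' ≤ P) : KC P' r ≤ KC P r :=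
  fun _ _ hf α => ⟨h (hf α).1, (hf α).2⟩

/-- `P` is stable under all the operators `T l m`. -/
def Stab (T : Fin r → ℕ → V →ₗ[k] V) (P : Submodule k V) : Prop := ∀ l m, ∀ x ∈ P, T l m x ∈ P

lemma KC_Cx {P : Submodule k V} (hP : Stab T P) : Cx (kdel T) (KC P r) := by
  intro n f hf α
  rw [kdel_apply]
  refine ⟨sum_mem fun l _ => P.smul_mem _ (hP _ _ _ (hf _).1), fun h => Finset.sum_eq_zero fun l _ => ?_⟩
  rw [(hf _).2, map_zero, smul_zero]
  rw [deg_add]; omega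

/-- Dimension of the degree `j` homology with coefficients in `P / P'`. -/
def th (T : Fin r → ℕ → V →ₗ[k] V) (P P' : Submodule k V) (j : ℕ) : ℕ∞ := h (kdel T) (KC P r) (KC P' r) j

/-- The multi-indices of degree `j`. -/
def mi (r j : ℕ) : Finset (Fin r → ℕ) := Finset.univ.piAntidiag j

lemma mem_mi {j : ℕ} {α : Fin r → ℕ} : α ∈ mi r j ↔ deg α = j := by simp [mi, deg]

/-- Homology is bounded by the dimension of the chains. -/
lemma th_le (P P' : Submodule k V) (j : ℕ) : th T P P' j ≤ (mi r j).card * L P P' := by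
  have key : ∀ S : Finset (Fin r → ℕ),
      L (KC P r (j + 1) ⊓ ⨅ α : {α // α ∉ S}, P'.comap (LinearMap.proj α.1)) (KC P' r (j + 1)) ≤ S.card * L P P' := by
    intro S
    induction S using Finset.induction_on with
    | empty =>
      simp only [Finset.card_empty, Nat.cast_zero, zero_mul, nonpos_iff_eq_zero]
      rw [L_eq_zero]
      rintro f ⟨hf, hf'⟩ α
      refine ⟨?_, (hf α).2⟩
      have := (Submodule.mem_iInf _).1 hf' ⟨α, by simp⟩
      simpa using this
    | insert a S ha ih =>
      rw [Finset.card_insert_of_notMem ha, Nat.cast_succ, add_mul, one_mul, add_comm _ (L P P')]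
      refine (L_split (P'.comap (LinearMap.proj a))).trans (add_le_add ?_ (le_trans ?_ ih))
      · refine L_map (LinearMap.proj a) (fun f hf => (hf.1 a).1) fun f _ h => h
      · refine L_mono ?_ fun _ _ h => h
        rintro f ⟨⟨hf, hf'⟩, hfa⟩
        refine ⟨hf, (Submodule.mem_iInf _).2 ?_⟩
        rintro ⟨α, hα⟩
        by_cases hαa : α = a
        · subst hαa; exact hfa
        · exact (Submodule.mem_iInf _).1 hf' ⟨α, by simp [hαa, hα]⟩
  refine le_trans (L_mono ?_ ?_) (key (mi r j))
  · rintro f ⟨hf, -⟩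
    refine ⟨hf, (Submodule.mem_iInf _).2 ?_⟩
    rintro ⟨α, hα⟩
    have : f α = 0 := (hf α).2 fun h => hα (mem_mi.2 (by omega))
    simp [this]
  · exact fun f _ hf => Submodule.mem_sup_right hf

/-- With coefficients in a line on which all operators vanish, the differential is zero, so homology is
as large as the space of chains. -/
lemma card_le_th {P : Submodule k V} (ε : V →ₗ[k] k) (hε : ∀ l m, ∀ x ∈ P, ε (T l m x) = 0)
    (hP : Stab T P) {z : V} (hz : z ∈ P) (hz' : ε z ≠ 0) (j : ℕ) :
    ((mi r j).card : ℕ∞) ≤ th T P (P ⊓ LinearMap.ker ε) j := by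
  have hd : ∀ i, ∀ f ∈ KC P r (i + 1), kdel T f ∈ KC (P ⊓ LinearMap.ker ε) r i := by
    intro i f hf α
    refine ⟨⟨(KC_Cx hP i f hf α).1, ?_⟩, (KC_Cx hP i f hf α).2⟩
    change ε (kdel T f α) = 0
    rw [kdel_apply, map_sum]
    refine Finset.sum_eq_zero fun l _ => ?_
    rw [map_smul, hε _ _ _ (hf _).1, smul_zero]
  let F : (mi r j → k) →ₗ[k] ((Fin r → ℕ) → V) :=
    LinearMap.pi fun α => if h : α ∈ mi r j then (LinearMap.proj ⟨α, h⟩).smulRight z else 0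
  have hF : ∀ v α (h : α ∈ mi r j), F v α = v ⟨α, h⟩ • z := by
    intro v α h
    simp [F, h]
  have hF' : ∀ v α, α ∉ mi r j → F v α = 0 := by
    intro v α h
    simp [F, h]
  have h0 : L (⊤ : Submodule k (mi r j → k)) ⊥ = (mi r j).card := by
    rw [L]
    have e : (⊤ : Submodule k (mi r j → k)).map (⊥ : Submodule k (mi r j → k)).mkQ = ⊤ := by
      rw [Submodule.map_top, Submodule.range_mkQ]
    rw [e, (Submodule.topEquiv).length_eq, (Submodule.quotEquivOfEqBot _ rfl).length_eq]
    rw [Module.length_eq_finrank]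
    simp
  rw [← h0]
  refine L_map F ?_ ?_
  · intro v _
    have : F v ∈ KC P r (j + 1) := by
      intro α
      by_cases h : α ∈ mi r j
      · rw [hF v α h]
        exact ⟨P.smul_mem _ hz, fun h' => absurd (mem_mi.1 h) (by omega)⟩
      · rw [hF' v α h]
        exact ⟨zero_mem _, fun _ => rfl⟩
    exact ⟨this, hd _ _ this⟩
  · intro v _ hv
    obtain ⟨a, ha, hb⟩ := mem_bd.1 hv
    rw [Submodule.mem_bot]
    funext ⟨α, hα⟩
    have h1 := ((add_mem hb (hd _ _ ha)) α).1.2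
    simp only [sub_add_cancel] at h1
    change ε (F v α) = 0 at h1
    rw [hF v α hα, map_smul, smul_eq_mul] at h1
    simpa [hz'] using h1

variable {u : Fin r → ℕ → V →ₗ[k] V}

/-- The contracting homotopy in direction `l`. -/
def kS (u : Fin r → ℕ → V →ₗ[k] V) (l : Fin r) (f : (Fin r → ℕ) → V) (α : Fin r → ℕ) : V :=
  if α l = 0 then 0 else sg k l α • u l (α l) (f (α - Pi.single l 1))

lemma kS_add (l : Fin r) (f : (Fin r → ℕ) → V) (β : Fin r → ℕ) :
    kS u l f (β + Pi.single l 1) = sg k l β • u l (β l + 1) (f β) := by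
  rw [kS, if_neg (by simp), sg_add, if_neg (lt_irrefl _)]
  simp

lemma kS_zero (l : Fin r) (f : (Fin r → ℕ) → V) {α : Fin r → ℕ} (h : α l = 0) : kS u l f α = 0 := if_pos h

lemma exists_sub_single (l : Fin r) {α : Fin r → ℕ} (h : α l ≠ 0) : ∃ β : Fin r → ℕ, α = β + Pi.single l 1 := by
  refine ⟨α - Pi.single l 1, ?_⟩
  funext i
  by_cases hi : i = l
  · subst hi; simp; omega
  · simp [hi]

/-- The homotopy formula: if the `u l m` contract the complex of direction `l` and commute with the other
directions, they contract the total complex. -/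
lemma homotopy (hu : ∀ l l' m m' x, l ≠ l' → u l m (T l' m' x) = T l' m' (u l m x))
    (l : Fin r) (f : (Fin r → ℕ) → V) (α : Fin r → ℕ) :
    kdel T (kS u l f) α + kS u l (kdel T f) α =
      T l (α l + 1) (u l (α l + 1) (f α)) + if α l = 0 then 0 else u l (α l) (T l (α l) (f α)) := by
  by_cases h0 : α l = 0
  · rw [if_pos h0, kS_zero l _ h0, add_zero, add_zero, kdel_apply, Finset.sum_eq_single l]
    · rw [kS_add, map_smul, smul_smul, sg_mul_self, one_smul]
    · intro m _ hm
      rw [kS_zero l f (by simp [h0, Ne.symm hm]), map_zero, smul_zero]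
    · simp
  · rw [if_neg h0]
    obtain ⟨β, rfl⟩ := exists_sub_single l h0
    rw [kS_add, kdel_apply, kdel_apply, map_sum, Finset.smul_sum, ← Finset.sum_add_distrib,
      Finset.sum_eq_single l]
    · rw [kS_add, map_smul, smul_smul, sg_mul_self, one_smul, map_smul, smul_smul, sg_mul_self, one_smul]
      simp
    · intro m _ hm
      have e1 : (β + Pi.single l 1 : Fin r → ℕ) m = β m := by simp [hm]
      have e2 : (β + Pi.single m 1 : Fin r → ℕ) l = β l := by simp [Ne.symm hm]
      rw [add_right_comm, kS_add, e1, e2, map_smul, map_smul, hu _ _ _ _ _ (Ne.symm hm), smul_smul, smul_smul,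
        ← add_smul, sg_add, sg_add]
      rcases lt_or_gt_of_ne hm with h | h
      · rw [if_pos h, if_neg h.le.not_gt, mul_neg, mul_comm (sg k l β), neg_add_cancel, zero_smul]
      · rw [if_pos h, if_neg h.le.not_gt, neg_mul, mul_comm (sg k l β), neg_add_cancel, zero_smul]
    · simp

/-- A relatively free module has no higher homology. -/
lemma th_free (hT2 : ∀ l m x, T l (m + 1) (T l (m + 2) x) = 0)
    (hTc : ∀ l l' m m' x, l ≠ l' → T l m (T l' m' x) = T l' m' (T l m x))
    (hu : ∀ l l' m m' x, l ≠ l' → u l m (T l' m' x) = T l' m' (u l m x)) {P P' : Submodule k V}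
    (hP : Stab T P) (hP' : Stab T P') (huP : Stab u P) (huP' : Stab u P')
    (hc : ∀ l m, ∀ a ∈ P, a - (T l (m + 1) (u l (m + 1) a) + u l m (T l m a)) ∈ P') (j : ℕ) :
    th T P P' (j + 1) = 0 := by
  rw [th, h_eq_zero]
  intro f hf hdf
  have key : ∀ S : Finset (Fin r), ∃ f' ∈ KC P r (j + 3), ∃ g ∈ KC P r (j + 2), kdel T g ∈ KC P' r (j + 1) ∧
      f - kdel T f' - g ∈ KC P' r (j + 2) ∧ ∀ l ∈ S, ∀ α, α l ≠ 0 → g α = 0 := by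
    intro S
    induction S using Finset.induction_on with
    | empty => exact ⟨0, zero_mem _, f, hf, hdf, by simp, by simp⟩
    | insert l S hl ih =>
      obtain ⟨f', hf', g, hg, hdg, hfg, hS⟩ := ih
      have hSg : kS u l g ∈ KC P r (j + 3) := by
        intro α
        by_cases h0 : α l = 0
        · rw [kS_zero l g h0]; exact ⟨zero_mem _, fun _ => rfl⟩
        · obtain ⟨β, rfl⟩ := exists_sub_single l h0
          rw [kS_add, deg_add]
          refine ⟨P.smul_mem _ (huP _ _ _ (hg β).1), fun h => ?_⟩
          rw [(hg β).2 (by omega)]; simp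
      have hSd : kS u l (kdel T g) ∈ KC P' r (j + 2) := by
        intro α
        by_cases h0 : α l = 0
        · rw [kS_zero l _ h0]; exact ⟨zero_mem _, fun _ => rfl⟩
        · obtain ⟨β, rfl⟩ := exists_sub_single l h0
          rw [kS_add, deg_add]
          refine ⟨P'.smul_mem _ (huP' _ _ _ (hdg β).1), fun h => ?_⟩
          rw [(hdg β).2 (by omega)]; simp
      set g' : (Fin r → ℕ) → V := fun α => if α l = 0 then u l 0 (T l 0 (g α)) else 0 with hg'
      have hg'P : g' ∈ KC P r (j + 2) := by
        intro α
        simp only [hg']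
        split_ifs with h
        · exact ⟨huP _ _ _ (hP _ _ _ (hg α).1), fun h' => by rw [(hg α).2 h']; simp⟩
        · exact ⟨zero_mem _, fun _ => rfl⟩
      have hdiff : g - kdel T (kS u l g) - g' ∈ KC P' r (j + 2) := by
        have h1 : g - kdel T (kS u l g) - kS u l (kdel T g) - g' ∈ KC P' r (j + 2) := by
          intro α
          have e : (g - kdel T (kS u l g) - kS u l (kdel T g) - g') α =
              g α - (T l (α l + 1) (u l (α l + 1) (g α)) + u l (α l) (T l (α l) (g α))) := by
            have := homotopy hu l g α
            simp only [Pi.sub_apply, hg']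
            rw [sub_sub (g α), this]
            split_ifs with h
            · rw [h]; abel
            · abel
          rw [e]
          exact ⟨hc l (α l) _ (hg α).1, fun h => by rw [(hg α).2 h]; simp⟩
        have := add_mem h1 hSd
        convert this using 1; abel
      refine ⟨f' + kS u l g, add_mem hf' hSg, g', hg'P, ?_, ?_, ?_⟩
      · have h2 := sub_mem hdg (KC_Cx hP' _ _ hdiff)
        rw [map_sub, map_sub, kdel_kdel hT2 hTc] at h2
        convert h2 using 1; abel
      · have := add_mem hfg hdiff
        rw [map_add]
        convert this using 1; abel
      · intro l' hl' α hα
        simp only [hg']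
        split_ifs with h
        · rcases Finset.mem_insert.1 hl' with rfl | h'
          · exact absurd h hα
          · rw [hS l' h' α hα]; simp
        · rfl
  obtain ⟨f', hf', g, hg, -, hfg, hS⟩ := key Finset.univ
  have hg0 : g = 0 := by
    funext α
    by_cases h : ∃ l, α l ≠ 0
    · obtain ⟨l, hl⟩ := h
      exact hS l (Finset.mem_univ _) α hl
    · push Not at h
      refine (hg α).2 ?_
      simp [deg, h]
  refine ⟨f', hf', ?_⟩
  simpa [hg0] using hfg

end

/-! ### Nakayama's lemma and multi-indices -/

section
variable {k : Type*} [Field k] {V : Type*} [AddCommGroup V] [Module k V] {r : ℕ}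
variable {T u : Fin r → ℕ → V →ₗ[k] V} {del : V →ₗ[k] V}

lemma kdel_comp (hdT : ∀ l m x, del (T l m x) = T l m (del x)) (f : (Fin r → ℕ) → V) :
    (fun α => del (kdel T f α)) = kdel T fun α => del (f α) := by
  funext α
  simp [kdel_apply, hdT]

/-- Lifting chains along a surjection modulo a submodule. -/
lemma KC_lift {P S : Submodule k V} {j : ℕ} {f : (Fin r → ℕ) → V} (hf : f ∈ KC (P.map del ⊔ S) r j) :
    ∃ g ∈ KC P r j, (f - fun α => del (g α)) ∈ KC S r j := by
  have hx : ∀ x ∈ P.map del ⊔ S, ∃ a ∈ P, x - del a ∈ S := by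
    intro x hx
    obtain ⟨_, ⟨a, ha, rfl⟩, b, hb, rfl⟩ := Submodule.mem_sup.1 hx
    exact ⟨a, ha, by simpa using hb⟩
  choose a ha hb using fun α => hx (f α) (hf α).1
  classical
  refine ⟨fun α => if deg α + 1 = j then a α else 0, fun α => ?_, fun α => ?_⟩
  · simp only
    split_ifs with h
    · exact ⟨ha α, fun h' => absurd h h'⟩
    · exact ⟨zero_mem _, fun _ => rfl⟩
  · simp only [Pi.sub_apply]
    split_ifs with h
    · exact ⟨hb α, fun h' => absurd h h'⟩
    · rw [(hf α).2 h]; simp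

/-- Together with `le_th_bd`: `del` identifies `P / (P ∩ del⁻¹ S)` with `(del P + S) / S`. -/
lemma th_bd_le (hdT : ∀ l m x, del (T l m x) = T l m (del x)) {P S : Submodule k V} (hP : Stab T P)
    (hS : Stab T S) (j : ℕ) : th T (P.map del ⊔ S) S j ≤ th T P (P ⊓ S.comap del) j := by
  refine L_rel ((KC S r (j + 1)).comap (LinearMap.fst k _ _ -
    (LinearMap.pi fun α => del ∘ₗ LinearMap.proj α) ∘ₗ LinearMap.snd k _ _)) ?_ ?_
  · rintro f ⟨hf, hdf⟩
    obtain ⟨g, hg, hfg⟩ := KC_lift hf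
    refine ⟨g, ⟨hg, ?_⟩, hfg⟩
    have h1 : kdel T f - kdel T (f - fun α => del (g α)) ∈ KC S r j := sub_mem hdf (KC_Cx hS _ _ hfg)
    rw [map_sub, sub_sub_cancel, ← kdel_comp hdT] at h1
    exact fun α => ⟨⟨(KC_Cx hP _ _ hg α).1, (h1 α).1⟩, (KC_Cx hP _ _ hg α).2⟩
  · rintro f g - hfg hg
    obtain ⟨a, ha, hb⟩ := mem_bd.1 hg
    refine mem_bd.2 ⟨fun α => del (a α), fun α => ⟨Submodule.mem_sup_left ⟨_, (ha α).1, rfl⟩, fun h => by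
      simp only [(ha α).2 h, map_zero]⟩, ?_⟩
    rw [← kdel_comp hdT]
    have h2 : (fun α => del ((g - kdel T a) α)) ∈ KC S r (j + 1) := fun α => ⟨(hb α).1.2, fun h => by
      simp only [(hb α).2 h, map_zero]⟩
    have h3 : (f - fun α => del (g α)) ∈ KC S r (j + 1) := hfg
    have := add_mem h3 h2
    convert this using 1
    funext α
    simp

lemma le_th_bd (hdT : ∀ l m x, del (T l m x) = T l m (del x)) {P S : Submodule k V} (hP : Stab T P)
    (hS : Stab T S) (j : ℕ) : th T P (P ⊓ S.comap del) j ≤ th T (P.map del ⊔ S) S j := by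
  refine L_map (LinearMap.pi fun α => del ∘ₗ LinearMap.proj α) ?_ ?_
  · rintro f ⟨hf, hdf⟩
    have e : (LinearMap.pi fun α => del ∘ₗ LinearMap.proj α) f = fun α => del (f α) := rfl
    rw [e]
    constructor
    · exact fun α => ⟨Submodule.mem_sup_left ⟨_, (hf α).1, rfl⟩, fun h => by simp only [(hf α).2 h, map_zero]⟩
    · change kdel T _ ∈ KC S r j
      rw [← kdel_comp hdT]
      exact fun α => ⟨(hdf α).1.2, fun h => by simp only [(hdf α).2 h, map_zero]⟩
  · rintro f ⟨hf, hdf⟩ hb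
    obtain ⟨g, hg, hfg⟩ := mem_bd.1 hb
    obtain ⟨a, ha, hga⟩ := KC_lift hg
    refine mem_bd.2 ⟨a, ha, fun α => ⟨⟨sub_mem (hf α).1 (KC_Cx hP _ _ ha α).1, ?_⟩, fun h => ?_⟩⟩
    · have h1 := add_mem hfg (KC_Cx hS _ _ hga)
      rw [map_sub, sub_add_sub_cancel, ← kdel_comp hdT] at h1
      have := (h1 α).1
      change del (f α - kdel T a α) ∈ S
      rw [map_sub]; exact this
    · exact (sub_mem hf (KC_Cx hP _ _ ha) α).2 h

/-- Nakayama's lemma for commuting nilpotent operators. -/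
lemma nakayama {D : Fin r → Module.End k V} {p : ℕ} (hp : ∀ l, D l ^ p = 0)
    (hDc : ∀ l l' x, D l (D l' x) = D l' (D l x)) {Z Y : Submodule k V}
    (hZ : ∀ l, ∀ x ∈ Z, D l x ∈ Z) (hY : ∀ l, ∀ x ∈ Y, D l x ∈ Y) (h : Z ≤ (⨆ l, Z.map (D l)) ⊔ Y) : Z ≤ Y := by
  have key : ∀ S : Finset (Fin r), Z ≤ (⨆ l ∈ S, Z.map (D l)) ⊔ Y → Z ≤ Y := by
    intro S
    induction S using Finset.induction_on with
    | empty => simp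
    | insert l S hl ih =>
      intro h
      apply ih
      set W := (⨆ l ∈ S, Z.map (D l)) ⊔ Y with hW
      have hWst : ∀ x ∈ W, D l x ∈ W := by
        have : W ≤ W.comap (D l) := by
          refine sup_le (iSup₂_le fun l' hl' => ?_) fun x hx => Submodule.mem_sup_right (hY _ _ hx)
          rintro _ ⟨x, hx, rfl⟩
          refine Submodule.mem_sup_left (Submodule.mem_iSup_of_mem l' (Submodule.mem_iSup_of_mem hl' ?_))
          exact ⟨D l x, hZ _ _ hx, hDc _ _ _⟩
        exact this
      have h1 : Z ≤ Z.map (D l) ⊔ W := by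
        refine h.trans ?_
        rw [Finset.iSup_insert, sup_assoc]
      have h2 : ∀ i : ℕ, ∀ z ∈ Z, ∃ z' ∈ Z, z - (D l ^ i) z' ∈ W := by
        intro i
        induction i with
        | zero => exact fun z hz => ⟨z, hz, by simp⟩
        | succ i ih' =>
          intro z hz
          obtain ⟨z', hz', hw⟩ := ih' z hz
          obtain ⟨_, ⟨y, hy, rfl⟩, w, hw', e⟩ := Submodule.mem_sup.1 (h1 hz')
          refine ⟨y, hy, ?_⟩
          have hpow : ∀ i : ℕ, ∀ x ∈ W, (D l ^ i) x ∈ W := by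
            intro i
            induction i with
            | zero => simp
            | succ i ih => intro x hx; rw [pow_succ']; exact hWst _ (ih x hx)
          have := add_mem hw (hpow i w hw')
          rw [← e] at this
          convert this using 1
          rw [pow_succ, Module.End.mul_apply, map_add]; abel
      intro z hz
      obtain ⟨z', -, hw⟩ := h2 p z hz
      simpa [hp l] using hw
  exact key Finset.univ (by simpa using h)

lemma mi_mono (hr : 0 < r) {i j : ℕ} (hij : i ≤ j) : (mi r i).card ≤ (mi r j).card := by
  induction hij with
  | refl => rfl
  | step _ ih =>
    refine ih.trans (Finset.card_le_card_of_injOn (fun α => α + Pi.single ⟨0, hr⟩ 1) ?_ ?_)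
    · intro α hα
      have := mem_mi.1 hα
      exact mem_mi.2 (by rw [deg_add, this])
    · intro α _ β _ e
      exact add_right_cancel e

/-- The recursion for the number of multi-indices of given degree. -/
lemma mi_succ (r j : ℕ) : (j + 1) * (mi (r + 1) (j + 1)).card = (r + 1 + j) * (mi (r + 1) j).card := by
  have hc : ∀ j, (mi (r + 1) j).card = (r + j).choose j := by
    intro j
    rw [mi, ← Finset.map_sym_eq_piAntidiag, Finset.card_map, Finset.sym_univ, Finset.card_univ,
      Sym.card_sym_eq_choose, Fintype.card_fin, show r + 1 + j - 1 = r + j by omega]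
  rw [hc, hc]
  have := Nat.add_one_mul_choose_eq (r + j) j
  rw [show r + (j + 1) = r + j + 1 by ring, mul_comm, ← this]
  ring

end

/-! ### The rank bound for relatively free pairs -/

section
variable {k : Type*} [Field k] {V : Type*} [AddCommGroup V] [Module k V] {r : ℕ}

/-- The hypotheses of the spectral sequence argument: the pair of complexes `(A, B)` carries
commuting nilpotent operators `D l = T l 1`, it is relatively free (`u` provides contracting
homotopies), and the complex of norms is acyclic in high degrees. -/
structure ALData (T u : Fin r → ℕ → V →ₗ[k] V) (NQ del : V →ₗ[k] V) (A B : ℕ → Submodule k V) (p N : ℕ) :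
    Prop where
  hdel : ∀ x, del (del x) = 0
  hA : Cx del A
  hB : Cx del B
  hBA : B ≤ A
  h0 : A 0 ≤ B 0
  hT2 : ∀ l m x, T l (m + 1) (T l (m + 2) x) = 0
  hTc : ∀ l l' m m' x, l ≠ l' → T l m (T l' m' x) = T l' m' (T l m x)
  hu : ∀ l l' m m' x, l ≠ l' → u l m (T l' m' x) = T l' m' (u l m x)
  hdT : ∀ l m x, del (T l m x) = T l m (del x)
  hTA : ∀ n, Stab T (A n)
  hTB : ∀ n, Stab T (B n)
  huA : ∀ n, Stab u (A n)
  huB : ∀ n, Stab u (B n)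
  hc : ∀ n l m, ∀ a ∈ A n, a - (T l (m + 1) (u l (m + 1) a) + u l m (T l m a)) ∈ B n
  hTp : ∀ l m, ∃ e, ∀ x, T l m x = T l 1 (((T l 1 : Module.End k V) ^ e) x)
  hp : ∀ l, (T l 1 : Module.End k V) ^ p = 0
  hNT : ∀ l x, NQ (T l 1 x) = 0
  hNB : ∀ n, ∀ b ∈ B n, NQ b ∈ B n
  hNdel : ∀ x, NQ (del x) = del (NQ x)
  hNA : ∀ n, ∀ a ∈ A n, NQ a ∈ B n → a ∈ (⨆ l, (A n).map (T l 1)) ⊔ B n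
  hNv : ∀ n, N ≤ n → ∀ a ∈ A (n + 1), del (NQ a) ∈ B n → ∃ a' ∈ A (n + 2), NQ (a - del a') ∈ B (n + 1)
  hh : ∀ n, N ≤ n → h del A B n = 0

namespace ALData
variable {T u : Fin r → ℕ → V →ₗ[k] V} {NQ del : V →ₗ[k] V} {A B : ℕ → Submodule k V} {p N : ℕ}
  (H : ALData T u NQ del A B p N)
include H

lemma th_AB (n j : ℕ) : th T (A n) (B n) (j + 1) = 0 :=
  th_free H.hT2 H.hTc H.hu (H.hTA n) (H.hTB n) (H.huA n) (H.huB n) (H.hc n) j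

lemma kk (f : (Fin r → ℕ) → V) : kdel T (kdel T f) = 0 := kdel_kdel H.hT2 H.hTc f

lemma stab_Z (q : ℕ) : Stab T (A (q + 1) ⊓ (B q).comap del) := by
  rintro l m x ⟨hx, hx'⟩
  refine ⟨H.hTA _ _ _ _ hx, ?_⟩
  change del _ ∈ B q
  rw [H.hdT]; exact H.hTB _ _ _ _ hx'

lemma stab_Bd (q : ℕ) : Stab T ((A (q + 2)).map del ⊔ B (q + 1)) := by
  intro l m x hx
  obtain ⟨a, ha, hb⟩ := mem_bd.1 hx
  refine mem_bd.2 ⟨T l m a, H.hTA _ _ _ _ ha, ?_⟩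
  rw [H.hdT, ← map_sub]
  exact H.hTB _ _ _ _ hb

lemma Bd_le_Z (q : ℕ) : (A (q + 2)).map del ⊔ B (q + 1) ≤ A (q + 1) ⊓ (B q).comap del := by
  refine sup_le ?_ fun b hb => ⟨H.hBA _ hb, H.hB _ _ hb⟩
  rintro _ ⟨a, ha, rfl⟩
  refine ⟨H.hA _ _ ha, ?_⟩
  change del _ ∈ B q
  rw [H.hdel]; exact zero_mem _

lemma B_le_Z (q : ℕ) : B (q + 1) ≤ A (q + 1) ⊓ (B q).comap del := le_sup_right.trans (H.Bd_le_Z q)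

/-- Up to the lowest degree with homology, the relative cycles have no higher homology: inductively they
are quotients of relatively free modules by cycles of lower degree. -/
lemma th_Z {s : ℕ} (hs : ∀ q < s, h del A B q = 0) (q : ℕ) (hq : q ≤ s) (j : ℕ) :
    th T (A (q + 1) ⊓ (B q).comap del) (B (q + 1)) (j + 1) = 0 := by
  induction q generalizing j with
  | zero =>
    have e : A (0 + 1) ⊓ (B 0).comap del = A (0 + 1) :=
      inf_eq_left.2 fun a ha => H.h0 (H.hA _ _ ha)
    rw [e]; exact H.th_AB _ _
  | succ q ih =>
    have h1 := h_triple2 (A := KC (A (q + 2)) r) (B := KC (A (q + 2) ⊓ (B (q + 1)).comap del) r)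
      (C := KC (B (q + 2)) r) H.kk (KC_mono inf_le_left) (KC_mono (H.B_le_Z (q + 1))) (j + 1)
    have h2 : h (kdel T) (KC (A (q + 2)) r) (KC (A (q + 2) ⊓ (B (q + 1)).comap del) r) (j + 1 + 1) = 0 := by
      have h3 := le_th_bd (P := A (q + 2)) (S := B (q + 1)) H.hdT (H.hTA _) (H.hTB _) (j + 1 + 1)
      have e : (A (q + 2)).map del ⊔ B (q + 1) = A (q + 1) ⊓ (B q).comap del :=
        le_antisymm (H.Bd_le_Z q) (L_eq_zero.1 (hs q (by omega)))
      rw [e, ih (by omega)] at h3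
      exact nonpos_iff_eq_zero.1 h3
    have h4 : h (kdel T) (KC (A (q + 2)) r) (KC (B (q + 2)) r) (j + 1) = 0 := H.th_AB _ _
    rw [h2, h4, add_zero] at h1
    exact nonpos_iff_eq_zero.1 h1

lemma th_Bd_step (q j : ℕ) : th T ((A (q + 2)).map del ⊔ B (q + 1)) (B (q + 1)) (j + 1) ≤
    th T (A (q + 2) ⊓ (B (q + 1)).comap del) (B (q + 2)) j := by
  refine (th_bd_le H.hdT (H.hTA _) (H.hTB _) _).trans ?_
  have h1 := h_triple3 (A := KC (A (q + 2)) r) (B := KC (A (q + 2) ⊓ (B (q + 1)).comap del) r)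
      (C := KC (B (q + 2)) r) H.kk (KC_mono inf_le_left) (KC_mono (H.B_le_Z (q + 1))) j
  have h4 : h (kdel T) (KC (A (q + 2)) r) (KC (B (q + 2)) r) (j + 1) = 0 := H.th_AB _ _
  rw [h4, zero_add] at h1
  exact h1

lemma th_split (q j : ℕ) {P : Submodule k V} (hP : (A (q + 2)).map del ⊔ B (q + 1) ≤ P) :
    th T P (B (q + 1)) j ≤ (mi r j).card * L P ((A (q + 2)).map del ⊔ B (q + 1)) +
      th T ((A (q + 2)).map del ⊔ B (q + 1)) (B (q + 1)) j :=
  (h_triple1 H.kk (KC_mono hP) (KC_mono le_sup_right) j).trans (add_le_add (th_le _ _ _) le_rfl)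

/-- Beyond the range of the homology, the norm condition makes the boundaries relatively projective. -/
lemma Z_inter (q : ℕ) (hq : N ≤ q) {z : V} (hz : z ∈ A (q + 1)) (hz' : del z ∈ B q)
    (hzD : z ∈ (⨆ l, (A (q + 1)).map (T l 1)) ⊔ B (q + 1)) :
    ∃ w : Fin r → V, (∀ l, w l ∈ A (q + 1) ⊓ (B q).comap del) ∧ z - ∑ l, T l 1 (w l) ∈ B (q + 1) := by
  obtain ⟨a, ha, hb⟩ := h_eq_zero.1 (H.hh q hq) z hz hz'
  have hNz : NQ z ∈ B (q + 1) := by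
    have : (⨆ l, (A (q + 1)).map (T l 1)) ⊔ B (q + 1) ≤ (B (q + 1)).comap NQ := by
      refine sup_le (iSup_le fun l => ?_) fun b hb => H.hNB _ _ hb
      rintro _ ⟨x, -, rfl⟩
      change NQ _ ∈ B (q + 1)
      rw [H.hNT]; exact zero_mem _
    exact this hzD
  have hNa : del (NQ a) ∈ B (q + 1) := by
    have := sub_mem hNz (H.hNB _ _ hb)
    rw [map_sub, sub_sub_cancel, H.hNdel] at this
    exact this
  obtain ⟨a', ha', hNa'⟩ := H.hNv (q + 1) (by omega) a ha hNa
  have h1 := H.hNA _ _ (sub_mem ha (H.hA _ _ ha')) hNa'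
  obtain ⟨x, hx, b, hb', e⟩ := Submodule.mem_sup.1 h1
  obtain ⟨y, hy⟩ : ∃ y : Fin r → V, (∀ l, y l ∈ A (q + 2)) ∧ x = ∑ l, T l 1 (y l) := by
    have hle : (⨆ l, (A (q + 2)).map (T l 1)) ≤ ((Submodule.pi univ fun _ : Fin r => A (q + 2)).map
        (∑ l, T l 1 ∘ₗ LinearMap.proj l)) := by
      refine iSup_le fun l => ?_
      rintro _ ⟨v, hv, rfl⟩
      refine ⟨Pi.single l v, fun i _ => ?_, ?_⟩
      · by_cases hi : i = l
        · subst hi; simpa using hv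
        · simp [hi]
      · simp only [LinearMap.sum_apply, LinearMap.comp_apply, LinearMap.proj_apply]
        rw [Finset.sum_eq_single l]
        · simp
        · intro i _ hi; simp [hi]
        · simp
    obtain ⟨y, hy, rfl⟩ := hle hx
    exact ⟨y, fun l => hy l (mem_univ _), by simp⟩
  refine ⟨fun l => del (y l), fun l => ⟨H.hA _ _ (hy.1 l), ?_⟩, ?_⟩
  · change del _ ∈ B q
    rw [H.hdel]; exact zero_mem _
  · have h2 : del a = ∑ l, T l 1 (del (y l)) + del b := by
      have := congrArg del e
      rw [map_sub, H.hdel, sub_zero, map_add, hy.2, map_sum] at this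
      rw [← this]
      simp [H.hdT]
    have := add_mem hb (H.hB _ _ hb')
    convert this using 1
    rw [h2]; abel

/-- Above degree `N` the relative boundaries have no first homology, since norms are acyclic there. -/
lemma th_one (q : ℕ) (hq : N ≤ q + 1) : th T ((A (q + 2)).map del ⊔ B (q + 1)) (B (q + 1)) 1 = 0 := by
  refine nonpos_iff_eq_zero.1 ((th_bd_le H.hdT (H.hTA _) (H.hTB _) _).trans ?_)
  rw [← H.th_AB (q + 2) 0]
  refine h_triple3' (KC_mono inf_le_left) (KC_mono (H.B_le_Z (q + 1))) 0 ?_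
  intro f hf hdf
  have hz := (hdf 0).1
  have e0 : ∀ g : (Fin r → ℕ) → V, kdel T g 0 = ∑ l, T l 1 (g (Pi.single l 1)) := by
    intro g
    rw [kdel_apply]
    refine Finset.sum_congr rfl fun l _ => ?_
    simp [sg]
  obtain ⟨w, hw, hzw⟩ := H.Z_inter (q + 1) hq (z := kdel T f 0) hz.1 hz.2 (by
    rw [e0]
    refine Submodule.mem_sup_left (sum_mem fun l _ => Submodule.mem_iSup_of_mem l ⟨_, (hf _).1, rfl⟩))
  let b : (Fin r → ℕ) → V := fun α => if deg α = 1 then ∑ l, if α l = 1 then w l else 0 else 0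
  have hb : b ∈ KC (A (q + 2) ⊓ (B (q + 1)).comap del) r 2 := by
    intro α
    simp only [b]
    split_ifs with h
    · refine ⟨sum_mem fun l _ => ?_, fun h' => absurd h (by omega)⟩
      split_ifs
      · exact hw l
      · exact zero_mem _
    · exact ⟨zero_mem _, fun _ => rfl⟩
  have hbe : ∀ l, b (Pi.single l 1) = w l := by
    intro l
    have : deg (Pi.single l 1 : Fin r → ℕ) = 1 := by
      simp [deg]
    simp only [b, this, if_true]
    rw [Finset.sum_eq_single l]
    · simp
    · intro i _ hi; simp [hi]
    · simp
  refine ⟨b, hb, fun α => ?_⟩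
  by_cases hα : α = 0
  · subst hα
    refine ⟨?_, fun h => (h (by simp [deg])).elim⟩
    simp only [Pi.sub_apply]
    rw [e0 b]
    simp only [hbe]
    exact hzw
  · have hd : deg α + 1 ≠ 0 + 1 := by
      intro h
      apply hα
      have : deg α = 0 := by omega
      funext i
      simpa using (Finset.sum_eq_zero_iff.1 this) i (Finset.mem_univ _)
    have : (kdel T f - kdel T b) α = 0 := by
      simp only [Pi.sub_apply]
      rw [(KC_Cx (H.hTA _) _ _ hf α).2 hd, (KC_Cx (H.stab_Z _) _ _ hb α).2 hd, sub_zero]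
    rw [this]
    exact ⟨zero_mem _, fun _ => rfl⟩

/-- Dimension shifting from degree `N` down to `q`, where each step costs one homology group. -/
lemma th_Bd (hr : 0 < r) (i : ℕ) : ∀ q, N ≤ q + i + 1 → i ≤ N →
    th T ((A (q + 2)).map del ⊔ B (q + 1)) (B (q + 1)) (i + 1) ≤
      (mi r (N + 1)).card * ∑ l ∈ Finset.range i, h del A B (q + 1 + l) := by
  induction i with
  | zero => intro q hq _; rw [H.th_one q (by omega)]; simp
  | succ i ih =>
    intro q hq hi
    refine (H.th_Bd_step q (i + 1)).trans ((H.th_split (q + 1) (i + 1) (H.Bd_le_Z _)).trans ?_)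
    rw [Finset.sum_range_succ', mul_add, add_comm]
    refine add_le_add ((ih (q + 1) (by omega) (by omega)).trans (le_of_eq ?_)) ?_
    · congr 1
      refine Finset.sum_congr rfl fun l _ => ?_
      congr 1; omega
    · refine mul_le_mul' ?_ le_rfl
      exact_mod_cast mi_mono hr (by omega)

/-- The rank bound: a relatively free pair whose total homology has dimension at most `b + 1`
only admits a bounded number of operators. -/
theorem rank_le (hr : 0 < r) {b : ℕ} (hb : ∀ m, ∑ i ∈ Finset.range m, h del A B i ≤ b + 1)
    (hne : ∃ n, h del A B n ≠ 0) : r + N + 1 ≤ b * (N + 2) := by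
  classical
  -- `s` is the lowest degree with homology
  obtain ⟨s, hs, hmin⟩ : ∃ s, h del A B s ≠ 0 ∧ ∀ q < s, h del A B q = 0 :=
    ⟨Nat.find hne, Nat.find_spec hne, fun q hq => not_not.1 (Nat.find_min hne hq)⟩
  set Z := A (s + 1) ⊓ (B s).comap del with hZ
  set Y := (A (s + 2)).map del ⊔ B (s + 1) with hY
  -- Nakayama: the homology in degree `s` has nonzero coinvariants, detected below by `ε`
  have hnot : ¬ Z ≤ (⨆ l, Z.map (T l 1)) ⊔ Y := by
    intro hle
    refine hs (L_eq_zero.2 (nakayama (D := fun l => T l 1) H.hp ?_ (fun l => H.stab_Z s l 1)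
      (fun l => H.stab_Bd s l 1) hle))
    intro l l' x
    by_cases hl : l = l'
    · rw [hl]
    · exact H.hTc _ _ _ _ _ hl
  obtain ⟨z, hz, hzn⟩ := Set.not_subset.1 hnot
  obtain ⟨ε, hεz, hεY⟩ := Submodule.exists_le_ker_of_notMem hzn
  have hεT : ∀ l m, ∀ x ∈ Z, ε (T l m x) = 0 := by
    intro l m x hx
    obtain ⟨e, he⟩ := H.hTp l m
    have hpow : ∀ e : ℕ, ((T l 1 : Module.End k V) ^ e) x ∈ Z := by
      intro e
      induction e with
      | zero => exact hx
      | succ e ih => rw [pow_succ']; exact H.stab_Z s l 1 _ ih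
    rw [he]
    exact hεY (Submodule.mem_sup_left (Submodule.mem_iSup_of_mem l ⟨_, hpow e, rfl⟩))
  set P := Z ⊓ LinearMap.ker ε with hP
  have hYP : Y ≤ P := le_inf (H.Bd_le_Z s) (le_sup_right.trans hεY)
  have hcard := card_le_th ε hεT (H.stab_Z s) hz hεz (N + 2)
  have h1 := h_triple3 (A := KC Z r) (B := KC P r) (C := KC (B (s + 1)) r) H.kk (KC_mono inf_le_left)
    (KC_mono (le_sup_right.trans hYP)) (N + 1)
  have h2 : h (kdel T) (KC Z r) (KC (B (s + 1)) r) (N + 1 + 1) = 0 := H.th_Z hmin s le_rfl _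
  rw [h2, zero_add] at h1
  have h3 := hcard.trans (h1.trans (H.th_split s (N + 1) hYP))
  have h4 : L P Y + 1 ≤ h del A B s := by
    have : h del A B s = L Z P + L P Y := L_add hYP inf_le_left
    rw [this, add_comm]
    refine add_le_add (Order.one_le_iff_ne_zero.2 fun h => ?_) le_rfl
    exact hεz (L_eq_zero.1 h hz).2
  have h5 := h3.trans (add_le_add le_rfl (H.th_Bd hr N s (by omega) le_rfl))
  rw [← mul_add] at h5
  have h6 : L P Y + ∑ l ∈ Finset.range N, h del A B (s + 1 + l) ≤ b := by
    have h7 := hb (s + 1 + N)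
    rw [Finset.sum_range_add, Finset.sum_range_succ] at h7
    have h8 : (L P Y + ∑ l ∈ Finset.range N, h del A B (s + 1 + l)) + 1 ≤ b + 1 := by
      refine le_trans ?_ h7
      rw [add_right_comm]
      exact add_le_add (h4.trans le_add_self) le_rfl
    exact (ENat.add_le_add_iff_right (by simp)).1 h8
  -- the numbers of multi-indices of degrees `N + 2` and `N + 1` have ratio `(r + N + 1) / (N + 2)`
  have h9 : (mi r (N + 2)).card ≤ (mi r (N + 1)).card * b := by
    exact_mod_cast h5.trans (mul_le_mul' le_rfl h6)
  obtain ⟨r, rfl⟩ : ∃ r', r = r' + 1 := ⟨r - 1, by omega⟩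
  have h10 := mi_succ r (N + 1)
  have hpos : 0 < (mi (r + 1) (N + 1)).card := by
    refine lt_of_lt_of_le ?_ (mi_mono (i := 0) hr (by omega))
    exact Finset.card_pos.2 ⟨0, mem_mi.2 (by simp [deg])⟩
  have h11 : (r + 1 + (N + 1)) * (mi (r + 1) (N + 1)).card ≤ (b * (N + 2)) * (mi (r + 1) (N + 1)).card := by
    rw [← h10]
    calc _ ≤ (N + 2) * ((mi (r + 1) (N + 1)).card * b) := Nat.mul_le_mul_left _ h9
      _ = _ := by ring
  exact le_of_mul_le_mul_right h11 hpos

end ALData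
end

/-! ### The algebra of Smith theory -/

section
variable {k : Type*} [Field k] {V : Type*} [AddCommGroup V] [Module k V]

/-- The algebra behind Smith theory for a group of prime order with generator `g`: `D = g - 1`,
`Nm = 1 + g + ⋯ + g ^ (p - 1)`, `E` the chains, `F` the chains on the fixed set, everything modulo `Nn`. -/
structure SmithData (del D Nm : V →ₗ[k] V) (E F Nn : ℕ → Submodule k V) (N0 : ℕ) : Prop where
  hdel : ∀ x, del (del x) = 0
  hE : Cx del E
  hF : Cx del F
  hN : Cx del Nn
  hFE : F ≤ E
  hNF : Nn ≤ F
  Ddel : ∀ x, D (del x) = del (D x)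
  Ndel : ∀ x, Nm (del x) = del (Nm x)
  DE : ∀ n, ∀ x ∈ E n, D x ∈ E n
  NE : ∀ n, ∀ x ∈ E n, Nm x ∈ E n
  DNn : ∀ n, ∀ x ∈ Nn n, D x ∈ Nn n
  NNn : ∀ n, ∀ x ∈ Nn n, Nm x ∈ Nn n
  DN : ∀ x, D (Nm x) = 0
  ND : ∀ x, Nm (D x) = 0
  DF : ∀ n, ∀ x ∈ F n, D x ∈ Nn n
  NF : ∀ n, ∀ x ∈ F n, Nm x ∈ Nn n
  kerD : ∀ n, ∀ a ∈ E n, D a ∈ Nn n → ∃ f ∈ F n, ∃ a' ∈ E n, a - f - Nm a' ∈ Nn n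
  kerN : ∀ n, ∀ a ∈ E n, Nm a ∈ Nn n → ∃ f ∈ F n, ∃ a' ∈ E n, a - f - D a' ∈ Nn n
  NaF : ∀ n, ∀ a ∈ E n, Nm a ∈ F n → Nm a ∈ Nn n
  DaF : ∀ n, ∀ a ∈ E n, D a ∈ F n → D a ∈ Nn n
  van : ∀ n, N0 ≤ n → ∀ a ∈ E (n + 1), del (Nm a) ∈ Nn n → ∃ a' ∈ E (n + 2), Nm a - del (Nm a') ∈ Nn (n + 1)
  hvan : ∀ n, N0 ≤ n → h del E Nn n = 0

/-- The subcomplex generated by the image of `R` modulo `Nn`. -/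
def im (R : V →ₗ[k] V) (E Nn : ℕ → Submodule k V) (n : ℕ) : Submodule k V := (E n).map R ⊔ Nn n

lemma mem_im {R : V →ₗ[k] V} {E Nn : ℕ → Submodule k V} {n : ℕ} {x : V} :
    x ∈ im R E Nn n ↔ ∃ a ∈ E n, x - R a ∈ Nn n := by
  rw [im, Submodule.mem_sup]
  constructor
  · rintro ⟨_, ⟨a, ha, rfl⟩, b, hb, rfl⟩
    exact ⟨a, ha, by simpa using hb⟩
  · rintro ⟨a, ha, h⟩
    exact ⟨R a, ⟨a, ha, rfl⟩, _, h, by abel⟩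

/-- One half of the Smith argument; it is applied to `(R, R') = (D, Nm)` and `(Nm, D)`. -/
structure HalfSmith (del R R' : V →ₗ[k] V) (E F Nn : ℕ → Submodule k V) : Prop where
  hdel : ∀ x, del (del x) = 0
  hE : Cx del E
  hF : Cx del F
  hN : Cx del Nn
  hFE : F ≤ E
  hNF : Nn ≤ F
  Rdel : ∀ x, R (del x) = del (R x)
  Rdel' : ∀ x, R' (del x) = del (R' x)
  RE' : ∀ n, ∀ x ∈ E n, R' x ∈ E n
  RNn : ∀ n, ∀ x ∈ Nn n, R x ∈ Nn n
  RR : ∀ x, R (R' x) = 0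
  RF : ∀ n, ∀ x ∈ F n, R x ∈ Nn n
  ker : ∀ n, ∀ a ∈ E n, R a ∈ Nn n → ∃ f ∈ F n, ∃ a' ∈ E n, a - f - R' a' ∈ Nn n
  RaF : ∀ n, ∀ a ∈ E n, R' a ∈ F n → R' a ∈ Nn n

namespace HalfSmith
variable {del R R' : V →ₗ[k] V} {E F Nn : ℕ → Submodule k V} (H : HalfSmith del R R' E F Nn)
include H

lemma im_le : im R' E Nn ≤ E := fun n => sup_le
  (by rintro _ ⟨a, ha, rfl⟩; exact H.RE' _ _ ha) ((H.hNF n).trans (H.hFE n))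

lemma im_Cx : Cx del (im R' E Nn) := by
  intro n x hx
  obtain ⟨a, ha, hb⟩ := mem_im.1 hx
  refine mem_im.2 ⟨del a, H.hE _ _ ha, ?_⟩
  rw [H.Rdel', ← map_sub]
  exact H.hN _ _ hb

lemma inter : im R' E Nn ⊓ F ≤ Nn := by
  rintro n x ⟨hx, hF⟩
  obtain ⟨a, ha, hb⟩ := mem_im.1 hx
  have h1 : R' a ∈ F n := by
    have := sub_mem hF (H.hNF _ hb)
    rwa [sub_sub_cancel] at this
  have := add_mem hb (H.RaF _ _ ha h1)
  rwa [sub_add_cancel] at this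

lemma quot_le (n : ℕ) : h del E (im R' E Nn ⊔ F) n ≤ h del (im R E Nn) Nn n := by
  have hkill : ∀ n, ∀ x ∈ (im R' E Nn ⊔ F) n, R x ∈ Nn n := by
    intro n x hx
    obtain ⟨y, hy, f, hf, rfl⟩ := Submodule.mem_sup.1 hx
    obtain ⟨a, ha, hb⟩ := mem_im.1 hy
    have := add_mem (H.RNn _ _ hb) (H.RF _ _ hf)
    rw [map_sub, H.RR, sub_zero] at this
    rwa [map_add]
  refine L_map R (fun a ha => ⟨mem_im.2 ⟨a, ha.1, by simp⟩, ?_⟩) ?_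
  · change del (R a) ∈ Nn n
    rw [← H.Rdel]; exact hkill _ _ ha.2
  · rintro a ⟨ha, -⟩ hb
    obtain ⟨y, hy, hb⟩ := mem_bd.1 hb
    obtain ⟨a', ha', hb'⟩ := mem_im.1 hy
    have h1 : R (a - del a') ∈ Nn (n + 1) := by
      have := add_mem hb (H.hN _ _ hb')
      rw [map_sub, H.Rdel]
      convert this using 1
      rw [map_sub]; abel
    obtain ⟨f, hf, a'', ha'', h2⟩ := H.ker _ _ (sub_mem ha (H.hE _ _ ha')) h1
    refine mem_bd.2 ⟨a', ha', ?_⟩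
    refine Submodule.mem_sup.2 ⟨_, mem_im.2 ⟨a'', ha'', h2⟩, f, hf, by abel⟩

/-- The Smith inequality in one degree. -/
lemma step (n : ℕ) : h del F Nn n + h del (im R' E Nn) Nn n ≤ h del (im R E Nn) Nn (n + 1) + h del E Nn n := by
  have h1 := h_add_le H.hdel H.im_Cx H.hF H.hN H.inter (fun _ => le_sup_right) n
  rw [add_comm] at h1
  refine h1.trans ((h_triple2 H.hdel (sup_le H.im_le H.hFE) (H.hNF.trans le_sup_right) n).trans ?_)
  exact add_le_add (H.quot_le _) le_rfl

/-- The homology relative to the fixed set is bounded by the two Smith special homologies. -/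
lemma rel (n : ℕ) : h del E F n ≤ h del (im R E Nn) Nn n + h del (im R' E Nn) Nn n :=
  (h_triple1 H.hdel (sup_le H.im_le H.hFE) le_sup_right n).trans
    (add_le_add (H.quot_le _) (h_excision H.im_Cx H.hF H.inter H.hNF n))

end HalfSmith

namespace SmithData
variable {del D Nm : V →ₗ[k] V} {E F Nn : ℕ → Submodule k V} {N0 : ℕ} (H : SmithData del D Nm E F Nn N0)
include H

lemma half1 : HalfSmith del D Nm E F Nn :=
  ⟨H.hdel, H.hE, H.hF, H.hN, H.hFE, H.hNF, H.Ddel, H.Ndel, H.NE, H.DNn, H.DN, H.DF, H.kerD, H.NaF⟩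

lemma half2 : HalfSmith del Nm D E F Nn :=
  ⟨H.hdel, H.hE, H.hF, H.hN, H.hFE, H.hNF, H.Ndel, H.Ddel, H.DE, H.NNn, H.ND, H.NF, H.kerN, H.DaF⟩

lemma sigma_van (n : ℕ) (hn : N0 ≤ n) : h del (im Nm E Nn) Nn n = 0 := by
  rw [h_eq_zero]
  intro x hx hdx
  obtain ⟨a, ha, hb⟩ := mem_im.1 hx
  have h1 : del (Nm a) ∈ Nn n := by
    have := sub_mem hdx (H.hN _ _ hb)
    rwa [map_sub, sub_sub_cancel] at this
  obtain ⟨a', ha', h2⟩ := H.van n hn a ha h1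
  refine ⟨Nm a', mem_im.2 ⟨a', ha', by simp⟩, ?_⟩
  have := add_mem hb h2
  rwa [sub_add_sub_cancel] at this

lemma tau_van (n : ℕ) (hn : N0 ≤ n) : h del F Nn n + h del (im D E Nn) Nn n = 0 := by
  have := H.half2.step n
  rw [H.sigma_van _ (by omega), H.hvan n hn, add_zero] at this
  exact nonpos_iff_eq_zero.1 this

lemma sum_aux (j : ℕ) : ∀ m, N0 ≤ m + j →
    (∑ i ∈ Finset.range j, h del F Nn (m + i)) + h del (im Nm E Nn) Nn m ≤ ∑ i ∈ Finset.range j, h del E Nn (m + i) ∧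
    (∑ i ∈ Finset.range j, h del F Nn (m + i)) + h del (im D E Nn) Nn m ≤ ∑ i ∈ Finset.range j, h del E Nn (m + i) := by
  induction j with
  | zero =>
    intro m hm
    have := H.tau_van m (by omega)
    simp [H.sigma_van m (by omega), (add_eq_zero.1 this).2]
  | succ j ih =>
    intro m hm
    obtain ⟨h1, h2⟩ := ih (m + 1) (by omega)
    have e : ∀ f : ℕ → ℕ∞, ∑ i ∈ Finset.range j, f (m + (i + 1)) = ∑ i ∈ Finset.range j, f (m + 1 + i) :=
      fun f => Finset.sum_congr rfl fun i _ => by rw [add_assoc, add_comm 1 i]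
    rw [Finset.sum_range_succ', Finset.sum_range_succ', e (h del F Nn), e (h del E Nn), add_zero]
    constructor
    · rw [add_assoc]
      refine (add_le_add le_rfl (H.half1.step m)).trans ?_
      rw [← add_assoc]
      exact add_le_add h2 le_rfl
    · rw [add_assoc]
      refine (add_le_add le_rfl (H.half2.step m)).trans ?_
      rw [← add_assoc]
      exact add_le_add h1 le_rfl

/-- Smith's inequality. -/
lemma sum_le (j m : ℕ) (hm : N0 ≤ m + j) :
    ∑ i ∈ Finset.range j, h del F Nn (m + i) ≤ ∑ i ∈ Finset.range j, h del E Nn (m + i) :=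
  le_self_add.trans (H.sum_aux j m hm).1

lemma hF_van (n : ℕ) (hn : N0 ≤ n) : h del F Nn n = 0 := (add_eq_zero.1 (H.tau_van n hn)).1

/-- Above the range of the homology of `E`, the homology relative to the fixed set vanishes too. -/
lemma rel_van (m : ℕ) (hm : ∀ i, m ≤ i → h del E Nn i = 0) : h del E F m = 0 := by
  obtain ⟨h1, h2⟩ := H.sum_aux N0 m (by omega)
  have h0 : ∑ i ∈ Finset.range N0, h del E Nn (m + i) = 0 := Finset.sum_eq_zero fun i _ => hm _ (by omega)
  rw [h0, nonpos_iff_eq_zero, add_eq_zero] at h1 h2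
  have := H.half1.rel m
  rw [h1.2, h2.2, add_zero] at this
  exact nonpos_iff_eq_zero.1 this

end SmithData
end

section
variable {R : Type*} [Ring R]

/-- Contracting homotopies for the periodic resolution of a cyclic group. -/
lemma contract1 (g e : R) (p : ℕ) (hg : g ^ p = 1) :
    (g - 1) * (∑ j ∈ Finset.range p, (∑ l ∈ Finset.range j, g ^ l) * e * g ^ (p - j)) +
      (e * g) * (∑ j ∈ Finset.range p, g ^ j) = ∑ j ∈ Finset.range p, g ^ j * e * g ^ (p - j) := by
  have h1 : ∀ j, (g - 1) * ∑ l ∈ Finset.range j, g ^ l = g ^ j - 1 := fun j => mul_geom_sum g j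
  have h2 : g * ∑ j ∈ Finset.range p, g ^ j = ∑ j ∈ Finset.range p, g ^ j := by
    have := h1 p
    rw [hg, sub_self, sub_mul, one_mul, sub_eq_zero] at this
    exact this
  have h3 : ∑ j ∈ Finset.range p, g ^ (p - j) = ∑ j ∈ Finset.range p, g ^ j := by
    rw [← h2, ← Finset.sum_range_reflect (fun j => g ^ j), Finset.mul_sum]
    refine Finset.sum_congr rfl fun j hj => ?_
    rw [← pow_succ']
    congr 1
    have := Finset.mem_range.1 hj
    omega
  rw [mul_assoc e, h2, ← h3, Finset.mul_sum, Finset.mul_sum, ← Finset.sum_add_distrib]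
  refine Finset.sum_congr rfl fun j _ => ?_
  rw [← mul_assoc, ← mul_assoc, h1]
  noncomm_ring

lemma contract2 (g e : R) (p : ℕ) :
    (∑ j ∈ Finset.range p, g ^ j) * (e * g) +
      (∑ j ∈ Finset.range p, (∑ l ∈ Finset.range j, g ^ l) * e * g ^ (p - j)) * (g - 1) =
      ∑ j ∈ Finset.range p, g ^ j * e * g ^ (p - j) := by
  have key : ∀ i ≤ p, (∑ j ∈ Finset.range i, (∑ l ∈ Finset.range j, g ^ l) * e * g ^ (p - j)) * (g - 1) +
      (∑ l ∈ Finset.range i, g ^ l) * e * g ^ (p - i + 1) = ∑ j ∈ Finset.range i, g ^ j * e * g ^ (p - j) := by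
    intro i hi
    induction i with
    | zero => simp
    | succ i ih =>
      have hih := ih (by omega)
      rw [Finset.sum_range_succ, Finset.sum_range_succ (fun l => g ^ l), Finset.sum_range_succ _ i, ← hih]
      rw [show p - (i + 1) + 1 = p - i by omega, pow_succ g (p - i)]
      noncomm_ring
  have := key p le_rfl
  rw [← this, show p - p + 1 = 1 by omega, pow_one, add_comm, mul_assoc]

lemma geom_char (g : R) (p : ℕ) [Fact p.Prime] [Algebra (ZMod p) R] :
    ∑ j ∈ Finset.range p, g ^ j = (g - 1) ^ (p - 1) := by
  have h : ∑ j ∈ Finset.range p, (Polynomial.X : Polynomial (ZMod p)) ^ j = (Polynomial.X - 1) ^ (p - 1) := by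
    have h1 : (Polynomial.X - 1 : Polynomial (ZMod p)) ≠ 0 := by
      have := Polynomial.X_sub_C_ne_zero (1 : ZMod p)
      simpa using this
    apply mul_left_cancel₀ h1
    rw [mul_geom_sum, ← pow_succ', Nat.sub_add_cancel (Fact.out : p.Prime).one_le, sub_pow_char]
    simp
  have := congrArg (Polynomial.aeval g) h
  simpa using this

end

/-! ### Chains as functionals on cochains -/

section Chains
variable {k : Type*} [Field k] {M : Type*}

/-- Functionals on Alexander–Spanier cochains; they serve as chains. -/
abbrev Ch (k : Type*) [Field k] (M : Type*) := Module.Dual k (List M → k)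

/-- The boundary operator on functionals, dual to `d`. -/
def bd : Ch k M →ₗ[k] Ch k M := (d : (List M → k) →ₗ[k] (List M → k)).dualMap

/-- Restriction of functionals to a set of lists, dual to `cut`. -/
def P (S : Set (List M)) : Ch k M →ₗ[k] Ch k M := (cut S : (List M → k) →ₗ[k] (List M → k)).dualMap

lemma bd_apply (a : Ch k M) (φ : List M → k) : bd a φ = a (d φ) := rfl
lemma P_apply (S : Set (List M)) (a : Ch k M) (φ : List M → k) : P S a φ = a (cut S φ) := rfl

lemma bd_bd (a : Ch k M) : bd (bd a) = 0 := by
  ext φ; rw [bd_apply, bd_apply, d_d]; simp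

lemma cut_cut (S T : Set (List M)) (φ : List M → k) : cut S (cut T φ) = cut (S ∩ T) φ := by
  ext t; by_cases h1 : t ∈ S <;> by_cases h2 : t ∈ T <;> simp [cut_apply, h1, h2]
lemma cut_univ (φ : List M → k) : cut univ φ = φ := by ext t; simp [cut_apply]
lemma cut_empty (φ : List M → k) : cut ∅ φ = 0 := by ext t; simp [cut_apply]
lemma cut_union {S T : Set (List M)} (h : Disjoint S T) (φ : List M → k) :
    cut (S ∪ T) φ = cut S φ + cut T φ := by
  ext t
  have : t ∈ S → t ∉ T := fun h1 h2 => Set.disjoint_left.1 h h1 h2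
  by_cases h1 : t ∈ S <;> by_cases h2 : t ∈ T <;> simp_all [cut_apply]

lemma P_P (S T : Set (List M)) (a : Ch k M) : P S (P T a) = P (S ∩ T) a := by
  ext φ; simp only [P_apply, cut_cut, inter_comm]
lemma P_univ (a : Ch k M) : P univ a = a := by ext φ; simp only [P_apply, cut_univ]
lemma P_empty (a : Ch k M) : P ∅ a = 0 := by ext φ; simp [P_apply, cut_empty]
lemma P_union {S T : Set (List M)} (h : Disjoint S T) (a : Ch k M) : P (S ∪ T) a = P S a + P T a := by
  ext φ; simp [P_apply, cut_union h]
lemma P_compl (S : Set (List M)) (a : Ch k M) : a - P S a = P Sᶜ a := by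
  rw [sub_eq_iff_eq_add', ← P_union disjoint_compl_right, union_compl_self, P_univ]

/-- Sets of lists closed under passing to sublists. -/
def SubCl (S : Set (List M)) : Prop := ∀ s t : List M, s.Sublist t → t ∈ S → s ∈ S

lemma cut_d_cut {S : Set (List M)} (hS : SubCl S) (φ : List M → k) : cut S (d (cut S φ)) = cut S (d φ) := by
  ext t
  rw [cut_apply, cut_apply]
  split_ifs with h
  · refine d_congr t fun s hs _ => ?_
    rw [cut_apply, if_pos (hS s t hs h)]
  · rfl

lemma P_bd_P {S : Set (List M)} (hS : SubCl S) (a : Ch k M) : P S (bd (P S a)) = bd (P S a) := by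
  ext φ; simp only [P_apply, bd_apply, cut_d_cut hS]

/-- Lists with entries in `X`. -/
def LX (X : Set M) : Set (List M) := {t | ∀ z ∈ t, z ∈ X}

lemma subCl_LX (X : Set M) : SubCl (LX X) := fun _ _ hs ht z hz => ht z (hs.subset hz)
lemma SubCl.inter {S T : Set (List M)} (hS : SubCl S) (hT : SubCl T) : SubCl (S ∩ T) :=
  fun s t hs ht => ⟨hS s t hs ht.1, hT s t hs ht.2⟩
lemma SubCl.union {S T : Set (List M)} (hS : SubCl S) (hT : SubCl T) : SubCl (S ∪ T) :=
  fun s t hs ht => ht.imp (hS s t hs) (hT s t hs)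
lemma subCl_empty : SubCl (∅ : Set (List M)) := fun _ _ _ h => h
lemma subCl_univ : SubCl (univ : Set (List M)) := fun _ _ _ h => h
lemma LX_inter (X Y : Set M) : LX X ∩ LX Y = LX (X ∩ Y) := by
  ext t; simp only [LX, mem_inter_iff, mem_ofPred_eq]
  exact ⟨fun h z hz => ⟨h.1 z hz, h.2 z hz⟩, fun h => ⟨fun z hz => (h z hz).1, fun z hz => (h z hz).2⟩⟩
lemma LX_mono {X Y : Set M} (h : X ⊆ Y) : LX X ⊆ LX Y := fun _ ht z hz => h (ht z hz)
lemma LX_univ : LX (univ : Set M) = univ := by ext; simp [LX]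
lemma subCl_SQ {Q : Type*} [Group Q] [MulAction Q M] : SubCl (SQ Q : Set (List M)) :=
  fun _ _ hs ht => SQ_mono (fun _ hz => hs.subset hz) ht

end Chains

section Germs
variable {k : Type*} [Field k] {M : Type*} [TopologicalSpace M]

/-- Chains of length `n` with infinitesimal support. -/
def AA (k : Type*) [Field k] (M : Type*) [TopologicalSpace M] (n : ℕ) : Submodule k (Ch k M) :=
  (I k n (univ : Set M)).dualAnnihilator

lemma mem_AA {n : ℕ} {a : Ch k M} : a ∈ AA k M n ↔ ∀ φ ∈ I k n (univ : Set M), a φ = 0 :=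
  Submodule.mem_dualAnnihilator a

variable (𝓛 : Filter M)

/-- Chains supported away from some member of the filter `𝓛`. -/
def NN (k : Type*) [Field k] {M : Type*} [TopologicalSpace M] (𝓛 : Filter M) (n : ℕ) : Submodule k (Ch k M) where
  carrier := {a | ∃ V ∈ 𝓛, ∀ φ ∈ I k n Vᶜ, a φ = 0}
  add_mem' := by
    rintro a b ⟨V, hV, h⟩ ⟨W, hW, h'⟩
    refine ⟨V ∩ W, inter_mem hV hW, fun φ hφ => ?_⟩
    rw [LinearMap.add_apply, h φ (I_anti (compl_subset_compl.2 inter_subset_left) hφ),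
      h' φ (I_anti (compl_subset_compl.2 inter_subset_right) hφ), add_zero]
  zero_mem' := ⟨univ, univ_mem, fun _ _ => rfl⟩
  smul_mem' := by
    rintro c a ⟨V, hV, h⟩
    exact ⟨V, hV, fun φ hφ => by simp [h φ hφ]⟩

/-- Chains modulo `NN` carried by the set `S` of lists. -/
def EE (k : Type*) [Field k] {M : Type*} [TopologicalSpace M] (𝓛 : Filter M) (S : Set (List M)) (n : ℕ) :
    Submodule k (Ch k M) :=
  AA k M n ⊓ (NN k 𝓛 n).comap (LinearMap.id - P S)

variable {𝓛}

lemma mem_NN {n : ℕ} {a : Ch k M} : a ∈ NN k 𝓛 n ↔ ∃ V ∈ 𝓛, ∀ φ ∈ I k n Vᶜ, a φ = 0 := Iff.rfl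

lemma mem_EE {S : Set (List M)} {n : ℕ} {a : Ch k M} :
    a ∈ EE k 𝓛 S n ↔ a ∈ AA k M n ∧ a - P S a ∈ NN k 𝓛 n := Iff.rfl

lemma NN_le_AA (n : ℕ) : NN k 𝓛 n ≤ AA k M n := by
  rintro a ⟨V, _, h⟩
  exact mem_AA.2 fun φ hφ => h φ (I_anti (subset_univ _) hφ)

lemma P_AA (S : Set (List M)) {n : ℕ} {a : Ch k M} (h : a ∈ AA k M n) : P S a ∈ AA k M n :=
  mem_AA.2 fun φ hφ => mem_AA.1 h _ (cut_mem_I S hφ)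

lemma P_NN (S : Set (List M)) {n : ℕ} {a : Ch k M} (h : a ∈ NN k 𝓛 n) : P S a ∈ NN k 𝓛 n := by
  obtain ⟨V, hV, h⟩ := h
  exact ⟨V, hV, fun φ hφ => h _ (cut_mem_I S hφ)⟩

lemma P_EE {S T : Set (List M)} {n : ℕ} {a : Ch k M} (h : a ∈ EE k 𝓛 T n) : P S a ∈ EE k 𝓛 (S ∩ T) n := by
  refine mem_EE.2 ⟨P_AA S h.1, ?_⟩
  have := P_NN S (mem_EE.1 h).2
  rw [map_sub, P_P] at this
  rw [P_P]
  rwa [show S ∩ T ∩ S = S ∩ T from inter_eq_left.2 inter_subset_left]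

lemma EE_empty : EE k 𝓛 (∅ : Set (List M)) = NN k 𝓛 := by
  funext n
  ext a
  rw [mem_EE, P_empty, sub_zero]
  exact ⟨fun h => h.2, fun h => ⟨NN_le_AA n h, h⟩⟩

lemma EE_univ : EE k 𝓛 (univ : Set (List M)) = AA k M := by
  funext n
  ext a
  rw [mem_EE, P_univ, sub_self]
  exact ⟨fun h => h.1, fun h => ⟨h, zero_mem _⟩⟩

lemma EE_mono {S T : Set (List M)} (h : S ⊆ T) : EE k 𝓛 S ≤ EE k 𝓛 T := by
  intro n a ha
  refine mem_EE.2 ⟨ha.1, ?_⟩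
  have h1 := P_NN Tᶜ (mem_EE.1 ha).2
  rw [P_compl, P_P, inter_eq_left.2 (compl_subset_compl.2 h)] at h1
  rwa [P_compl]

lemma NN_le_EE (S : Set (List M)) : NN k 𝓛 ≤ EE k 𝓛 S := EE_empty (k := k) (𝓛 := 𝓛) ▸ EE_mono (empty_subset S)

lemma EE_inf (S T : Set (List M)) : EE k 𝓛 S ⊓ EE k 𝓛 T = EE k 𝓛 (S ∩ T) := by
  refine le_antisymm ?_ (le_inf (EE_mono inter_subset_left) (EE_mono inter_subset_right))
  rintro n a ⟨h1, h2⟩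
  have h3 := P_EE (S := T) h1
  have h4 := NN_le_EE (S ∩ T) n (mem_EE.1 h2).2
  rw [inter_comm] at h3
  simpa using add_mem h4 h3

lemma EE_sup (S T : Set (List M)) : EE k 𝓛 (S ∪ T) = EE k 𝓛 S ⊔ EE k 𝓛 T := by
  refine le_antisymm ?_ (sup_le (EE_mono subset_union_left) (EE_mono subset_union_right))
  intro n a h
  refine Submodule.mem_sup.2 ⟨a - P T a, ?_, P T a, ?_, by simp⟩
  · rw [P_compl]
    refine EE_mono ?_ n (P_EE (S := Tᶜ) h)
    rintro t ⟨h1, h2 | h2⟩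
    exacts [h2, (h1 h2).elim]
  · exact EE_mono inter_subset_left n (P_EE (S := T) h)

lemma bd_AA {n : ℕ} {a : Ch k M} (h : a ∈ AA k M (n + 1)) : bd a ∈ AA k M n :=
  mem_AA.2 fun φ hφ => mem_AA.1 h _ (d_mem_I hφ)

lemma cx_NN : Cx bd (NN k 𝓛) := by
  rintro n a ⟨V, hV, h⟩
  exact ⟨V, hV, fun φ hφ => h _ (d_mem_I hφ)⟩

lemma cx_EE {S : Set (List M)} (hS : SubCl S) : Cx bd (EE k 𝓛 S) := by
  intro n a h
  refine mem_EE.2 ⟨bd_AA h.1, ?_⟩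
  have h1 := cx_NN n _ (mem_EE.1 h).2
  have h2 := P_NN S h1
  rw [map_sub, map_sub, P_bd_P hS] at h2
  rw [map_sub] at h1
  have := sub_mem h1 h2
  simpa using this

lemma AA_zero_le : AA k M 0 ≤ NN k 𝓛 0 := fun a ha =>
  ⟨univ, univ_mem, fun φ hφ => mem_AA.1 ha φ (mem_I_zero.2 (mem_I_zero.1 hφ))⟩

lemma EE_zero_le (S T : Set (List M)) : EE k 𝓛 S 0 ≤ EE k 𝓛 T 0 :=
  fun _ ha => NN_le_EE T 0 (AA_zero_le ha.1)

end Germs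

section Act
variable {k : Type*} [Field k] {M : Type*} {G : Type*} [Group G] [MulAction G M]

/-- Translation of cochains. -/
def pull (k : Type*) [Field k] {M : Type*} {G : Type*} [Group G] [MulAction G M] (g : G) :
    (List M → k) →ₗ[k] (List M → k) where
  toFun φ t := φ (t.map (g • ·))
  map_add' _ _ := rfl
  map_smul' _ _ := rfl

lemma pull_apply (g : G) (φ : List M → k) (t) : pull k g φ t = φ (t.map (g • ·)) := rfl

lemma pull_pull (g h : G) (φ : List M → k) : pull k h (pull k g φ) = pull k (g * h) φ := by
  ext t
  simp only [pull_apply, List.map_map, Function.comp_def, mul_smul]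

lemma pull_one (φ : List M → k) : pull k (1 : G) φ = φ := by
  ext t; simp [pull_apply]

lemma pull_d (g : G) (φ : List M → k) : pull k g (d φ) = d (pull k g φ) := by
  ext t
  rw [pull_apply, ← d_map]; rfl

lemma pull_cut (g : G) (S : Set (List M)) (φ : List M → k) :
    pull k g (cut S φ) = cut {t | t.map (g • ·) ∈ S} (pull k g φ) := by
  ext t; rfl

/-- The action on chains. -/
def ga (k : Type*) [Field k] (M : Type*) {G : Type*} [Group G] [MulAction G M] : G →* Module.End k (Ch k M) where
  toFun g := (pull k g).dualMap
  map_one' := by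
    ext a φ
    change a (pull k 1 φ) = a φ
    rw [pull_one]
  map_mul' g h := by
    ext a φ
    change a (pull k (g * h) φ) = a (pull k h (pull k g φ))
    rw [pull_pull]

lemma ga_apply (g : G) (a : Ch k M) (φ : List M → k) : ga k M g a φ = a (pull k g φ) := rfl

lemma ga_bd (g : G) (a : Ch k M) : ga k M g (bd a) = bd (ga k M g a) := by
  ext φ; simp only [ga_apply, bd_apply, pull_d]

lemma ga_P (g : G) (S : Set (List M)) (a : Ch k M) :
    ga k M g (P {t | t.map (g • ·) ∈ S} a) = P S (ga k M g a) := by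
  ext φ; simp only [ga_apply, P_apply, pull_cut]

/-- Invariant sets of lists. -/
def LInv (G : Type*) [Group G] [MulAction G M] (S : Set (List M)) : Prop :=
  ∀ (g : G) t, t.map (g • ·) ∈ S ↔ t ∈ S

lemma LInv.inter {S T : Set (List M)} (hS : LInv G S) (hT : LInv G T) : LInv G (S ∩ T) :=
  fun g t => and_congr (hS g t) (hT g t)
lemma LInv.compl {S : Set (List M)} (hS : LInv G S) : LInv G Sᶜ :=
  fun g t => not_congr (hS g t)
lemma lInv_LX {X : Set M} (hX : Inv G X) : LInv G (LX X) := by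
  intro g t
  simp [LX, hX.iff]
lemma lInv_SQ {Q : Type*} [CommGroup Q] [MulAction Q M] : LInv Q (SQ Q : Set (List M)) := by
  intro g t
  simp only [SQ, mem_ofPred_eq, List.mem_map, forall_exists_index, and_imp, forall_apply_eq_imp_iff₂]
  refine exists_congr fun h => and_congr_right fun _ => forall₂_congr fun z _ => ?_
  rw [smul_comm, smul_left_cancel_iff]

lemma ga_P' (g : G) {S : Set (List M)} (hS : LInv G S) (a : Ch k M) :
    ga k M g (P S a) = P S (ga k M g a) := by
  rw [← ga_P]
  rw [show {t | t.map (g • ·) ∈ S} = S from Set.ext fun t => hS g t]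

variable [TopologicalSpace M] [ContinuousConstSMul G M]

lemma pull_mem_I (g : G) {n : ℕ} {A : Set M} {φ : List M → k} (h : φ ∈ I k n A) :
    pull k g φ ∈ I k n {z | g • z ∈ A} := by
  obtain ⟨h1, h2⟩ := mem_I.1 h
  refine mem_I.2 ⟨h1, fun y hy => ?_⟩
  obtain ⟨U, hU, h⟩ := h2 _ hy
  refine ⟨{z | g • z ∈ U}, (continuous_const_smul g).continuousAt hU, fun t ht hz => h _ (by simpa) ?_⟩
  simpa using hz

lemma pull_mem_I' (g : G) {n : ℕ} {A : Set M} (hA : Inv G A) {φ : List M → k} (h : φ ∈ I k n A) :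
    pull k g φ ∈ I k n A := by
  have := pull_mem_I g h
  simpa only [hA.iff, ofPred_mem_eq] using this

lemma ga_AA (g : G) {n : ℕ} {a : Ch k M} (h : a ∈ AA k M n) : ga k M g a ∈ AA k M n :=
  mem_AA.2 fun _ hφ => mem_AA.1 h _ (pull_mem_I' g (fun _ _ _ => mem_univ _) hφ)

/-- The filters used to localize: generated by open sets and invariant under the group. -/
structure LocF (G : Type*) [Group G] [MulAction G M] (𝓛 : Filter M) : Prop where
  opn : ∀ V ∈ 𝓛, ∃ V' ∈ 𝓛, IsOpen V' ∧ V' ⊆ V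
  inv : ∀ g : G, Tendsto (g • ·) 𝓛 𝓛

lemma locF_top : LocF G (⊤ : Filter M) :=
  ⟨fun V hV => ⟨V, hV, by rw [mem_top.1 hV]; exact isOpen_univ, Subset.rfl⟩, fun _ => tendsto_top⟩

lemma locF_nhds {x : M} (hx : ∀ g : G, g • x = x) : LocF G (𝓝 x) :=
  ⟨fun V hV => ⟨interior V, interior_mem_nhds.2 hV, isOpen_interior, interior_subset⟩, fun g => by
    have := (continuous_const_smul g).tendsto x
    rwa [hx g] at this⟩

variable {𝓛 : Filter M}

lemma LocF.exists_inv [Finite G] (h : LocF G 𝓛) {V : Set M} (hV : V ∈ 𝓛) :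
    ∃ V' ∈ 𝓛, IsOpen V' ∧ V' ⊆ V ∧ Inv G V' := by
  obtain ⟨V', hV', ho, hs⟩ := h.opn V hV
  refine ⟨⋂ g : G, {z | g • z ∈ V'}, ?_, ?_, ?_, ?_⟩
  · exact iInter_mem.2 fun g => h.inv g hV'
  · exact isOpen_iInter_of_finite fun g => ho.preimage (continuous_const_smul g)
  · intro z hz
    have := mem_iInter.1 hz 1
    rw [mem_ofPred_eq, one_smul] at this
    exact hs this
  · intro g z hz
    refine mem_iInter.2 fun g' => ?_
    rw [mem_ofPred_eq, smul_smul]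
    exact mem_iInter.1 hz _

lemma ga_NN (h : LocF G 𝓛) (g : G) {n : ℕ} {a : Ch k M} (ha : a ∈ NN k 𝓛 n) : ga k M g a ∈ NN k 𝓛 n := by
  obtain ⟨V, hV, ha⟩ := ha
  refine ⟨{z | g⁻¹ • z ∈ V}, h.inv g⁻¹ hV, fun φ hφ => ha _ ?_⟩
  have := pull_mem_I g hφ
  simpa [compl_def] using this

lemma ga_EE (h : LocF G 𝓛) (g : G) {S : Set (List M)} (hS : LInv G S) {n : ℕ} {a : Ch k M}
    (ha : a ∈ EE k 𝓛 S n) : ga k M g a ∈ EE k 𝓛 S n := by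
  refine mem_EE.2 ⟨ga_AA g ha.1, ?_⟩
  rw [← ga_P' g hS, ← map_sub]
  exact ga_NN h g (mem_EE.1 ha).2

end Act

/-! ### Norms -/

section LinAlg
variable {k : Type*} [Field k] {V W : Type*} [AddCommGroup V] [Module k V] [AddCommGroup W] [Module k W]

/-- A functional on `J` that kills `J ∩ f⁻¹ I'` factors through `f`, with a factor that kills `I'`. -/
lemma exists_factor (f : V →ₗ[k] W) (J : Submodule k V) (I' : Submodule k W) (a : Module.Dual k V)
    (h : ∀ j ∈ J, f j ∈ I' → a j = 0) :
    ∃ μ : Module.Dual k W, (∀ x ∈ I', μ x = 0) ∧ ∀ j ∈ J, μ (f j) = a j := by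
  let F : J →ₗ[k] W ⧸ I' := I'.mkQ ∘ₗ f ∘ₗ J.subtype
  have : a ∘ₗ J.subtype ∈ LinearMap.range F.dualMap := by
    rw [LinearMap.range_dualMap_eq_dualAnnihilator_ker, Submodule.mem_dualAnnihilator]
    intro j hj
    exact h j j.2 ((Submodule.Quotient.mk_eq_zero I').1 hj)
  obtain ⟨μ, hμ⟩ := this
  refine ⟨μ ∘ₗ I'.mkQ, fun x hx => ?_, fun j hj => ?_⟩
  · rw [LinearMap.comp_apply, Submodule.mkQ_apply, (Submodule.Quotient.mk_eq_zero I').2 hx, map_zero]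
  · exact LinearMap.congr_fun hμ ⟨j, hj⟩

end LinAlg

section Sum
variable {k : Type*} [Field k] {Q : Type*} [Group Q] [Fintype Q]

lemma sum_eq_zero_of_inv {p : ℕ} [Fact p.Prime] (hk : (p : k) = 0) {g : Q} (hg : g ≠ 1) (hgp : g ^ p = 1)
    (f : Q → k) (hf : ∀ q, f (q * g) = f q) : ∑ q, f q = 0 := by
  classical
  let H := Subgroup.zpowers g
  let e := Subgroup.groupEquivQuotientProdSubgroup (s := H)
  have he : ∀ q, ((e q).1 : Q ⧸ H) = QuotientGroup.mk q := fun q => rfl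
  have hcard : Fintype.card H = p := by
    rw [Fintype.card_zpowers]; exact orderOf_eq_prime hgp hg
  have hfH : ∀ q, ∀ h ∈ H, f (q * h) = f q := by
    intro q h hh
    obtain ⟨i, rfl⟩ := mem_powers_iff_mem_zpowers.2 hh
    change f (q * g ^ i) = f q
    induction i with
    | zero => simp
    | succ i ih => rw [pow_succ, ← mul_assoc, hf, ih (by simp [H])]
  have hf' : ∀ q, f q = f ((e q).1.out) := by
    intro q
    have : (QuotientGroup.mk q : Q ⧸ H) = QuotientGroup.mk ((e q).1.out) := by
      rw [he, QuotientGroup.out_eq']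
    have := hfH q _ (QuotientGroup.eq.1 this)
    rw [← this]; simp
  calc ∑ q, f q = ∑ x : (Q ⧸ H) × H, f x.1.out :=
        Fintype.sum_equiv e _ _ hf'
    _ = 0 := by
        rw [Fintype.sum_prod_type]
        simp [hcard, hk]

end Sum

section Free
variable {Q : Type*} [Group Q] {M : Type*} [MulAction Q M]

/-- Equivariant labelling of the nonsingular lists by group elements. -/
lemma exists_label (Q : Type*) [Group Q] {M : Type*} [MulAction Q M] :
    ∃ c : List M → Q, ∀ t, t ∉ SQ Q → ∀ q : Q, c (t.map (q • ·)) = q * c t := by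
  classical
  letI : MulAction Q (List M) :=
    { smul := fun q t => t.map (q • ·)
      one_smul := fun t => by change t.map _ = t; simp
      mul_smul := fun q q' t => by
        change t.map _ = (t.map _).map _
        simp [mul_smul] }
  have hs : ∀ (q : Q) (t : List M), q • t = t.map (q • ·) := fun _ _ => rfl
  have hfree : ∀ t : List M, t ∉ SQ Q → ∀ q : Q, q • t = t → q = 1 := by
    intro t ht q hq
    by_contra hne
    refine ht ⟨q, hne, ?_⟩
    rw [hs] at hq
    have : t.map (q • ·) = t.map id := by rw [hq, List.map_id]
    exact List.map_inj_left.1 this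
  let rep : List M → List M := fun z => (Quotient.mk (MulAction.orbitRel Q (List M)) z).out
  have hrep : ∀ z, ∃ g : Q, g • rep z = z := by
    intro z
    have : (MulAction.orbitRel Q (List M)) (rep z) z := Quotient.exact (Quotient.out_eq _)
    obtain ⟨g, hg⟩ := (MulAction.orbitRel Q (List M)).symm this
    exact ⟨g, hg⟩
  choose γ hγ using hrep
  have rep_smul : ∀ (g : Q) z, rep (g • z) = rep z := by
    intro g z
    simp only [rep]
    congr 1
    exact Quotient.sound ⟨g, rfl⟩
  refine ⟨γ, fun t ht q => ?_⟩
  rw [← hs]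
  have h1 : γ (q • t) • rep t = q • t := by
    have := hγ (q • t)
    rwa [rep_smul] at this
  have h2 : rep t = (γ t)⁻¹ • t := by rw [eq_inv_smul_iff, hγ]
  rw [h2, smul_smul] at h1
  have h3 : (q⁻¹ * (γ (q • t) * (γ t)⁻¹)) • t = t := by rw [mul_smul, h1, inv_smul_smul]
  have := hfree t ht _ h3
  rw [inv_mul_eq_one] at this
  exact (mul_inv_eq_iff_eq_mul.1 this.symm)

end Free

section Norm
variable {k : Type*} [Field k] {Q : Type*} [CommGroup Q] [Fintype Q] {M : Type*} [MulAction Q M]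

/-- The norm operator on chains. -/
def NQ (k : Type*) [Field k] (Q : Type*) [CommGroup Q] [Fintype Q] (M : Type*) [MulAction Q M] :
    Module.End k (Ch k M) := ∑ q : Q, ga k M q

/-- The norm operator on cochains. -/
def Nt (k : Type*) [Field k] (Q : Type*) [CommGroup Q] [Fintype Q] {M : Type*} [MulAction Q M] :
    (List M → k) →ₗ[k] (List M → k) := ∑ q : Q, pull k q

lemma Nt_apply (φ : List M → k) (t : List M) : Nt k Q φ t = ∑ q : Q, φ (t.map (q • ·)) := by
  simp [Nt, pull_apply]

lemma NQ_apply (a : Ch k M) (φ : List M → k) : NQ k Q M a φ = a (Nt k Q φ) := by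
  simp [NQ, Nt, ga_apply]

lemma Nt_d (φ : List M → k) : Nt k Q (d φ) = d (Nt k Q φ) := by
  simp [Nt, pull_d]

lemma NQ_bd (a : Ch k M) : NQ k Q M (bd a) = bd (NQ k Q M a) := by
  ext φ; simp only [NQ_apply, bd_apply, Nt_d]

variable {p : ℕ} [Fact p.Prime]

lemma Nt_mem_KK (hk : (p : k) = 0) (hQ : ∀ g : Q, g ^ p = 1) (φ : List M → k) : Nt k Q φ ∈ KK Q k := by
  refine mem_KK.2 ⟨fun g t => ?_, fun t ht => ?_⟩
  · simp only [Nt_apply, List.map_map, Function.comp_def, smul_smul]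
    exact Fintype.sum_equiv (Equiv.mulRight g) _ _ fun q => rfl
  · obtain ⟨g, hg, ht⟩ := ht
    rw [Nt_apply]
    refine sum_eq_zero_of_inv hk hg (hQ g) _ fun q => ?_
    congr 1
    exact List.map_congr_left fun z hz => by rw [mul_smul, ht z hz]

lemma exists_Nt {ψ : List M → k} (h : ψ ∈ KK Q k) : ∃ S : Set (List M), Nt k Q (cut S ψ) = ψ := by
  classical
  obtain ⟨c, hc⟩ := exists_label Q (M := M)
  obtain ⟨h1, h2⟩ := mem_KK.1 h
  refine ⟨{t | t ∉ SQ Q ∧ c t = 1}, ?_⟩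
  ext t
  rw [Nt_apply]
  by_cases ht : t ∈ SQ Q
  · rw [h2 t ht]
    refine Finset.sum_eq_zero fun q _ => ?_
    rw [cut_apply, if_neg]
    rintro ⟨h, _⟩
    exact h ((lInv_SQ q t).2 ht)
  · rw [Finset.sum_eq_single (c t)⁻¹]
    · rw [cut_apply, if_pos, h1]
      exact ⟨fun h => ht ((lInv_SQ _ t).1 h), by rw [hc t ht, inv_mul_cancel]⟩
    · intro q _ hq
      rw [cut_apply, if_neg]
      rintro ⟨_, h⟩
      rw [hc t ht] at h
      exact hq (eq_inv_of_mul_eq_one_left h)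
    · simp

end Norm

section Sigma
variable {k : Type*} [Field k] {Q : Type*} [CommGroup Q] [Fintype Q] {M : Type*} [MetricSpace M] [CompactSpace M]
  [MulAction Q M] [ContinuousConstSMul Q M] {p : ℕ} [Fact p.Prime]

lemma NQ_AA {n : ℕ} {a : Ch k M} (ha : a ∈ AA k M n) : NQ k Q M a ∈ AA k M n := by
  rw [NQ, LinearMap.sum_apply]
  exact sum_mem fun q _ => ga_AA q ha

lemma NQ_NN {𝓛 : Filter M} (h𝓛 : LocF Q 𝓛) {n : ℕ} {a : Ch k M} (ha : a ∈ NN k 𝓛 n) : NQ k Q M a ∈ NN k 𝓛 n := by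
  rw [NQ, LinearMap.sum_apply]
  exact sum_mem fun q _ => ga_NN h𝓛 q ha

lemma NQ_EE {𝓛 : Filter M} (h𝓛 : LocF Q 𝓛) {S : Set (List M)} (hS : LInv Q S) {n : ℕ} {a : Ch k M}
    (ha : a ∈ EE k 𝓛 S n) : NQ k Q M a ∈ EE k 𝓛 S n := by
  rw [NQ, LinearMap.sum_apply]
  exact sum_mem fun q _ => ga_EE h𝓛 q hS ha

/-- Vanishing of the homology of the norm image in degrees above the dimension. -/
lemma sigma_van {n : ℕ} (hM : LocCoord M n) (hk : (p : k) = 0) (hQ : ∀ g : Q, g ^ p = 1) {𝓛 : Filter M}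
    (h𝓛 : LocF Q 𝓛) {X : Set M} (hX : IsClosed X) (hXi : Inv Q X) {m : ℕ} (hm : n + 4 ≤ m) {a : Ch k M}
    (ha : a ∈ EE k 𝓛 (LX X) (m + 1)) (hda : bd (NQ k Q M a) ∈ NN k 𝓛 m) :
    ∃ a' ∈ EE k 𝓛 (LX X) (m + 2), NQ k Q M a - bd (NQ k Q M a') ∈ NN k 𝓛 (m + 1) := by
  obtain ⟨V1, hV1, h1⟩ := hda
  obtain ⟨V2, hV2, h2⟩ := (mem_EE.1 ha).2
  obtain ⟨V, hV, hVo, hVs, hVi⟩ := h𝓛.exists_inv (inter_mem hV1 hV2)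
  replace h1 : ∀ φ ∈ I k m Vᶜ, bd (NQ k Q M a) φ = 0 := fun φ hφ =>
    h1 φ (I_anti (compl_subset_compl.2 (hVs.trans inter_subset_left)) hφ)
  replace h2 : ∀ φ ∈ I k (m + 1) Vᶜ, a φ = a (cut (LX X) φ) := fun φ hφ =>
    sub_eq_zero.1 (h2 φ (I_anti (compl_subset_compl.2 (hVs.trans inter_subset_right)) hφ))
  have hcL : ∀ {φ : List M → k}, φ ∈ KK Q k → cut (LX X) φ ∈ KK Q k := by
    intro φ hφ
    obtain ⟨e1, e2⟩ := mem_KK.1 hφ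
    refine mem_KK.2 ⟨fun g t => ?_, fun t ht => ?_⟩
    · simp only [cut_apply, e1]
      by_cases h : t ∈ LX X
      · rw [if_pos h, if_pos ((lInv_LX hXi g t).2 h)]
      · rw [if_neg h, if_neg fun h0 => h ((lInv_LX hXi g t).1 h0)]
    · simp [cut_apply, e2 t ht]
  obtain ⟨μ, hμ1, hμ2⟩ := exists_factor (d : (List M → k) →ₗ[k] (List M → k)) (KK Q k ⊓ I k (m + 1) Vᶜ)
    ((I k (m + 2) univ).comap (cut (LX X))) a (by
    rintro j ⟨hj1, hj2⟩ hj
    obtain ⟨ψ1, hψ1, e1⟩ := Van_large_sub hM hX hXi isClosed_univ (fun _ _ _ => mem_univ _)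
      (show n + 4 ≤ m + 1 by omega) hj1 hj
    have e2 : cut (LX X) (d ψ1) ∈ I k (m + 1) Vᶜ := by
      have := sub_mem (cut_mem_I (LX X) hj2) (I_anti (subset_univ _) e1)
      rw [← LX, map_sub] at this
      simpa using this
    obtain ⟨ψ2, hψ2, e3⟩ := Van_large_sub hM hX hXi hVo.isClosed_compl hVi.compl hm hψ1 e2
    set ψ := cut (LX X) (ψ1 - d ψ2) with hψ
    have hψK : ψ ∈ KK Q k := hcL (sub_mem hψ1 (d_mem_KK hψ2))
    have hψI : ψ ∈ I k m Vᶜ := e3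
    have e4 : cut (LX X) (d ψ) = cut (LX X) (d ψ1) := by
      rw [hψ, cut_d_cut (subCl_LX X), map_sub, d_d, sub_zero]
    have e5 : a (cut (LX X) (j - d ψ1)) = 0 := mem_AA.1 ha.1 _ e1
    rw [h2 j hj2]
    rw [map_sub, map_sub, sub_eq_zero] at e5
    rw [e5, ← e4, ← h2 _ (d_mem_I hψI)]
    obtain ⟨S, hS⟩ := exists_Nt hψK
    rw [← hS, ← Nt_d, ← NQ_apply, ← bd_apply]
    exact h1 _ (cut_mem_I S hψI))
  refine ⟨μ, mem_EE.2 ⟨mem_AA.2 fun φ hφ => hμ1 _ (cut_mem_I _ hφ), ?_⟩, V, hV, fun φ hφ => ?_⟩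
  · have : μ - P (LX X) μ = 0 := by
      ext φ
      rw [LinearMap.sub_apply, P_apply, ← map_sub]
      refine hμ1 _ ?_
      rw [Submodule.mem_comap, map_sub, cut_cut, inter_self, sub_self]
      exact zero_mem _
    rw [this]; exact zero_mem _
  · rw [LinearMap.sub_apply, bd_apply, NQ_apply, NQ_apply, Nt_d, hμ2, sub_self]
    refine ⟨Nt_mem_KK hk hQ φ, ?_⟩
    rw [Nt, LinearMap.sum_apply]
    exact sum_mem fun q _ => pull_mem_I' q hVi.compl hφ

end Sigma

/-! ### Operators of an elementary abelian group -/

section RingOps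
variable {R : Type*} [Ring R]

/-- The operators of the periodic resolution of the cyclic group `⟨g⟩` of order `p`. -/
def Tm (g : R) (p m : ℕ) : R := if Odd m then g - 1 else ∑ j ∈ Finset.range p, g ^ j

/-- The contracting homotopy of the periodic resolution built from a projection `e` onto a
fundamental domain. -/
def um (g e : R) (p m : ℕ) : R :=
  if Odd m then ∑ j ∈ Finset.range p, (∑ l ∈ Finset.range j, g ^ l) * e * g ^ (p - j) else e * g

lemma Tm_mem {S : Subring R} {g : R} (hg : g ∈ S) (p m : ℕ) : Tm g p m ∈ S := by
  unfold Tm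
  split_ifs
  · exact sub_mem hg (one_mem _)
  · exact sum_mem fun j _ => pow_mem hg j

lemma um_mem {S : Subring R} {g e : R} (hg : g ∈ S) (he : e ∈ S) (p m : ℕ) : um g e p m ∈ S := by
  unfold um
  split_ifs
  · exact sum_mem fun j _ => mul_mem (mul_mem (sum_mem fun l _ => pow_mem hg l) he) (pow_mem hg _)
  · exact mul_mem he hg

lemma Tm_one (g : R) (p : ℕ) : Tm g p 1 = g - 1 := by simp [Tm]
lemma Tm_two (g : R) (p : ℕ) : Tm g p 2 = ∑ j ∈ Finset.range p, g ^ j := by simp [Tm]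

lemma Tm_Tm {g : R} {p : ℕ} (hg : g ^ p = 1) (m : ℕ) : Tm g p (m + 1) * Tm g p (m + 2) = 0 := by
  unfold Tm
  by_cases h : Odd m
  · rw [if_neg (by grind), if_pos (by grind), geom_sum_mul, hg, sub_self]
  · rw [if_pos (by grind), if_neg (by grind), mul_geom_sum, hg, sub_self]

/-- The formula for the contracting homotopy: the right-hand side is the identity when `e` is the projection
to a fundamental domain. -/
lemma Tm_um {g : R} (e : R) {p : ℕ} (hg : g ^ p = 1) (m : ℕ) :
    Tm g p (m + 1) * um g e p (m + 1) + um g e p m * Tm g p m =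
      ∑ j ∈ Finset.range p, g ^ j * e * g ^ (p - j) := by
  unfold Tm um
  by_cases h : Odd m
  · have h' : ¬ Odd (m + 1) := by grind
    simp only [if_pos h, if_neg h']
    exact contract2 g e p
  · have h' : Odd (m + 1) := by grind
    simp only [if_neg h, if_pos h']
    exact contract1 g e p hg

lemma Tm_pow (g : R) (p : ℕ) [Fact p.Prime] [Algebra (ZMod p) R] (m : ℕ) :
    ∃ e, Tm g p m = Tm g p 1 * (Tm g p 1) ^ e := by
  rw [Tm_one]
  unfold Tm
  split_ifs
  · exact ⟨0, by simp⟩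
  · refine ⟨p - 2, ?_⟩
    have := (Fact.out : p.Prime).two_le
    rw [geom_char, ← pow_succ']
    congr 1
    omega

lemma Tm_one_pow {g : R} {p : ℕ} [Fact p.Prime] [Algebra (ZMod p) R] (hg : g ^ p = 1) : (Tm g p 1) ^ p = 0 := by
  have := (Fact.out : p.Prime).two_le
  calc Tm g p 1 ^ p = (g - 1) ^ ((p - 1) + 1) := by rw [Tm_one]; congr 1; omega
    _ = 0 := by rw [pow_succ', ← geom_char g p, mul_geom_sum, hg, sub_self]

end RingOps

section Pres
variable {k : Type*} [Field k] {V : Type*} [AddCommGroup V] [Module k V]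

/-- The endomorphisms preserving a submodule. -/
def pres (W : Submodule k V) : Subring (Module.End k V) where
  carrier := {f | ∀ x ∈ W, f x ∈ W}
  mul_mem' hf hg x hx := hf _ (hg x hx)
  one_mem' _ hx := hx
  add_mem' hf hg x hx := add_mem (hf x hx) (hg x hx)
  zero_mem' _ _ := zero_mem W
  neg_mem' hf x hx := neg_mem (hf x hx)

lemma mem_pres {W : Submodule k V} {f : Module.End k V} : f ∈ pres W ↔ ∀ x ∈ W, f x ∈ W := Iff.rfl
end Pres

section Labels
variable {k : Type*} [Field k] {Q : Type*} [CommGroup Q] [Fintype Q] {M : Type*} [MulAction Q M]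
variable {p : ℕ} [Fact p.Prime]

lemma P_SQ_NQ (hk : (p : k) = 0) (hQ : ∀ g : Q, g ^ p = 1) (a : Ch k M) : P (SQ Q) (NQ k Q M a) = 0 := by
  ext φ
  rw [P_apply, NQ_apply, show Nt k Q (cut (SQ Q) φ) = 0 from ?_]
  · simp
  ext t
  by_cases ht : t ∈ SQ Q
  · exact (mem_KK.1 (Nt_mem_KK hk hQ _)).2 t ht
  · rw [Nt_apply]
    refine Finset.sum_eq_zero fun q _ => ?_
    rw [cut_apply, if_neg fun h => ht ((lInv_SQ q t).1 h)]

lemma NQ_P {S : Set (List M)} (hS : LInv Q S) (a : Ch k M) : NQ k Q M (P S a) = P S (NQ k Q M a) := by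
  simp only [NQ, LinearMap.sum_apply, ga_P' _ hS, map_sum]

lemma NQ_ga (g : Q) (a : Ch k M) : NQ k Q M (ga k M g a) = NQ k Q M a := by
  simp only [NQ, LinearMap.sum_apply]
  refine Fintype.sum_equiv (Equiv.mulRight g) _ _ fun q => ?_
  rw [Equiv.coe_mulRight, map_mul]; rfl

variable [TopologicalSpace M] [ContinuousConstSMul Q M] {𝓛 : Filter M}

lemma NQ_of_B (hk : (p : k) = 0) (hQ : ∀ g : Q, g ^ p = 1) {L : Set (List M)} {n : ℕ} {a : Ch k M}
    (h : NQ k Q M a ∈ EE k 𝓛 (L ∩ SQ Q) n) : NQ k Q M a ∈ NN k 𝓛 n := by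
  have := (mem_EE.1 h).2
  rwa [← P_P, P_SQ_NQ hk hQ, map_zero, sub_zero] at this

lemma NQ_B (hk : (p : k) = 0) (hQ : ∀ g : Q, g ^ p = 1) (h𝓛 : LocF Q 𝓛) {L : Set (List M)} (hL : LInv Q L) {n : ℕ}
    {a : Ch k M} (h : a ∈ EE k 𝓛 (L ∩ SQ Q) n) : NQ k Q M a ∈ NN k 𝓛 n := by
  refine NQ_of_B hk hQ (L := L) ?_
  rw [NQ, LinearMap.sum_apply]
  exact sum_mem fun q _ => ga_EE h𝓛 q (hL.inter lInv_SQ) h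

end Labels

/-- The elementary abelian group of rank `r`. -/
abbrev QQ (p r : ℕ) := Multiplicative (Fin r → ZMod p)

section AL
variable {p : ℕ} [Fact p.Prime] {r : ℕ}

/-- The `l`-th standard generator. -/
def gen (p : ℕ) {r : ℕ} (l : Fin r) : QQ p r := Multiplicative.ofAdd (Pi.single l 1)

lemma QQ_pow (q : QQ p r) : q ^ p = 1 := by
  apply Multiplicative.toAdd.injective
  ext i
  simp

lemma QQ_gen (q : QQ p r) : q = ∏ l, gen p l ^ (q.toAdd l).val := by
  apply Multiplicative.toAdd.injective
  ext i
  rw [toAdd_prod, Finset.sum_apply, Finset.sum_eq_single i]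
  · simp [gen]
  · intro j _ hj
    simp [gen, hj.symm]
  · simp

lemma ZMod_p : ((p : ℕ) : ZMod p) = 0 := CharP.cast_eq_zero _ _

variable {M : Type*} [MulAction (QQ p r) M]

/-- Nonsingular lists with label satisfying `C`. -/
def lab (c : List M → QQ p r) (C : Set (QQ p r)) : Set (List M) := {t | t ∉ SQ (QQ p r) ∧ c t ∈ C}

/-- The action of the `l`-th standard generator on chains. -/
abbrev gl (p : ℕ) [Fact p.Prime] {r : ℕ} (M : Type*) [MulAction (QQ p r) M] (l : Fin r) : Module.End (ZMod p) (Ch (ZMod p) M) :=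
  ga (ZMod p) M (gen p l)

lemma gl_pow (l : Fin r) : gl p M l ^ p = 1 := by
  rw [gl, ← map_pow, QQ_pow, map_one]

lemma sum_lab (c : List M → QQ p r) {ι : Type*} (s : Finset ι) (C : ι → Set (QQ p r)) (hC : ∀ x, ∃! i, i ∈ s ∧ x ∈ C i)
    (a : Ch (ZMod p) M) : ∑ i ∈ s, P (lab c (C i)) a = P (SQ (QQ p r))ᶜ a := by
  classical
  ext φ
  rw [LinearMap.sum_apply]
  simp only [P_apply]
  rw [← map_sum]
  congr 1
  ext t
  rw [Finset.sum_apply]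
  by_cases ht : t ∈ SQ (QQ p r)
  · rw [cut_apply, if_neg (by simpa using ht)]
    exact Finset.sum_eq_zero fun i _ => by rw [cut_apply, if_neg]; exact fun h => h.1 ht
  · obtain ⟨i, ⟨hi, hx⟩, hu⟩ := hC (c t)
    rw [cut_apply, if_pos (show t ∈ (SQ (QQ p r))ᶜ from ht), Finset.sum_eq_single i]
    · rw [cut_apply, if_pos ⟨ht, hx⟩]
    · intro j hj hji
      rw [cut_apply, if_neg]
      exact fun h => hji (hu j ⟨hj, h.2⟩)
    · exact fun h => (h hi).elim

variable {c : List M → QQ p r} (hc : ∀ t, t ∉ SQ (QQ p r) → ∀ q : QQ p r, c (t.map (q • ·)) = q * c t)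
include hc

lemma ga_lab (q : QQ p r) (C : Set (QQ p r)) (a : Ch (ZMod p) M) :
    ga (ZMod p) M q (P (lab c {x | q * x ∈ C}) a) = P (lab c C) (ga (ZMod p) M q a) := by
  rw [← ga_P]
  congr 2
  congr 1
  ext t
  have := lInv_SQ q t
  constructor
  · rintro ⟨h1, h2⟩
    exact ⟨fun h => h1 (this.1 h), by rw [hc t h1]; exact h2⟩
  · rintro ⟨h1, h2⟩
    have h3 : t ∉ SQ (QQ p r) := fun h => h1 (this.2 h)
    exact ⟨h3, by rw [hc t h3] at h2; exact h2⟩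

/-- Projection onto a fundamental domain for the `l`-th factor. -/
def el (c : List M → QQ p r) (l : Fin r) : Module.End (ZMod p) (Ch (ZMod p) M) :=
  P (lab c {x | x.toAdd l = 0})

lemma el_comm {l l' : Fin r} (h : l ≠ l') : gl p M l' * el c l = el c l * gl p M l' := by
  ext1 a
  have := ga_lab hc (gen p l') {x | x.toAdd l = 0} a
  simpa [gen, gl, el, h] using this

lemma sum_el (l : Fin r) :
    ∑ j ∈ Finset.range p, gl p M l ^ j * el c l * gl p M l ^ (p - j) = P (SQ (QQ p r))ᶜ := by
  have hterm : ∀ j ∈ Finset.range p, gl p M l ^ j * el c l * gl p M l ^ (p - j) =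
      P (lab c {x : QQ p r | x.toAdd l = (j : ZMod p)}) := by
    intro j hj
    have h1 : gl p M l ^ j * el c l = P (lab c {x : QQ p r | x.toAdd l = (j : ZMod p)}) * gl p M l ^ j := by
      ext1 a
      have := ga_lab hc (gen p l ^ j) {x : QQ p r | x.toAdd l = (j : ZMod p)} a
      simpa [gen, gl, el] using this
    rw [h1, mul_assoc, ← pow_add, Nat.add_sub_cancel' (Finset.mem_range.1 hj).le, gl_pow, mul_one]
  rw [Finset.sum_congr rfl hterm]
  ext1 a
  rw [LinearMap.sum_apply]
  refine sum_lab c _ (fun j : ℕ => {x : QQ p r | x.toAdd l = (j : ZMod p)}) (fun x => ?_) a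
  refine ⟨(x.toAdd l).val, ⟨Finset.mem_range.2 (ZMod.val_lt _), by simp⟩, ?_⟩
  rintro j ⟨hj, hx⟩
  rw [mem_ofPred_eq] at hx
  rw [hx, ZMod.val_cast_of_lt (Finset.mem_range.1 hj)]

end AL

/-! ### Rank bound and Smith theory for actions -/

section
variable {p : ℕ} [Fact p.Prime] {M : Type*} [MetricSpace M] [CompactSpace M]

/-- Filters generated by open sets. -/
def OpnF (𝓛 : Filter M) : Prop := ∀ V ∈ 𝓛, ∃ V' ∈ 𝓛, IsOpen V' ∧ V' ⊆ V

/-- Vanishing of the homology of a closed set above the dimension of the ambient space. -/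
lemma EE_van {n : ℕ} (hM : LocCoord M n) {𝓛 : Filter M} (h𝓛 : OpnF 𝓛) {X : Set M} (hX : IsClosed X) {m : ℕ}
    (hm : n + 4 ≤ m) : h bd (EE (ZMod p) 𝓛 (LX X)) (NN (ZMod p) 𝓛) m = 0 := by
  letI := trivAct M
  haveI : ContinuousConstSMul Unit M := ⟨fun _ => continuous_id⟩
  have hN : ∀ a : Ch (ZMod p) M, NQ (ZMod p) Unit M a = a := by
    intro a
    have h1 : ga (ZMod p) M (1 : Unit) a = a := by rw [map_one]; rfl
    simpa [NQ] using h1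
  rw [h_eq_zero]
  intro a ha hb
  have := sigma_van (Q := Unit) (p := p) hM ZMod_p (fun _ => rfl) (𝓛 := 𝓛) ⟨h𝓛, fun _ => tendsto_id⟩ hX
    (fun _ _ h => h) hm ha (by rwa [hN])
  simpa only [hN] using this

variable {r : ℕ} [MulAction (QQ p r) M] [ContinuousConstSMul (QQ p r) M]

lemma NQ_gl (l : Fin r) (a : Ch (ZMod p) M) : NQ (ZMod p) (QQ p r) M (Tm (gl p M l) p 1 a) = 0 := by
  rw [Tm_one, LinearMap.sub_apply, map_sub, NQ_ga]
  simp

lemma bd_comm (g : QQ p r) (m : ℕ) (x : Ch (ZMod p) M) :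
    bd (Tm (ga (ZMod p) M g) p m x) = Tm (ga (ZMod p) M g) p m (bd x) := by
  have h1 : ga (ZMod p) M g ∈ Subring.centralizer {(bd : Module.End (ZMod p) (Ch (ZMod p) M))} := by
    rw [Subring.mem_centralizer_iff]
    rintro _ rfl
    ext1 a
    exact (ga_bd g a).symm
  have := Subring.mem_centralizer_iff.1 (Tm_mem h1 p m) _ rfl
  exact LinearMap.congr_fun this x

lemma gl_pres {𝓛 : Filter M} (h𝓛 : LocF (QQ p r) 𝓛) {S : Set (List M)} (hS : LInv (QQ p r) S) (n : ℕ) (q : QQ p r) :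
    ga (ZMod p) M q ∈ pres (EE (ZMod p) 𝓛 S n) :=
  mem_pres.2 fun _ ha => ga_EE h𝓛 q hS ha

lemma P_pres {𝓛 : Filter M} (S T : Set (List M)) (n : ℕ) :
    P T ∈ pres (EE (ZMod p) 𝓛 S n) :=
  mem_pres.2 fun _ ha => EE_mono inter_subset_right n (P_EE ha)

lemma sub_ga_mem {𝓛 : Filter M} (h𝓛 : LocF (QQ p r) 𝓛) {S : Set (List M)} (hS : LInv (QQ p r) S) (n : ℕ) (q : QQ p r)
    {a : Ch (ZMod p) M} (ha : a ∈ EE (ZMod p) 𝓛 S n) :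
    ga (ZMod p) M q a - a ∈ ⨆ l : Fin r, (EE (ZMod p) 𝓛 S n).map (Tm (gl p M l) p 1) := by
  set W := ⨆ l : Fin r, (EE (ZMod p) 𝓛 S n).map (Tm (gl p M l) p 1) with hW
  let H : Submonoid (QQ p r) :=
    { carrier := {q | ∀ a ∈ EE (ZMod p) 𝓛 S n, ga (ZMod p) M q a - a ∈ W}
      one_mem' := fun a _ => by simp
      mul_mem' := by
        intro q q' h h' a ha
        have := add_mem (h _ (ga_EE h𝓛 q' hS ha)) (h' a ha)
        rw [map_mul]
        simpa using this }
  have hgen : ∀ l, gen p l ∈ H := by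
    intro l a ha
    refine Submodule.mem_iSup_of_mem l ⟨a, ha, ?_⟩
    rw [Tm_one]; simp
  have : q ∈ H := by
    rw [QQ_gen q]
    exact Submonoid.prod_mem _ fun l _ => pow_mem (hgen l) _
  exact this a ha

/-- If the homology of `X` relative to the singular lists is nonzero, vanishes from degree `N` on and has
total dimension at most `b + 1`, the rank of the group is bounded in terms of `b` and `N`. -/
theorem AL_rank {n N : ℕ} (hM : LocCoord M n) (hN : n + 4 ≤ N) {𝓛 : Filter M} (h𝓛 : LocF (QQ p r) 𝓛) {X : Set M}
    (hX : IsClosed X) (hXi : Inv (QQ p r) X)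
    (hh : ∀ m, N ≤ m → h bd (EE (ZMod p) 𝓛 (LX X)) (EE (ZMod p) 𝓛 (LX X ∩ SQ (QQ p r))) m = 0)
    (hr : 0 < r) {b : ℕ}
    (hb : ∀ m, ∑ i ∈ Finset.range m, h bd (EE (ZMod p) 𝓛 (LX X)) (EE (ZMod p) 𝓛 (LX X ∩ SQ (QQ p r))) i ≤ b + 1)
    (hne : ∃ m, h bd (EE (ZMod p) 𝓛 (LX X)) (EE (ZMod p) 𝓛 (LX X ∩ SQ (QQ p r))) m ≠ 0) :
    r + N + 1 ≤ b * (N + 2) := by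
  obtain ⟨c, hc⟩ := exists_label (QQ p r) (M := M)
  have hLi := lInv_LX hXi
  have hcomm : ∀ l l' : Fin r, gl p M l ∈ Subring.centralizer {gl p M l'} := by
    intro l l'
    rw [Subring.mem_centralizer_iff]
    rintro _ rfl
    rw [gl, gl, ← map_mul, ← map_mul, mul_comm]
  have hcT : ∀ (l l' : Fin r) m, gl p M l ∈ Subring.centralizer {Tm (gl p M l') p m} := by
    intro l l' m
    rw [Subring.mem_centralizer_iff]
    rintro _ rfl
    exact (Subring.mem_centralizer_iff.1 (Tm_mem (hcomm l' l) p m) _ rfl).symm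
  have hce : ∀ (l l' : Fin r) m, l ≠ l' → el c l ∈ Subring.centralizer {Tm (gl p M l') p m} := by
    intro l l' m hl
    rw [Subring.mem_centralizer_iff]
    rintro _ rfl
    have h1 : gl p M l' ∈ Subring.centralizer {el c l} := by
      rw [Subring.mem_centralizer_iff]
      rintro _ rfl
      exact (el_comm hc hl).symm
    exact (Subring.mem_centralizer_iff.1 (Tm_mem h1 p m) _ rfl).symm
  refine ALData.rank_le (T := fun l m => Tm (gl p M l) p m) (u := fun l m => um (gl p M l) (el c l) p m)
    (NQ := NQ (ZMod p) (QQ p r) M) (del := bd) (p := p) (N := N) ?_ hr hb hne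
  constructor
  · exact bd_bd
  · exact cx_EE (subCl_LX X)
  · exact cx_EE ((subCl_LX X).inter subCl_SQ)
  · exact EE_mono inter_subset_left
  · exact EE_zero_le _ _
  · intro l m x
    have e := Tm_Tm (g := gl p M l) (p := p) (gl_pow l) m
    exact LinearMap.congr_fun e x
  · intro l l' m m' x _
    exact (LinearMap.congr_fun (Subring.mem_centralizer_iff.1 (Tm_mem (hcT l l' m') p m) _ rfl) x).symm
  · intro l l' m m' x hl
    exact (LinearMap.congr_fun (Subring.mem_centralizer_iff.1 (um_mem (hcT l l' m') (hce l l' m' hl) p m) _ rfl) x).symm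
  · intro l m x
    exact bd_comm _ m x
  · intro n l m x hx
    exact mem_pres.1 (Tm_mem (gl_pres h𝓛 hLi n _) p m) x hx
  · intro n l m x hx
    exact mem_pres.1 (Tm_mem (gl_pres h𝓛 (hLi.inter lInv_SQ) n _) p m) x hx
  · intro n l m x hx
    exact mem_pres.1 (um_mem (gl_pres h𝓛 hLi n _) (P_pres _ _ n) p m) x hx
  · intro n l m x hx
    exact mem_pres.1 (um_mem (gl_pres h𝓛 (hLi.inter lInv_SQ) n _) (P_pres _ _ n) p m) x hx
  · intro n l m a ha
    have := LinearMap.congr_fun ((Tm_um (el c l) (gl_pow (M := M) l) m).trans (sum_el hc l)) a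
    have e : Tm (gl p M l) p (m + 1) (um (gl p M l) (el c l) p (m + 1) a) +
      um (gl p M l) (el c l) p m (Tm (gl p M l) p m a) = P (SQ (QQ p r))ᶜ a := this
    rw [e, P_compl, compl_compl, inter_comm]
    exact P_EE ha
  · intro l m
    obtain ⟨e, he⟩ := Tm_pow (gl p M l) p m
    exact ⟨e, fun x => LinearMap.congr_fun he x⟩
  · intro l
    exact Tm_one_pow (gl_pow l)
  · intro l x
    exact NQ_gl l x
  · intro n b hb
    exact NQ_EE h𝓛 (hLi.inter lInv_SQ) hb
  · exact NQ_bd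
  · intro n a ha hNa
    have h1 : P (SQ (QQ p r)) a ∈ EE (ZMod p) 𝓛 (LX X ∩ SQ (QQ p r)) n := by
      rw [inter_comm]; exact P_EE ha
    have h2 : P (lab c {1}) (NQ (ZMod p) (QQ p r) M a) ∈ NN (ZMod p) 𝓛 n :=
      P_NN _ (NQ_of_B ZMod_p QQ_pow hNa)
    have h3 : ∀ q : QQ p r, P (lab c {q}) a - P (lab c {1}) (ga (ZMod p) M q⁻¹ a) ∈
        ⨆ l : Fin r, (EE (ZMod p) 𝓛 (LX X) n).map (Tm (gl p M l) p 1) := by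
      intro q
      have e := ga_lab hc q⁻¹ {1} a
      rw [show {x | q⁻¹ * x ∈ ({1} : Set (QQ p r))} = {q} by ext x; simp [inv_mul_eq_one, eq_comm]] at e
      rw [← e, ← neg_sub]
      exact neg_mem (sub_ga_mem h𝓛 hLi n q⁻¹ (mem_pres.1 (P_pres _ _ n) _ ha))
    have h4 := Submodule.sum_mem (t := Finset.univ) _ fun q _ => h3 q
    rw [Finset.sum_sub_distrib, sum_lab c Finset.univ (fun q => {q}) (fun x => ⟨x, by simp, by simp⟩) a, ← map_sum,
      show ∑ q : QQ p r, ga (ZMod p) M q⁻¹ a = NQ (ZMod p) (QQ p r) M a by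
        rw [NQ, LinearMap.sum_apply]; exact Fintype.sum_equiv (Equiv.inv _) _ _ fun _ => rfl, ← P_compl] at h4
    refine Submodule.mem_sup.2 ⟨_, h4, _, add_mem h1 (NN_le_EE _ n h2), by abel⟩
  · intro m hm a ha hb
    rw [← NQ_bd] at hb
    have hb' := NQ_of_B ZMod_p QQ_pow hb
    rw [NQ_bd] at hb'
    obtain ⟨a', ha', e⟩ := sigma_van hM ZMod_p QQ_pow h𝓛 hX hXi (hN.trans hm) ha hb'
    refine ⟨a', ha', ?_⟩
    rw [map_sub, NQ_bd]
    exact NN_le_EE _ _ e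
  · exact hh

end

section Smith
variable {p : ℕ} [Fact p.Prime] {M : Type*} [MetricSpace M] [CompactSpace M]
  [MulAction (QQ p 1) M] [ContinuousConstSMul (QQ p 1) M]

lemma QQ1_pow (q : QQ p 1) : q = gen p 0 ^ (q.toAdd 0).val := by
  have := QQ_gen q
  simpa using this

lemma QQ1_fix {q : QQ p 1} (hq : q ≠ 1) {z : M} (hz : q • z = z) (g : QQ p 1) : g • z = z := by
  have : g ∈ Subgroup.zpowers q := by
    have hcard : Nat.card (QQ p 1) = p := by
      rw [Nat.card_congr (Multiplicative.toAdd : QQ p 1 ≃ _), Nat.card_fun]; simp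
    exact mem_zpowers_of_prime_card hcard hq
  obtain ⟨i, rfl⟩ := Subgroup.mem_zpowers_iff.1 this
  have : q ∈ MulAction.stabilizer (QQ p 1) z := hz
  exact zpow_mem this i

lemma ga_P_SQ (q : QQ p 1) (a : Ch (ZMod p) M) :
    ga (ZMod p) M q (P (SQ (QQ p 1)) a) = P (SQ (QQ p 1)) a := by
  ext φ
  rw [ga_apply, P_apply, P_apply]
  congr 1
  ext t
  rw [cut_apply, cut_apply]
  split_ifs with h
  · obtain ⟨g, hg, ht⟩ := h
    rw [pull_apply]
    congr 1
    have : t.map (q • ·) = t.map id := List.map_congr_left fun z hz => QQ1_fix hg (ht z hz) q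
    rw [this, List.map_id]
  · rfl

lemma NQ_one : NQ (ZMod p) (QQ p 1) M = Tm (gl p M (0 : Fin 1)) p 2 := by
  rw [Tm_two, NQ]
  refine Finset.sum_bij (fun q _ => (q.toAdd 0).val) (fun q _ => Finset.mem_range.2 (ZMod.val_lt _)) ?_ ?_ ?_
  · intro q _ q' _ h
    rw [QQ1_pow q, QQ1_pow q', h]
  · intro j hj
    refine ⟨gen p 0 ^ j, Finset.mem_univ _, ?_⟩
    simp only [gen, toAdd_pow, toAdd_ofAdd, Pi.smul_apply, Pi.single_eq_same, nsmul_eq_mul, mul_one]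
    exact ZMod.val_cast_of_lt (Finset.mem_range.1 hj)
  · intro q _
    rw [gl, ← map_pow, ← QQ1_pow]

/-- The chains of an action of `ℤ/p`, global or local, satisfy the hypotheses of Smith theory. -/
theorem smithData {n N : ℕ} (hM : LocCoord M n) (hN : n + 4 ≤ N) {𝓛 : Filter M} (h𝓛 : LocF (QQ p 1) 𝓛) {X : Set M}
    (hX : IsClosed X) (hXi : Inv (QQ p 1) X) :
    SmithData bd (Tm (gl p M (0 : Fin 1)) p 1) (NQ (ZMod p) (QQ p 1) M) (EE (ZMod p) 𝓛 (LX X))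
      (EE (ZMod p) 𝓛 (LX X ∩ SQ (QQ p 1))) (NN (ZMod p) 𝓛) N := by
  obtain ⟨c, hc⟩ := exists_label (QQ p 1) (M := M)
  have hLi := lInv_LX hXi
  have hSi := hLi.inter (lInv_SQ (Q := QQ p 1))
  have hDP : ∀ a : Ch (ZMod p) M, Tm (gl p M (0 : Fin 1)) p 1 (P (SQ (QQ p 1)) a) = 0 := by
    intro a
    rw [Tm_one, LinearMap.sub_apply, ga_P_SQ]; simp
  have hPD : ∀ a : Ch (ZMod p) M, P (SQ (QQ p 1)) (Tm (gl p M (0 : Fin 1)) p 1 a) = 0 := by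
    intro a
    rw [← hDP a, Tm_one, LinearMap.sub_apply, LinearMap.sub_apply, ga_P' _ lInv_SQ]; simp
  have hNp : ∀ n (q : QQ p 1), ga (ZMod p) M q ∈ pres (NN (ZMod p) 𝓛 n) :=
    fun n q => mem_pres.2 fun _ ha => ga_NN h𝓛 q ha
  have hPp : ∀ n S, P S ∈ pres (NN (ZMod p) 𝓛 n) := fun n S => mem_pres.2 fun _ ha => P_NN S ha
  have hcon : ∀ m a, Tm (gl p M (0 : Fin 1)) p (m + 1) (um (gl p M (0 : Fin 1)) (el c 0) p (m + 1) a) +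
      um (gl p M (0 : Fin 1)) (el c 0) p m (Tm (gl p M (0 : Fin 1)) p m a) = a - P (SQ (QQ p 1)) a := fun m a =>
    (LinearMap.congr_fun ((Tm_um (el c 0) (gl_pow (M := M) 0) m).trans (sum_el hc 0)) a).trans (P_compl _ _).symm
  constructor
  · exact bd_bd
  · exact cx_EE (subCl_LX X)
  · exact cx_EE ((subCl_LX X).inter subCl_SQ)
  · exact cx_NN
  · exact EE_mono inter_subset_left
  · exact NN_le_EE _
  · exact fun x => (bd_comm _ 1 x).symm
  · exact NQ_bd
  · exact fun n x hx => mem_pres.1 (Tm_mem (gl_pres h𝓛 hLi n _) p 1) x hx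
  · exact fun n x hx => NQ_EE h𝓛 hLi hx
  · exact fun n x hx => mem_pres.1 (Tm_mem (hNp n _) p 1) x hx
  · exact fun n x hx => NQ_NN h𝓛 hx
  · intro x
    rw [NQ_one]
    have e := Tm_Tm (g := gl p M (0 : Fin 1)) (p := p) (gl_pow 0) 0
    exact LinearMap.congr_fun e x
  · exact NQ_gl 0
  · intro n x hx
    have h1 := mem_pres.1 (Tm_mem (hNp n (gen p 0)) p 1) _ (mem_EE.1 hx).2
    rw [inter_comm, ← P_P, map_sub, hDP, sub_zero] at h1
    exact h1
  · exact fun n x hx => NQ_B ZMod_p QQ_pow h𝓛 hLi hx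
  · intro n a ha hD
    refine ⟨P (SQ (QQ p 1)) a, by rw [inter_comm]; exact P_EE ha, um (gl p M (0 : Fin 1)) (el c 0) p 2 a,
      mem_pres.1 (um_mem (gl_pres h𝓛 hLi n _) (P_pres _ _ n) p 2) _ ha, ?_⟩
    rw [← hcon 1, NQ_one, add_sub_cancel_left]
    exact mem_pres.1 (um_mem (hNp n _) (hPp n _) p 1) _ hD
  · intro n a ha hD
    refine ⟨P (SQ (QQ p 1)) a, by rw [inter_comm]; exact P_EE ha, um (gl p M (0 : Fin 1)) (el c 0) p 1 a,
      mem_pres.1 (um_mem (gl_pres h𝓛 hLi n _) (P_pres _ _ n) p 1) _ ha, ?_⟩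
    rw [NQ_one] at hD
    have h2 : Tm (gl p M (0 : Fin 1)) p 2 = Tm (gl p M (0 : Fin 1)) p 0 := by simp [Tm]
    rw [← hcon 0, zero_add, add_sub_cancel_left, ← h2]
    exact mem_pres.1 (um_mem (hNp n _) (hPp n _) p 0) _ hD
  · exact fun n a _ h => NQ_of_B ZMod_p QQ_pow h
  · intro n a ha h
    have := (mem_EE.1 h).2
    rwa [← P_P, hPD, map_zero, sub_zero] at this
  · exact fun m hm a ha hb => sigma_van hM ZMod_p QQ_pow h𝓛 hX hXi (hN.trans hm) ha hb
  · exact fun m hm => EE_van hM h𝓛.opn hX (hN.trans hm)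

end Smith

/-! ### Local homology of a manifold -/

section
variable {k : Type*} [Field k] {U V : Type*} [AddCommGroup U] [Module k U] [AddCommGroup V] [Module k V]

lemma exists_factor' {f : U →ₗ[k] V} {l : Module.Dual k U} (h : f.ker ≤ l.ker) :
    ∃ a : Module.Dual k V, ∀ u, a (f u) = l u := by
  have h1 : l ∈ f.ker.dualAnnihilator := (Submodule.mem_dualAnnihilator _).2 fun u hu => h hu
  rw [← LinearMap.range_dualMap_eq_dualAnnihilator_ker] at h1
  obtain ⟨a, rfl⟩ := h1
  exact ⟨a, fun _ => rfl⟩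

/-- A functional on `A` factors through `T` modulo `B`, as soon as it kills what `T` sends into `B`. -/
lemma exists_extend (T : U →ₗ[k] V) (A : Submodule k U) (B : Submodule k V) (l : Module.Dual k U)
    (h : ∀ u ∈ A, T u ∈ B → l u = 0) : ∃ a : Module.Dual k V, (∀ b ∈ B, a b = 0) ∧ ∀ u ∈ A, a (T u) = l u := by
  obtain ⟨a, ha⟩ := exists_factor' (f := B.mkQ ∘ₗ T ∘ₗ A.subtype) (l := l ∘ₗ A.subtype) (by
    rintro ⟨u, hu⟩ hk
    have : T u ∈ B := by simpa using hk
    simpa using h u hu this)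
  refine ⟨a ∘ₗ B.mkQ, fun b hb => ?_, fun u hu => ha ⟨u, hu⟩⟩
  have : B.mkQ b = 0 := by simpa using hb
  simp [this]

lemma L_le_one {P Q : Submodule k V} (v : V) (h : ∀ w ∈ P, ∃ c : k, w - c • v ∈ Q) : L P Q ≤ 1 := by
  have h1 : P.map Q.mkQ ≤ k ∙ (Q.mkQ v) := by
    rintro _ ⟨w, hw, rfl⟩
    obtain ⟨c, hc⟩ := h w hw
    refine Submodule.mem_span_singleton.2 ⟨c, ?_⟩
    rw [← map_smul, eq_comm, ← sub_eq_zero, ← map_sub]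
    exact (Submodule.Quotient.mk_eq_zero Q).2 hc
  refine (Module.length_le_of_injective (Submodule.inclusion h1) (Submodule.inclusion_injective h1)).trans ?_
  rw [Module.length_eq_finrank]
  have := finrank_span_le_card (R := k) ({Q.mkQ v} : Set (V ⧸ Q))
  simp only [Set.toFinset_singleton, Finset.card_singleton] at this
  exact_mod_cast this

end

section
variable {k : Type*} [Field k] {M : Type*} [MetricSpace M] {n : ℕ} {x : M}

/-- Local homology of an `n`-manifold vanishes outside dimension `n`. -/
lemma loc_zero (hM : LocStr k M n) {m : ℕ} (hm : m ≠ n) : h bd (AA k M) (NN k (𝓝 x)) m = 0 := by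
  rw [h_eq_zero]
  intro l hl hb
  obtain ⟨W, hW, hWl⟩ := mem_NN.1 hb
  obtain ⟨V, hVo, hxV, hVW, hz, -⟩ := hM.open' x W hW
  obtain ⟨a, ha, hal⟩ := exists_extend (d : (List M → k) →ₗ[k] (List M → k)) (I k (m + 1) Vᶜ) (I k (m + 2) univ) l (by
    intro φ hφ hdφ
    obtain ⟨ψ, hψ, h1⟩ := hz m hm φ hφ hdφ
    have h2 := mem_AA.1 hl _ h1
    have h3 := hWl ψ (I_anti (compl_subset_compl.2 hVW) hψ)
    rw [bd_apply] at h3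
    rwa [map_sub, h3, sub_zero] at h2)
  refine ⟨a, mem_AA.2 ha, mem_NN.2 ⟨V, hVo.mem_nhds hxV, fun φ hφ => ?_⟩⟩
  rw [LinearMap.sub_apply, bd_apply, hal φ hφ, sub_self]

/-- A small open set carrying a cohomology class which detects a given local cycle. -/
lemma loc_det (hM : LocStr k M n) {l : Ch k M} (hb : bd l ∈ NN k (𝓝 x) n) :
    ∀ W ∈ 𝓝 x, ∃ V, IsOpen V ∧ x ∈ V ∧ V ⊆ W ∧ (∀ ψ ∈ I k n Vᶜ, l (d ψ) = 0) ∧ HcOne k n V ∧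
    ∀ y ∈ V, ∀ W' ∈ 𝓝 y, ∃ V', IsOpen V' ∧ y ∈ V' ∧ V' ⊆ W' ∧ V' ⊆ V ∧ HcSurj k n V' V := by
  intro W hW
  obtain ⟨W2, hW2, hWl⟩ := mem_NN.1 hb
  obtain ⟨V, hVo, hxV, hVW, -, h1, h2⟩ := hM.open' x (W ∩ W2) (inter_mem hW hW2)
  exact ⟨V, hVo, hxV, hVW.trans inter_subset_left,
    fun ψ hψ => hWl ψ (I_anti (compl_subset_compl.2 (hVW.trans inter_subset_right)) hψ), h1, h2⟩

lemma mem_bd_of {V : Set M} (hV : V ∈ 𝓝 x) {l : Ch k M} (hl : l ∈ AA k M (n + 1))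
    (hd : ∀ ψ ∈ I k n Vᶜ, l (d ψ) = 0) {α : List M → k}
    (hα : ∀ φ : List M → k, φ ∈ I k (n + 1) Vᶜ → d φ ∈ I k (n + 2) univ →
      ∃ c : k, ∃ ψ ∈ I k n Vᶜ, φ - c • α - d ψ ∈ I k (n + 1) univ) (h0 : l α = 0) :
    ∃ a ∈ AA k M (n + 2), l - bd a ∈ NN k (𝓝 x) (n + 1) := by
  obtain ⟨a, ha, hal⟩ := exists_extend (d : (List M → k) →ₗ[k] (List M → k)) (I k (n + 1) Vᶜ) (I k (n + 2) univ) l (by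
    intro φ hφ hdφ
    obtain ⟨c, ψ, hψ, h1⟩ := hα φ hφ hdφ
    have h2 := mem_AA.1 hl _ h1
    rwa [map_sub, map_sub, hd ψ hψ, map_smul, h0, smul_zero, sub_zero, sub_zero] at h2)
  refine ⟨a, mem_AA.2 ha, mem_NN.2 ⟨V, hV, fun φ hφ => ?_⟩⟩
  rw [LinearMap.sub_apply, bd_apply, hal φ hφ, sub_self]

/-- The cycles of dimension `n` at `x` modulo boundaries form a line. -/
lemma loc_dep (hM : LocStr k M n) {l l' : Ch k M} (hl : l ∈ AA k M (n + 1)) (hb : bd l ∈ NN k (𝓝 x) n)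
    (hn : ¬ ∃ a ∈ AA k M (n + 2), l - bd a ∈ NN k (𝓝 x) (n + 1))
    (hl' : l' ∈ AA k M (n + 1)) (hb' : bd l' ∈ NN k (𝓝 x) n) :
    ∃ c : k, ∃ a ∈ AA k M (n + 2), (l' - c • l) - bd a ∈ NN k (𝓝 x) (n + 1) := by
  obtain ⟨W, hW, hWl⟩ := mem_NN.1 hb'
  obtain ⟨V, hVo, hxV, hVW, hd, ⟨α, hα1, hα2, hα3, -⟩, -⟩ := loc_det hM hb W hW
  have h0 : l α ≠ 0 := fun h0 => hn (mem_bd_of (hVo.mem_nhds hxV) hl hd hα3 h0)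
  refine ⟨l' α / l α, mem_bd_of (hVo.mem_nhds hxV) (sub_mem hl' (Submodule.smul_mem _ _ hl)) (fun ψ hψ => ?_) hα3 ?_⟩
  · have := hWl ψ (I_anti (compl_subset_compl.2 hVW) hψ)
    rw [bd_apply] at this
    simp [this, hd ψ hψ]
  · simp [h0]

/-- A local fundamental cycle at `x` is detected near every point close to `x`. -/
lemma loc_P (hM : LocStr k M n) {l : Ch k M} (hl : l ∈ AA k M (n + 1)) (hb : bd l ∈ NN k (𝓝 x) n)
    (hn : ¬ ∃ a ∈ AA k M (n + 2), l - bd a ∈ NN k (𝓝 x) (n + 1)) :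
    ∃ V ∈ 𝓝 x, ∀ y ∈ V, ∀ W ∈ 𝓝 y, ∃ φ ∈ I k (n + 1) Wᶜ, l φ ≠ 0 := by
  obtain ⟨V, hVo, hxV, -, hd, ⟨α, hα1, hα2, hα3, -⟩, hs⟩ := loc_det hM hb univ univ_mem
  have h0 : l α ≠ 0 := fun h0 => hn (mem_bd_of (hVo.mem_nhds hxV) hl hd hα3 h0)
  refine ⟨V, hVo.mem_nhds hxV, fun y hy W hW => ?_⟩
  obtain ⟨V', hV'o, hyV', hV'W, hV'V, hsur⟩ := hs y hy W hW
  obtain ⟨φ, hφ, -, ψ, hψ, h1⟩ := hsur α hα1 hα2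
  refine ⟨φ, I_anti (compl_subset_compl.2 hV'W) hφ, fun h2 => h0 ?_⟩
  have := mem_AA.1 hl _ h1
  rwa [map_sub, map_sub, hd ψ hψ, h2, sub_zero, sub_zero] at this

lemma loc_exists (hM : LocStr k M n) (x : M) : ∃ l ∈ AA k M (n + 1), bd l ∈ NN k (𝓝 x) n ∧
    ¬ ∃ a ∈ AA k M (n + 2), l - bd a ∈ NN k (𝓝 x) (n + 1) := by
  obtain ⟨V, hVo, hxV, -, -, ⟨α, hα1, hα2, -, hα4⟩, hs⟩ := hM.open' x univ univ_mem
  have h1 : α ∉ (I k n Vᶜ).map d ⊔ I k (n + 1) univ := by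
    intro h1
    obtain ⟨_, ⟨ψ, hψ, rfl⟩, b, hb, rfl⟩ := Submodule.mem_sup.1 h1
    exact hα4 ⟨ψ, hψ, by simpa using hb⟩
  obtain ⟨l, hl0, hl1⟩ := Submodule.exists_le_ker_of_notMem h1
  have hlA : l ∈ AA k M (n + 1) := mem_AA.2 fun φ hφ => hl1 (Submodule.mem_sup_right hφ)
  have hd : ∀ ψ ∈ I k n Vᶜ, l (d ψ) = 0 := fun ψ hψ => hl1 (Submodule.mem_sup_left ⟨ψ, hψ, rfl⟩)
  refine ⟨l, hlA, mem_NN.2 ⟨V, hVo.mem_nhds hxV, hd⟩, ?_⟩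
  rintro ⟨a, ha, hla⟩
  obtain ⟨W, hW, hWl⟩ := mem_NN.1 hla
  obtain ⟨V', hV'o, hyV', hV'W, hV'V, hsur⟩ := hs x hxV W hW
  obtain ⟨φ, hφ, hdφ, ψ, hψ, h2⟩ := hsur α hα1 hα2
  have h3 := hWl φ (I_anti (compl_subset_compl.2 hV'W) hφ)
  rw [LinearMap.sub_apply, bd_apply, mem_AA.1 ha _ hdφ, sub_zero] at h3
  have := mem_AA.1 hlA _ h2
  rw [map_sub, map_sub, hd ψ hψ, h3, sub_zero, sub_zero] at this
  exact hl0 this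

/-- Local homology of an `n`-manifold is a line in dimension `n`. -/
lemma loc_one (hM : LocStr k M n) : h bd (AA k M) (NN k (𝓝 x)) n = 1 := by
  obtain ⟨l, hl, hb, hn⟩ := loc_exists hM x
  apply le_antisymm
  · refine L_le_one l fun w hw => ?_
    obtain ⟨c, a, ha, h1⟩ := loc_dep hM hl hb hn hw.1 hw.2
    exact ⟨c, mem_bd.2 ⟨a, ha, h1⟩⟩
  · rw [Order.one_le_iff_ne_zero]
    intro h0
    exact hn (h_eq_zero.1 h0 l hl hb)

end

/-! ### Newman's theorem -/

namespace SmithData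
variable {k : Type*} [Field k] {V : Type*} [AddCommGroup V] [Module k V]
variable {del D Nm : V →ₗ[k] V} {E F Nn : ℕ → Submodule k V} {N0 : ℕ} (H : SmithData del D Nm E F Nn N0)
include H

/-- The Smith special homology of norms vanishes above the range of the homology of `E`. -/
lemma sigma_top {m : ℕ} (hm : ∀ i, m ≤ i → h del E Nn i = 0) : h del (im Nm E Nn) Nn m = 0 := by
  obtain ⟨h1, -⟩ := H.sum_aux N0 m (by omega)
  have h0 : ∑ i ∈ Finset.range N0, h del E Nn (m + i) = 0 := Finset.sum_eq_zero fun i _ => hm _ (by omega)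
  rw [h0, nonpos_iff_eq_zero, add_eq_zero] at h1
  exact h1.2

/-- In the top dimension, a cycle whose class is invariant is homologous to a sum of a cycle on the
fixed set and of a norm. -/
lemma top_split {n : ℕ} (hE : ∀ i, n + 1 ≤ i → h del E Nn i = 0) {l : V} (hl : l ∈ E (n + 1)) (hb : del l ∈ Nn n)
    {μ : V} (hμ : μ ∈ E (n + 2)) (hD : D l - del μ ∈ Nn (n + 1)) :
    ∃ f ∈ F (n + 1), ∃ a ∈ E (n + 1), ∃ a1 ∈ E (n + 2), l - del a1 - f - Nm a ∈ Nn (n + 1) ∧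
      del f ∈ Nn n ∧ del (Nm a) ∈ Nn n := by
  have h1 : del (Nm μ) ∈ Nn (n + 1) := by
    have := H.NNn _ _ hD
    rw [map_sub, H.ND, zero_sub, H.Ndel] at this
    simpa using neg_mem this
  obtain ⟨y, hy, h2⟩ := h_eq_zero.1 (H.sigma_top hE) (Nm μ) (mem_im.2 ⟨μ, hμ, by simp⟩) h1
  obtain ⟨a, ha, h3⟩ := mem_im.1 hy
  have h4 : Nm (μ - del a) ∈ Nn (n + 2) := by
    have := add_mem h2 (H.hN _ _ h3)
    rw [map_sub, H.Ndel]
    convert this using 1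
    rw [map_sub]; abel
  obtain ⟨f1, hf1, a1, ha1, h5⟩ := H.kerN _ _ (sub_mem hμ (H.hE _ _ ha)) h4
  have h6 := H.hN _ _ h5
  rw [map_sub, map_sub, map_sub, H.hdel, sub_zero, ← H.Ddel] at h6
  have h7 : D (l - del a1) ∈ F (n + 1) := by
    have := add_mem (H.hNF _ (add_mem hD h6)) (H.hF _ _ hf1)
    convert this using 1
    rw [map_sub]; abel
  have hla : l - del a1 ∈ E (n + 1) := sub_mem hl (H.hE _ _ ha1)
  obtain ⟨f, hf, a', ha', h8⟩ := H.kerD _ _ hla (H.DaF _ _ hla h7)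
  have h9 := H.hN _ _ h8
  rw [map_sub, map_sub, map_sub, H.hdel, sub_zero] at h9
  have h10 : del f + del (Nm a') ∈ Nn n := by
    have := sub_mem hb h9
    convert this using 1
    abel
  have h11 : del (Nm a') ∈ Nn n := by
    rw [← H.Ndel]
    refine H.NaF _ _ (H.hE _ _ ha') ?_
    rw [H.Ndel]
    have := sub_mem (H.hNF _ h10) (H.hF _ _ hf)
    rwa [add_sub_cancel_left] at this
  refine ⟨f, hf, a', ha', a1, ha1, h8, ?_, h11⟩
  have := sub_mem h10 h11
  rwa [add_sub_cancel_right] at this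

end SmithData

section
variable {p : ℕ} [Fact p.Prime] {M : Type*} [MetricSpace M] [CompactSpace M]
variable [MulAction (QQ p 1) M] [ContinuousConstSMul (QQ p 1) M]

/-- The fixed point set of the action of a group of order `p`. -/
def Fx (p : ℕ) (M : Type*) [MulAction (QQ p 1) M] : Set M := {z | ∀ g : QQ p 1, g • z = z}

lemma gen_ne_one {r : ℕ} (l : Fin r) : gen p l ≠ 1 := by
  intro h
  have := congrFun (congrArg Multiplicative.toAdd h) l
  simp [gen] at this

lemma SQ_one : (SQ (QQ p 1) : Set (List M)) = LX (Fx p M) := by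
  ext t
  constructor
  · rintro ⟨g, hg, h⟩ z hz q
    exact QQ1_fix hg (h z hz) q
  · intro h
    exact ⟨gen p 0, gen_ne_one 0, fun z hz => h z hz _⟩

lemma Fx_closed : IsClosed (Fx p M) := by
  have : Fx p M = ⋂ g : QQ p 1, {z | g • z = z} := by ext; simp [Fx]
  rw [this]
  exact isClosed_iInter fun g => isClosed_eq (continuous_const_smul g) continuous_id

/-- A local fundamental cycle carried by a closed set `Y` forces `Y` to be a neighbourhood. -/
lemma carried_nhds {n : ℕ} (hM : LocStr (ZMod p) M n) {x : M} {Y : Set M} (hY : IsClosed Y) {f : Ch (ZMod p) M}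
    (hf : f ∈ EE (ZMod p) (𝓝 x) (LX Y) (n + 1)) (hb : bd f ∈ NN (ZMod p) (𝓝 x) n)
    (hn : ¬ ∃ a ∈ AA (ZMod p) M (n + 2), f - bd a ∈ NN (ZMod p) (𝓝 x) (n + 1)) : Y ∈ 𝓝 x := by
  obtain ⟨hfA, hfN⟩ := mem_EE.1 hf
  obtain ⟨V, hV, hP⟩ := loc_P hM hfA hb hn
  obtain ⟨W, hW, hWf⟩ := mem_NN.1 hfN
  refine mem_of_superset (inter_mem hV (interior_mem_nhds.2 hW)) ?_
  rintro y ⟨hyV, hyW⟩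
  by_contra hyY
  have hO : interior W ∩ Yᶜ ∈ 𝓝 y := (isOpen_interior.inter hY.isOpen_compl).mem_nhds ⟨hyW, hyY⟩
  obtain ⟨φ, hφ, h0⟩ := hP y hyV _ hO
  apply h0
  have h1 := hWf φ (I_anti (compl_subset_compl.2 (inter_subset_left.trans interior_subset)) hφ)
  rw [LinearMap.sub_apply, P_apply, sub_eq_zero] at h1
  rw [h1]
  apply mem_AA.1 hfA
  have h2 : cut (LX Y) φ ∈ I (ZMod p) (n + 1) (interior W ∩ Yᶜ) := by
    refine mem_I.2 ⟨by simp, fun z hz => ⟨Yᶜ, hY.isOpen_compl.mem_nhds hz.2, fun t ht hzt => ?_⟩⟩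
    rw [cut_apply, if_neg]
    intro htY
    obtain ⟨w, hw⟩ := List.exists_mem_of_length_pos (by omega : 0 < t.length)
    exact hzt w hw (htY w hw)
  have := mem_I_union h2 (cut_mem_I (LX Y) hφ)
  rwa [union_compl_self] at this

lemma interior_Fx_inv : Inv (QQ p 1) (interior (Fx p M)) := fun g z hz => by
  rw [interior_subset hz g]; exact hz

/-- A norm is never a local fundamental cycle near an interior point of the fixed set. -/
lemma norm_not_nhds {n : ℕ} (hM : LocStr (ZMod p) M n) {x : M} {a : Ch (ZMod p) M}
    (ha : a ∈ AA (ZMod p) M (n + 1)) (hb : bd (NQ (ZMod p) (QQ p 1) M a) ∈ NN (ZMod p) (𝓝 x) n)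
    (hn : ¬ ∃ c ∈ AA (ZMod p) M (n + 2), NQ (ZMod p) (QQ p 1) M a - bd c ∈ NN (ZMod p) (𝓝 x) (n + 1)) :
    x ∉ closure (interior (Fx p M)) := by
  intro hx
  obtain ⟨V, hV, hP⟩ := loc_P hM (NQ_AA ha) hb hn
  obtain ⟨y, hyV, hy⟩ := mem_closure_iff_nhds.1 hx V hV
  obtain ⟨φ, hφ, h0⟩ := hP y hyV _ (isOpen_interior.mem_nhds hy)
  apply h0
  rw [NQ_apply]
  apply mem_AA.1 ha
  have h1 : Nt (ZMod p) (QQ p 1) φ ∈ I (ZMod p) (n + 1) (interior (Fx p M)) := by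
    refine mem_I.2 ⟨by simp, fun z hz => ⟨_, isOpen_interior.mem_nhds hz, fun t _ hzt => ?_⟩⟩
    refine (mem_KK.1 (Nt_mem_KK (Q := QQ p 1) ZMod_p QQ_pow φ)).2 t ?_
    rw [SQ_one]
    exact fun w hw => interior_subset (hzt w hw)
  have h2 : Nt (ZMod p) (QQ p 1) φ ∈ I (ZMod p) (n + 1) (interior (Fx p M))ᶜ := by
    rw [Nt, LinearMap.sum_apply]
    exact sum_mem fun q _ => pull_mem_I' q interior_Fx_inv.compl hφ
  have := mem_I_union h1 h2
  rwa [union_compl_self] at this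

/-- The group acts trivially on the line of local fundamental cycles. -/
lemma ga_trivial {n : ℕ} (hM : LocStr (ZMod p) M n) {x : M} (hx : x ∈ Fx p M) {l : Ch (ZMod p) M}
    (hl : l ∈ AA (ZMod p) M (n + 1)) (hb : bd l ∈ NN (ZMod p) (𝓝 x) n)
    (hn : ¬ ∃ a ∈ AA (ZMod p) M (n + 2), l - bd a ∈ NN (ZMod p) (𝓝 x) (n + 1)) (g : QQ p 1) :
    ∃ a ∈ AA (ZMod p) M (n + 2), (ga (ZMod p) M g l - l) - bd a ∈ NN (ZMod p) (𝓝 x) (n + 1) := by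
  have hF : LocF (QQ p 1) (𝓝 x) := locF_nhds hx
  set B : Submodule (ZMod p) (Ch (ZMod p) M) := (AA (ZMod p) M (n + 2)).map bd ⊔ NN (ZMod p) (𝓝 x) (n + 1) with hB
  have hmem : ∀ {w}, w ∈ B ↔ ∃ a ∈ AA (ZMod p) M (n + 2), w - bd a ∈ NN (ZMod p) (𝓝 x) (n + 1) := mem_bd
  rw [← hmem] at hn ⊢
  have hgB : ∀ w ∈ B, ga (ZMod p) M g w ∈ B := by
    intro w hw
    obtain ⟨a, ha, h⟩ := hmem.1 hw
    refine hmem.2 ⟨ga (ZMod p) M g a, ga_AA g ha, ?_⟩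
    rw [← ga_bd, ← map_sub]
    exact ga_NN hF g h
  obtain ⟨c, hc⟩ : ∃ c : ZMod p, ga (ZMod p) M g l - c • l ∈ B := by
    obtain ⟨c, h⟩ := loc_dep hM hl hb (by rwa [← hmem]) (ga_AA g hl)
      (by rw [← ga_bd]; exact ga_NN hF g hb)
    exact ⟨c, hmem.2 h⟩
  have hpow : ∀ j : ℕ, ga (ZMod p) M (g ^ j) l - c ^ j • l ∈ B := by
    intro j
    induction j with
    | zero => simp
    | succ j ih =>
      have := add_mem (hgB _ ih) (B.smul_mem (c ^ j) hc)
      rw [pow_succ', map_mul, pow_succ]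
      convert this using 1
      rw [map_sub, map_smul, smul_sub, smul_smul, Module.End.mul_apply]
      abel
  have hp := hpow p
  rw [QQ_pow, map_one, ZMod.pow_card] at hp
  have hc1 : c = 1 := by
    by_contra hne
    apply hn
    have e : (1 - c) • l = l - c • l := by
      ext φ
      change (1 - c) * l φ = l φ - c * l φ
      ring
    have h1 : (1 - c) • l ∈ B := by rw [e]; exact hp
    have := B.smul_mem (1 - c)⁻¹ h1
    rwa [smul_smul, inv_mul_cancel₀ (sub_ne_zero.2 (Ne.symm hne)), one_smul] at this
  rwa [hc1, one_smul] at hc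

lemma smithAA {n : ℕ} (hM : LocStr (ZMod p) M n) {x : M} (hx : x ∈ Fx p M) :
    SmithData bd (Tm (gl p M (0 : Fin 1)) p 1) (NQ (ZMod p) (QQ p 1) M) (AA (ZMod p) M)
      (EE (ZMod p) (𝓝 x) (LX (Fx p M))) (NN (ZMod p) (𝓝 x)) (n + 4) := by
  have := smithData (p := p) hM.coord le_rfl (locF_nhds hx) isClosed_univ (fun _ _ _ => mem_univ _)
  rwa [LX_univ, univ_inter, EE_univ, SQ_one] at this

/-- The interior of the fixed set is closed. At a point of the fixed set, the local fundamental class is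
carried either by the fixed set, which is then a neighbourhood, or by norms, which are invisible at
interior points of the fixed set. -/
lemma Fx_dich {n : ℕ} (hM : LocStr (ZMod p) M n) {x : M} (hx : x ∈ Fx p M) :
    x ∈ interior (Fx p M) ∨ x ∉ closure (interior (Fx p M)) := by
  obtain ⟨l, hl, hb, hn⟩ := loc_exists hM x
  obtain ⟨μ, hμ, hD⟩ := ga_trivial hM hx hl hb hn (gen p 0)
  obtain ⟨f, hf, a, ha, a1, ha1, h1, h2, h3⟩ := (smithAA hM hx).top_split
    (fun i hi => loc_zero hM (by omega)) hl hb hμ (by rw [Tm_one]; exact hD)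
  by_cases hfB : ∃ a ∈ AA (ZMod p) M (n + 2), f - bd a ∈ NN (ZMod p) (𝓝 x) (n + 1)
  · right
    refine norm_not_nhds hM ha h3 ?_
    rintro ⟨c, hc, hc'⟩
    obtain ⟨e, he, he'⟩ := hfB
    refine hn ⟨a1 + e + c, add_mem (add_mem ha1 he) hc, ?_⟩
    have := add_mem (add_mem h1 he') hc'
    convert this using 1
    rw [map_add, map_add]; abel
  · left
    exact mem_interior_iff_mem_nhds.2 (carried_nhds hM Fx_closed hf h2 hfB)

/-- Newman's theorem: a nontrivial action of a group of prime order on a connected manifold has a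
fixed point set without interior. -/
theorem newman [PreconnectedSpace M] {n : ℕ} (hM : LocStr (ZMod p) M n) (hne : (interior (Fx p M)).Nonempty) :
    Fx p M = univ := by
  have hcl : IsClosed (interior (Fx p M)) := by
    rw [← closure_subset_iff_isClosed]
    intro x hx
    have hxF : x ∈ Fx p M := closure_minimal interior_subset Fx_closed hx
    exact (Fx_dich hM hxF).resolve_right (fun h => h hx)
  have := IsClopen.eq_univ ⟨hcl, isOpen_interior⟩ hne
  exact univ_subset_iff.1 (this ▸ interior_subset)

/-- The local homology of the fixed point set vanishes in the top dimension. -/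
lemma Fx_top [PreconnectedSpace M] {n : ℕ} (hM : LocStr (ZMod p) M n) (hne : Fx p M ≠ univ) {x : M} (hx : x ∈ Fx p M) :
    h bd (EE (ZMod p) (𝓝 x) (LX (Fx p M))) (NN (ZMod p) (𝓝 x)) n = 0 := by
  have hS := smithAA hM hx
  rw [h_eq_zero]
  intro f hf hb
  obtain ⟨a, ha, h1⟩ : ∃ a ∈ AA (ZMod p) M (n + 2), f - bd a ∈ NN (ZMod p) (𝓝 x) (n + 1) := by
    by_contra hn
    exact hne (newman hM ⟨x, mem_interior_iff_mem_nhds.2 (carried_nhds hM Fx_closed hf hb hn)⟩)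
  have h2 := hS.rel_van (n + 1) (fun i hi => loc_zero hM (by omega))
  obtain ⟨a', ha', h3⟩ := h_eq_zero.1 h2 a ha (by
    have := sub_mem hf (hS.hNF _ h1)
    rwa [sub_sub_cancel] at this)
  refine ⟨a - bd a', h3, ?_⟩
  rwa [map_sub, bd_bd, sub_zero]

end

/-! ### Fixed point sets of subspaces -/

section
variable {p : ℕ} [Fact p.Prime] {M : Type*} [MetricSpace M] [CompactSpace M]
variable {V : Type*} [AddCommGroup V] [Module (ZMod p) V] [MulAction (Multiplicative V) M]

/-- The action of `(ℤ/p)^r` obtained from an action of `V` along a linear map. -/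
@[reducible] def actR (M : Type*) [MulAction (Multiplicative V) M] {r : ℕ} (f : (Fin r → ZMod p) →ₗ[ZMod p] V) :
    MulAction (QQ p r) M :=
  MulAction.compHom M (AddMonoidHom.toMultiplicative f.toAddMonoidHom)

lemma actR_smul {r : ℕ} (f : (Fin r → ZMod p) →ₗ[ZMod p] V) (q : QQ p r) (z : M) :
    (letI := actR M f; q • z) = Multiplicative.ofAdd (f (Multiplicative.toAdd q)) • z := rfl

/-- The fixed points of a vector. -/
def Fv (M : Type*) [MulAction (Multiplicative V) M] (v : V) : Set M := {z | Multiplicative.ofAdd v • z = z}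

/-- The fixed points of a subspace. -/
def FF (M : Type*) [MulAction (Multiplicative V) M] (W : Submodule (ZMod p) V) : Set M :=
  {z | ∀ v ∈ W, Multiplicative.ofAdd v • z = z}

/-- The stabilizer of a point, as a subspace. -/
def stabV (p : ℕ) [Fact p.Prime] [Module (ZMod p) V] (z : M) : Submodule (ZMod p) V :=
  AddSubgroup.toZModSubmodule p (Subgroup.toAddSubgroup' (MulAction.stabilizer (Multiplicative V) z))

lemma mem_stabV {z : M} {v : V} : v ∈ stabV p z ↔ Multiplicative.ofAdd v • z = z := Iff.rfl

lemma mem_FF {z : M} {W : Submodule (ZMod p) V} : z ∈ FF M W ↔ W ≤ stabV p z := Iff.rfl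

lemma FF_sup (W W' : Submodule (ZMod p) V) : FF M (W ⊔ W') = FF M W ∩ FF M W' := by
  ext z
  simp only [mem_inter_iff, mem_FF, sup_le_iff]

lemma FF_span (v : V) : FF M (Submodule.span (ZMod p) {v}) = Fv M v := by
  ext z
  rw [mem_FF, Submodule.span_singleton_le_iff_mem]
  rfl

lemma FF_bot : FF M (⊥ : Submodule (ZMod p) V) = univ := by
  ext z
  simp [mem_FF]

lemma FF_anti {W W' : Submodule (ZMod p) V} (h : W ≤ W') : FF M W' ⊆ FF M W := fun _ hz v hv => hz v (h hv)

lemma FF_inv (W : Submodule (ZMod p) V) : Inv (Multiplicative V) (FF M W) := by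
  intro g z hz v hv
  rw [smul_smul, mul_comm, ← smul_smul, hz v hv]

variable [ContinuousConstSMul (Multiplicative V) M]

lemma actR_cont {r : ℕ} (f : (Fin r → ZMod p) →ₗ[ZMod p] V) :
    letI := actR M f; ContinuousConstSMul (QQ p r) M := by
  letI := actR M f
  exact ⟨fun q => continuous_const_smul (Multiplicative.ofAdd (f (Multiplicative.toAdd q)))⟩

lemma Fv_closed (v : V) : IsClosed (Fv M v) := isClosed_eq (continuous_const_smul _) continuous_id

lemma FF_closed (W : Submodule (ZMod p) V) : IsClosed (FF M W) := by
  have : FF M W = ⋂ v ∈ W, Fv M v := by ext; simp [FF, Fv]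
  rw [this]
  exact isClosed_biInter fun v _ => Fv_closed v

/-- The linear map from the line to `V` with image spanned by `v`. -/
def lin1 (p : ℕ) [Fact p.Prime] [Module (ZMod p) V] (v : V) : (Fin 1 → ZMod p) →ₗ[ZMod p] V :=
  LinearMap.toSpanSingleton (ZMod p) V v ∘ₗ LinearMap.proj 0

lemma lin1_apply (v : V) (c : Fin 1 → ZMod p) : lin1 p v c = c 0 • v := by simp [lin1]

lemma Fx_lin1 (v : V) : (letI := actR M (lin1 p v); Fx p M) = Fv M v := by
  letI := actR M (lin1 p v)
  ext z
  constructor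
  · intro hz
    have := hz (gen p 0)
    rw [actR_smul, lin1_apply] at this
    simpa [gen, Fv] using this
  · intro hz g
    rw [actR_smul, lin1_apply]
    exact (stabV p z).smul_mem _ (mem_stabV.2 hz)

/-- The filters at which a vector can be localized. -/
structure LocV (p : ℕ) [Fact p.Prime] [Module (ZMod p) V] (v : V) (𝓛 : Filter M) : Prop where
  opn : OpnF 𝓛
  inv : ∀ c : ZMod p, Tendsto (Multiplicative.ofAdd (c • v) • ·) 𝓛 𝓛

lemma LocV.locF {v : V} {𝓛 : Filter M} (h : LocV p v 𝓛) : letI := actR M (lin1 p v); LocF (QQ p 1) 𝓛 := by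
  letI := actR M (lin1 p v)
  refine ⟨h.opn, fun g => ?_⟩
  have := h.inv (Multiplicative.toAdd g 0)
  rw [← lin1_apply] at this
  exact this

lemma opnF_nhds (x : M) : OpnF (𝓝 x) := fun V hV =>
  ⟨interior V, interior_mem_nhds.2 hV, isOpen_interior, interior_subset⟩

lemma opnF_top : OpnF (⊤ : Filter M) := fun V hV => ⟨V, hV, by rw [mem_top.1 hV]; exact isOpen_univ, Subset.rfl⟩

lemma locV_nhds {v : V} {x : M} (hx : x ∈ Fv M v) : LocV p v (𝓝 x) := by
  refine ⟨opnF_nhds x, fun c => ?_⟩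
  have h1 : Multiplicative.ofAdd (c • v) • x = x := (stabV p x).smul_mem _ (mem_stabV.2 hx)
  have := (continuous_const_smul (Multiplicative.ofAdd (c • v))).tendsto x
  rwa [h1] at this

lemma locV_top {v : V} : LocV p v (⊤ : Filter M) := ⟨opnF_top, fun _ => tendsto_top⟩

/-- Smith theory for a single vector acting on a closed invariant set `X`. -/
lemma smithV {n N : ℕ} (hM : LocCoord M n) (hN : n + 4 ≤ N) {v : V} {𝓛 : Filter M} (h𝓛 : LocV p v 𝓛) {X : Set M}
    (hX : IsClosed X) (hXi : Inv (Multiplicative V) X) :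
    ∃ D Nm, SmithData bd D Nm (EE (ZMod p) 𝓛 (LX X)) (EE (ZMod p) 𝓛 (LX (X ∩ Fv M v))) (NN (ZMod p) 𝓛) N := by
  letI := actR M (lin1 p v)
  haveI := actR_cont (M := M) (lin1 p v)
  have := smithData hM hN h𝓛.locF hX (fun g z hz => hXi _ z hz)
  rw [SQ_one, LX_inter, Fx_lin1] at this
  exact ⟨_, _, this⟩

/-- The rank bound with `b = 0`: one line cannot be the homology of `X` relative to the fixed points of
a vector. -/
lemma AL0 {n : ℕ} (hM : LocCoord M n) {v : V} {𝓛 : Filter M} (h𝓛 : LocV p v 𝓛) {X : Set M}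
    (hX : IsClosed X) (hXi : Inv (Multiplicative V) X) {l : ℕ}
    (hr : ∀ m, h bd (EE (ZMod p) 𝓛 (LX X)) (EE (ZMod p) 𝓛 (LX (X ∩ Fv M v))) m ≤ if m = l then 1 else 0) (m : ℕ) :
    h bd (EE (ZMod p) 𝓛 (LX X)) (EE (ZMod p) 𝓛 (LX (X ∩ Fv M v))) m = 0 := by
  by_contra hne
  letI := actR M (lin1 p v)
  haveI := actR_cont (M := M) (lin1 p v)
  have e : LX (X ∩ Fv M v) = LX X ∩ SQ (QQ p 1) := by rw [SQ_one, LX_inter, Fx_lin1]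
  rw [e] at hr hne
  have := AL_rank (N := n + 4 + l + 1) hM (by omega) h𝓛.locF hX (fun g z hz => hXi _ z hz) (fun m hm => by
    have := hr m
    rw [if_neg (by omega)] at this
    exact nonpos_iff_eq_zero.1 this) one_pos (b := 0) (fun m => by
      refine (Finset.sum_le_sum fun i _ => hr i).trans ?_
      rw [Finset.sum_ite_eq']
      split_ifs <;> simp) ⟨m, hne⟩
  omega

/-- The local homology at `x` of the set `X` is a line concentrated in dimension `l`. -/
def Row (p : ℕ) [Fact p.Prime] (x : M) (X : Set M) (l : ℕ) : Prop :=
  ∀ m, h bd (EE (ZMod p) (𝓝 x) (LX X)) (NN (ZMod p) (𝓝 x)) m = if m = l then 1 else 0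

lemma Row.uniq {x : M} {X : Set M} {l l' : ℕ} (h : Row p x X l) (h' : Row p x X l') : l = l' := by
  by_contra hne
  have := h l
  rw [h' l, if_pos rfl, if_neg hne] at this
  exact zero_ne_one this

lemma row_of_sum {a : ℕ → ℕ∞} {N l : ℕ} (h : ∑ i ∈ Finset.range N, a i ≤ 1) (hl : a l ≠ 0) (hlN : l < N) (m : ℕ)
    (hm : m < N) : a m = if m = l then 1 else 0 := by
  have h1 : ∀ i, i < N → a i ≤ 1 := fun i hi =>
    (Finset.single_le_sum (f := a) (fun _ _ => zero_le) (Finset.mem_range.2 hi)).trans h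
  have hl1 : a l = 1 := le_antisymm (h1 l hlN) (Order.one_le_iff_ne_zero.2 hl)
  split_ifs with hml
  · rw [hml, hl1]
  · by_contra hne
    have h2 : a m + a l ≤ 1 := by
      refine le_trans ?_ h
      rw [← Finset.sum_pair hml]
      exact Finset.sum_le_sum_of_subset (by
        intro i hi
        simp only [Finset.mem_insert, Finset.mem_singleton] at hi
        rw [Finset.mem_range]
        omega)
    have h3 : (1 : ℕ∞) ≤ a m := Order.one_le_iff_ne_zero.2 hne
    rw [hl1] at h2
    have h4 : (1 : ℕ∞) + 1 ≤ 1 := (add_le_add h3 le_rfl).trans h2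
    exact absurd h4 (by decide)

lemma EE_zero_NN {𝓛 : Filter M} (S : Set (List M)) : EE (ZMod p) 𝓛 S 0 ≤ NN (ZMod p) 𝓛 0 := fun _ ha => AA_zero_le ha.1

/-- Local Smith theorem: passing to the fixed points of a vector, local homology remains a line and its
dimension does not increase. -/
lemma row_step {n : ℕ} (hM : LocCoord M n) {v : V} {x : M} (hx : x ∈ Fv M v) {X : Set M}
    (hX : IsClosed X) (hXi : Inv (Multiplicative V) X) {l : ℕ} (hR : Row p x X l) :
    ∃ l' ≤ l, Row p x (X ∩ Fv M v) l' := by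
  obtain ⟨D, Nm, H⟩ := smithV (N := n + 4 + l + 1) hM (by omega) (locV_nhds (p := p) hx) hX hXi
  have hsum := H.sum_le (n + 4 + l + 1) 0 (by omega)
  simp only [zero_add] at hsum
  have h1 : ∑ i ∈ Finset.range (n + 4 + l + 1), h bd (EE (ZMod p) (𝓝 x) (LX (X ∩ Fv M v))) (NN (ZMod p) (𝓝 x)) i ≤ 1 := by
    refine hsum.trans ?_
    rw [Finset.sum_congr rfl fun i _ => hR i, Finset.sum_ite_eq']
    split_ifs <;> simp
  by_cases h0 : ∃ l', h bd (EE (ZMod p) (𝓝 x) (LX (X ∩ Fv M v))) (NN (ZMod p) (𝓝 x)) l' ≠ 0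
  · obtain ⟨l', hl'⟩ := h0
    have hlN : l' < n + 4 + l + 1 := by
      by_contra hc
      exact hl' (H.hF_van l' (by omega))
    refine ⟨l', ?_, fun m => ?_⟩
    · by_contra hlt
      have h2 := H.sum_le (n + 4 + l + 1) l' (by omega)
      rw [Finset.sum_eq_zero (f := fun i => h bd (EE (ZMod p) (𝓝 x) (LX X)) (NN (ZMod p) (𝓝 x)) (l' + i))
        (fun i _ => by rw [hR, if_neg (by omega)]), nonpos_iff_eq_zero, Finset.sum_eq_zero_iff] at h2
      exact hl' (h2 0 (by simp))
    · by_cases hm : m < n + 4 + l + 1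
      · exact row_of_sum h1 hl' hlN m hm
      · rw [H.hF_van m (by omega), if_neg (by omega)]
  · exfalso
    push Not at h0
    have h2 : ∀ m, h bd (EE (ZMod p) (𝓝 x) (LX X)) (EE (ZMod p) (𝓝 x) (LX (X ∩ Fv M v))) m ≤ if m = l then 1 else 0 := by
      intro m
      rw [← hR m]
      cases m with
      | zero => exact h_bottom (NN_le_EE _) (EE_zero_NN _)
      | succ m =>
        have := h_triple3 H.hdel H.hFE H.hNF m
        rwa [h0, add_zero] at this
    have h3 := AL0 hM (locV_nhds hx) hX hXi h2 l
    have h4 := h_triple1 H.hdel H.hFE H.hNF l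
    rw [hR l, h3, h0 l, if_pos rfl] at h4
    simp at h4

/-- If the dimension of local homology does not drop, the local homology of the pair vanishes. -/
lemma row_eq {n : ℕ} (hM : LocCoord M n) {v : V} {x : M} (hx : x ∈ Fv M v) {X : Set M}
    (hX : IsClosed X) (hXi : Inv (Multiplicative V) X) {l : ℕ} (hR : Row p x X l) (hR' : Row p x (X ∩ Fv M v) l) (m : ℕ) :
    h bd (EE (ZMod p) (𝓝 x) (LX X)) (EE (ZMod p) (𝓝 x) (LX (X ∩ Fv M v))) m = 0 := by
  obtain ⟨D, Nm, H⟩ := smithV (N := n + 4) hM le_rfl (locV_nhds (p := p) hx) hX hXi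
  refine AL0 hM (locV_nhds hx) hX hXi (l := l) (fun m => ?_) m
  by_cases hm : l < m
  · rw [H.rel_van m fun i hi => by rw [hR, if_neg (by omega)]]
    exact zero_le
  · rw [← hR m]
    cases m with
    | zero => exact h_bottom (NN_le_EE _) (EE_zero_NN _)
    | succ m =>
      have := h_triple3 H.hdel H.hFE H.hNF m
      rwa [hR' m, if_neg (by omega), add_zero] at this

lemma row_univ {n : ℕ} (hM : LocStr (ZMod p) M n) (x : M) : Row p x univ n := by
  intro m
  rw [LX_univ, EE_univ]
  split_ifs with hm
  · rw [hm, loc_one hM]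
  · exact loc_zero hM hm

/-- Rows exist, decrease along finite extensions. -/
lemma row_anti {n : ℕ} (hM : LocCoord M n) {x : M} {W : Submodule (ZMod p) V} {l : ℕ} (hR : Row p x (FF M W) l)
    (s : Finset V) (hx : x ∈ FF M (W ⊔ Submodule.span (ZMod p) s)) :
    ∃ l' ≤ l, Row p x (FF M (W ⊔ Submodule.span (ZMod p) s)) l' := by
  classical
  induction s using Finset.induction_on with
  | empty => exact ⟨l, le_rfl, by simpa using hR⟩
  | insert v s hv ih =>
    rw [Finset.coe_insert, Submodule.span_insert, sup_comm (Submodule.span (ZMod p) {v}), ← sup_assoc] at hx ⊢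
    rw [FF_sup, FF_span] at hx ⊢
    obtain ⟨l1, hl1, h1⟩ := ih hx.1
    obtain ⟨l2, hl2, h2⟩ := row_step hM hx.2 (FF_closed _) (FF_inv _) h1
    exact ⟨l2, hl2.trans hl1, h2⟩

lemma row_eq' {n : ℕ} (hM : LocCoord M n) {x : M} {W : Submodule (ZMod p) V} {l : ℕ} (hR : Row p x (FF M W) l)
    (s : Finset V) (hx : x ∈ FF M (W ⊔ Submodule.span (ZMod p) s))
    (hR' : Row p x (FF M (W ⊔ Submodule.span (ZMod p) s)) l) (m : ℕ) :
    h bd (EE (ZMod p) (𝓝 x) (LX (FF M W))) (EE (ZMod p) (𝓝 x) (LX (FF M (W ⊔ Submodule.span (ZMod p) s)))) m = 0 := by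
  classical
  induction s using Finset.induction_on with
  | empty =>
    simp only [Finset.coe_empty, Submodule.span_empty, sup_bot_eq]
    rw [h_eq_zero]
    intro a ha _
    exact ⟨0, zero_mem _, by simpa using ha⟩
  | insert v s hv ih =>
    have hx' := hx
    rw [Finset.coe_insert, Submodule.span_insert, sup_comm (Submodule.span (ZMod p) {v}), ← sup_assoc] at hx hR' ⊢
    rw [FF_sup, FF_span] at hx hR' ⊢
    obtain ⟨l1, hl1, h1⟩ := row_anti hM hR s hx.1
    obtain ⟨l2, hl2, h2⟩ := row_step hM hx.2 (FF_closed _) (FF_inv _) h1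
    have e1 := h2.uniq hR'
    have e2 : l1 = l := by omega
    rw [e2] at h1
    have h3 := row_eq hM hx.2 (FF_closed _) (FF_inv _) h1 hR' m
    have h4 := h_triple1 (bd_bd (k := ZMod p) (M := M)) (EE_mono (𝓛 := 𝓝 x) (LX_mono (FF_anti (M := M) (le_sup_left :
      W ≤ W ⊔ Submodule.span (ZMod p) (s : Set V))))) (EE_mono (LX_mono (inter_subset_left (t := Fv M v)))) m
    rw [ih hx.1 h1, h3, add_zero] at h4
    exact nonpos_iff_eq_zero.1 h4

end

/-! ### Boundedness of the isotropy ranks -/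

section
variable {k : Type*} [Field k] {V : Type*} [AddCommGroup V] [Module k V]

lemma lift_lin {r : ℕ} {U W : Submodule k V} {g : Fin r → V ⧸ U} (hg : LinearIndependent k g)
    (hW : ∀ i, g i ∈ W.map U.mkQ) : ∃ f : (Fin r → k) →ₗ[k] V, (∀ c, f c ∈ W) ∧ ∀ c, f c ∈ U → c = 0 := by
  choose w hw hwg using hW
  refine ⟨Fintype.linearCombination k w, fun c => ?_, fun c hc => ?_⟩
  · rw [Fintype.linearCombination_apply]
    exact Submodule.sum_mem _ fun i _ => W.smul_mem _ (hw i)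
  · have h0 : U.mkQ (Fintype.linearCombination k w c) = 0 := (Submodule.Quotient.mk_eq_zero U).2 hc
    rw [Fintype.linearCombination_apply, map_sum] at h0
    simp only [map_smul, hwg] at h0
    funext i
    exact Fintype.linearIndependent_iff.1 hg c h0 i

lemma exists_lin {r : ℕ} {U W : Submodule k V} (hUW : U ≤ W) (hfg : W.FG)
    (hr : Module.finrank k U + r ≤ Module.finrank k W) :
    ∃ f : (Fin r → k) →ₗ[k] V, (∀ c, f c ∈ W) ∧ ∀ c, f c ∈ U → c = 0 := by
  haveI : FiniteDimensional k W := Module.Finite.iff_fg.2 hfg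
  have h1 := LinearMap.finrank_range_add_finrank_ker (U.mkQ ∘ₗ W.subtype)
  have h2 : Module.finrank k (U.mkQ ∘ₗ W.subtype).ker = Module.finrank k U := by
    rw [LinearMap.ker_comp, Submodule.ker_mkQ]
    exact (Submodule.comapSubtypeEquivOfLe hUW).finrank_eq
  have h3 : (U.mkQ ∘ₗ W.subtype).range = W.map U.mkQ := by
    rw [LinearMap.range_comp, Submodule.range_subtype]
  rw [h3, h2] at h1
  obtain ⟨g, hg⟩ := exists_linearIndependent_of_le_finrank (R := k) (M := W.map U.mkQ) (n := r) (by omega)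
  exact lift_lin (hg.map' _ (Submodule.ker_subtype _)) fun i => (g i).2

end

section
variable {p : ℕ} [Fact p.Prime] {M : Type*} [MetricSpace M] [CompactSpace M]
variable {V : Type*} [AddCommGroup V] [Module (ZMod p) V] [MulAction (Multiplicative V) M]
variable [ContinuousConstSMul (Multiplicative V) M]

lemma row_le {n : ℕ} (hM : LocCoord M n) {x : M} {W W' : Submodule (ZMod p) V} (hWW : W ≤ W') (hfg : W'.FG) {l : ℕ}
    (hR : Row p x (FF M W) l) (hx : x ∈ FF M W') : ∃ l' ≤ l, Row p x (FF M W') l' := by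
  obtain ⟨s, hs⟩ := hfg
  have e : W ⊔ Submodule.span (ZMod p) s = W' := by rw [hs, sup_eq_right.2 hWW]
  have := row_anti hM hR s (by rwa [e])
  rwa [e] at this

lemma row_rel {n : ℕ} (hM : LocCoord M n) {x : M} {W W' : Submodule (ZMod p) V} (hWW : W ≤ W') (hfg : W'.FG) {l : ℕ}
    (hR : Row p x (FF M W) l) (hx : x ∈ FF M W') (hR' : Row p x (FF M W') l) (m : ℕ) :
    h bd (EE (ZMod p) (𝓝 x) (LX (FF M W))) (EE (ZMod p) (𝓝 x) (LX (FF M W'))) m = 0 := by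
  obtain ⟨s, hs⟩ := hfg
  have e : W ⊔ Submodule.span (ZMod p) s = W' := by rw [hs, sup_eq_right.2 hWW]
  have := row_eq' hM hR s (by rwa [e]) (by rwa [e]) m
  rwa [e] at this

/-- By Newman's theorem the dimension drops strictly at a vector acting nontrivially. -/
lemma row_vec {n : ℕ} [PreconnectedSpace M] (hM : LocStr (ZMod p) M n) {v : V} (hv : Fv M v ≠ univ) {x : M}
    (hx : x ∈ Fv M v) : ∃ l < n, Row p x (Fv M v) l := by
  obtain ⟨l, hl, hR⟩ := row_step hM.coord hx isClosed_univ (fun _ _ _ => mem_univ _) (row_univ hM x)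
  rw [univ_inter] at hR
  refine ⟨l, lt_of_le_of_ne hl ?_, hR⟩
  rintro rfl
  letI := actR M (lin1 p v)
  haveI := actR_cont (M := M) (lin1 p v)
  have h1 := Fx_top (p := p) (M := M) hM (by rw [Fx_lin1]; exact hv) (x := x) (by rw [Fx_lin1]; exact hx)
  rw [Fx_lin1, hR l, if_pos rfl] at h1
  exact one_ne_zero h1

/-- The lists contained in one of the fixed sets of `T`, or in the fixed set of `W`. -/
def ST (M : Type*) [MulAction (Multiplicative V) M] (W : Submodule (ZMod p) V) (T : List (Submodule (ZMod p) V)) :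
    Set (List M) := {t | t ∈ LX (FF M W) ∨ ∃ U ∈ T, t ∈ LX (FF M U)}

lemma ST_cons (W U : Submodule (ZMod p) V) (T : List (Submodule (ZMod p) V)) :
    ST M W (U :: T) = ST M W T ∪ LX (FF M U) := by
  ext t
  simp only [ST, mem_union, Set.mem_ofPred_eq, List.mem_cons, exists_eq_or_imp]
  generalize (∃ U ∈ T, t ∈ LX (FF M U)) = P
  tauto

lemma ST_inter {W U : Submodule (ZMod p) V} (hU : U ≤ W) (T : List (Submodule (ZMod p) V)) :
    ST M W T ∩ LX (FF M U) = ST M W (T.map (· ⊔ U)) := by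
  ext t
  simp only [ST, mem_inter_iff, Set.mem_ofPred_eq, List.mem_map, exists_exists_and_eq_and, FF_sup, ← LX_inter]
  constructor
  · rintro ⟨h1 | ⟨U', hU', h1⟩, h2⟩
    · exact Or.inl h1
    · exact Or.inr ⟨U', hU', h1, h2⟩
  · rintro (h1 | ⟨U', hU', h1, h2⟩)
    · exact ⟨Or.inl h1, LX_mono (FF_anti hU) h1⟩
    · exact ⟨Or.inr ⟨U', hU', h1⟩, h2⟩

lemma subCl_ST (W : Submodule (ZMod p) V) (T : List (Submodule (ZMod p) V)) : SubCl (ST M W T) := by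
  rintro s t hst (h | ⟨U, hU, h⟩)
  · exact Or.inl (subCl_LX _ s t hst h)
  · exact Or.inr ⟨U, hU, subCl_LX _ s t hst h⟩

/-- A family of fixed sets, closed under intersection, all with the same local homology as the
smallest one has a union with that local homology. -/
lemma ST_van {x : M} {W : Submodule (ZMod p) V} {𝒰 : Set (Submodule (ZMod p) V)}
    (hle : ∀ U ∈ 𝒰, U ≤ W) (hsup : ∀ U ∈ 𝒰, ∀ U' ∈ 𝒰, U ⊔ U' ∈ 𝒰)
    (hrel : ∀ U ∈ 𝒰, ∀ m, h bd (EE (ZMod p) (𝓝 x) (LX (FF M U))) (EE (ZMod p) (𝓝 x) (LX (FF M W))) m = 0) (j : ℕ) :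
    ∀ T : List (Submodule (ZMod p) V), T.length = j → (∀ U ∈ T, U ∈ 𝒰) →
      ∀ m, h bd (EE (ZMod p) (𝓝 x) (ST M W T)) (EE (ZMod p) (𝓝 x) (LX (FF M W))) m = 0 := by
  induction j with
  | zero =>
    intro T hT _ m
    rw [List.length_eq_zero_iff.1 hT]
    have : ST M W [] = LX (FF M W) := by ext; simp [ST]
    rw [this, h_eq_zero]
    intro a ha _
    exact ⟨0, zero_mem _, by simpa using ha⟩
  | succ j ih =>
    intro T hT hT𝒰 m
    match T, hT with
    | U :: T, hT =>
    have hU : U ∈ 𝒰 := hT𝒰 U (by simp)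
    have hT' : ∀ U' ∈ T, U' ∈ 𝒰 := fun U' h => hT𝒰 U' (by simp [h])
    have hlen : T.length = j := by simpa using hT
    have ih1 := ih T hlen hT'
    have ih2 := ih (T.map (· ⊔ U)) (by simpa using hlen) (by
      intro U' hU'
      obtain ⟨U'', h1, rfl⟩ := List.mem_map.1 hU'
      exact hsup _ (hT' _ h1) _ hU)
    rw [ST_cons, EE_sup]
    have hWT : ∀ T' : List (Submodule (ZMod p) V), LX (FF M W) ⊆ ST M W T' := fun T' t ht => Or.inl ht
    have h1 := h_triple1 (bd_bd (k := ZMod p) (M := M)) (A := EE (ZMod p) (𝓝 x) (ST M W T) ⊔ EE (ZMod p) (𝓝 x) (LX (FF M U)))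
      (B := EE (ZMod p) (𝓝 x) (LX (FF M U))) (C := EE (ZMod p) (𝓝 x) (LX (FF M W))) le_sup_right
      (EE_mono (LX_mono (FF_anti (hle U hU)))) m
    rw [hrel U hU, add_zero] at h1
    have h2 := h_excision (cx_EE (k := ZMod p) (𝓛 := 𝓝 x) (subCl_ST (M := M) W T)) (cx_EE (k := ZMod p) (𝓛 := 𝓝 x) (subCl_LX (FF M U)))
      (EE_inf _ _).le (EE_mono inter_subset_right) m
    rw [ST_inter (hle U hU)] at h2
    have hsub : ST M W (T.map (· ⊔ U)) ⊆ ST M W T := by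
      rw [← ST_inter (hle U hU)]; exact inter_subset_left
    have h3 : h bd (EE (ZMod p) (𝓝 x) (ST M W T)) (EE (ZMod p) (𝓝 x) (ST M W (T.map (· ⊔ U)))) m ≤ 0 := by
      cases m with
      | zero =>
        rw [← ih1 0]
        exact h_bottom (EE_mono (hWT _)) (EE_zero_le _ _)
      | succ m =>
        have := h_triple3 (bd_bd (k := ZMod p) (M := M)) (EE_mono (k := ZMod p) (𝓛 := 𝓝 x) hsub) (EE_mono (hWT (T.map (· ⊔ U)))) m
        rwa [ih1, ih2, add_zero] at this
    exact nonpos_iff_eq_zero.1 (h1.trans (h2.trans h3))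

/-- The homology of the fixed set of `U` relative to a union of smaller fixed sets with the local homology of
the fixed set of `W`. -/
lemma gap_row {x : M} {U W : Submodule (ZMod p) V} {S : Set (List M)} (hUW : U ≤ W) (hWS : LX (FF M W) ⊆ S)
    (hSU : S ⊆ LX (FF M U)) {l l0 : ℕ} (hl : l ≠ l0) (hR0 : Row p x (FF M U) l0) (hRW : Row p x (FF M W) l)
    (hvan : ∀ m, h bd (EE (ZMod p) (𝓝 x) S) (EE (ZMod p) (𝓝 x) (LX (FF M W))) m = 0) :
    (∀ m, h bd (EE (ZMod p) (𝓝 x) (LX (FF M U))) (EE (ZMod p) (𝓝 x) S) m ≤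
      (if m = l0 then 1 else 0) + if m = l + 1 then 1 else 0) ∧
    h bd (EE (ZMod p) (𝓝 x) (LX (FF M U))) (EE (ZMod p) (𝓝 x) S) l0 ≠ 0 := by
  have hb := bd_bd (k := ZMod p) (M := M)
  constructor
  · intro m
    cases m with
    | zero =>
      have h1 := h_bottom (del := bd) (A := EE (ZMod p) (𝓝 x) (LX (FF M U))) (B := EE (ZMod p) (𝓝 x) S)
        (C := NN (ZMod p) (𝓝 x)) (NN_le_EE _) (EE_zero_NN _)
      rw [hR0 0] at h1
      exact h1.trans le_self_add
    | succ m =>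
      have h1 := h_triple3 hb (EE_mono (k := ZMod p) (𝓛 := 𝓝 x) hSU) (EE_mono hWS) m
      rw [hvan, add_zero] at h1
      have h2 := h_triple3 hb (EE_mono (k := ZMod p) (𝓛 := 𝓝 x) (LX_mono (FF_anti (M := M) hUW))) (NN_le_EE _) m
      rw [hR0 (m + 1), hRW m] at h2
      refine (h1.trans h2).trans (le_of_eq ?_)
      simp
  · intro h0
    have h1 := h_triple1 hb (EE_mono (k := ZMod p) (𝓛 := 𝓝 x) hSU) (NN_le_EE _) l0
    have h2 := h_triple1 hb (EE_mono (k := ZMod p) (𝓛 := 𝓝 x) hWS) (NN_le_EE _) l0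
    rw [hvan, hRW l0, if_neg hl.symm, add_zero] at h2
    rw [hR0 l0, if_pos rfl, h0, zero_add] at h1
    exact absurd (h1.trans h2) (by decide)

/-- The situation excluded by the rank inequality: a subspace `U` whose row is higher than the common
row of all the larger subspaces of `W`, of codimension at least two. -/
lemma no_gap {n : ℕ} (hM : LocCoord M n) {x : M} {U W : Submodule (ZMod p) V} (hUW : U ≤ W) (hfg : W.FG)
    (hx : x ∈ FF M W) (hr : Module.finrank (ZMod p) U + 2 ≤ Module.finrank (ZMod p) W) {l l0 : ℕ} (hl : l ≠ l0)
    (hR0 : Row p x (FF M U) l0) (hR : ∀ U', U < U' → U' ≤ W → Row p x (FF M U') l) : False := by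
  classical
  obtain ⟨f, hfW, hfU⟩ := exists_lin hUW hfg hr
  letI := actR M f
  haveI := actR_cont (M := M) f
  have hsm : ∀ (q : QQ p 2) (z : M), q • z = Multiplicative.ofAdd (f (Multiplicative.toAdd q)) • z := fun _ _ => rfl
  have hUlt : ∀ q : QQ p 2, q ≠ 1 → U < U ⊔ Submodule.span (ZMod p) {f (Multiplicative.toAdd q)} := by
    intro q hq
    refine lt_of_le_of_ne le_sup_left fun h1 => hq ?_
    have h2 : f (Multiplicative.toAdd q) ∈ U := by
      rw [h1]; exact Submodule.mem_sup_right (Submodule.mem_span_singleton_self _)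
    exact Multiplicative.toAdd.injective (hfU _ h2)
  have hUle : ∀ q : QQ p 2, U ⊔ Submodule.span (ZMod p) {f (Multiplicative.toAdd q)} ≤ W := fun q =>
    sup_le hUW (by rw [Submodule.span_singleton_le_iff_mem]; exact hfW _)
  have hWlt : U < W := (hUlt _ (gen_ne_one 0)).trans_le (hUle (gen p 0))
  have hRW := hR W hWlt le_rfl
  obtain ⟨T, hT⟩ : ∃ T : List (Submodule (ZMod p) V), ∀ U', U' ∈ T ↔
      ∃ q : QQ p 2, q ≠ 1 ∧ U ⊔ Submodule.span (ZMod p) {f (Multiplicative.toAdd q)} = U' :=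
    ⟨((Finset.univ.filter fun q : QQ p 2 => q ≠ 1).toList).map
      fun q => U ⊔ Submodule.span (ZMod p) {f (Multiplicative.toAdd q)}, fun U' => by
        simp only [List.mem_map, Finset.mem_toList, Finset.mem_filter, Finset.mem_univ, true_and]⟩
  -- the singular lists of `FF M U` lie in the fixed sets of larger subspaces
  have hS : LX (FF M U) ∩ SQ (QQ p 2) = ST M W T := by
    ext t
    constructor
    · rintro ⟨h1, q, hq, h2⟩
      refine Or.inr ⟨_, (hT _).2 ⟨q, hq, rfl⟩, ?_⟩
      rw [FF_sup, FF_span, ← LX_inter]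
      exact ⟨h1, h2⟩
    · rintro (h1 | ⟨U', hU', h1⟩)
      · exact ⟨LX_mono (FF_anti hUW) h1, gen p 0, gen_ne_one 0, fun z hz => h1 z hz _ (hfW _)⟩
      · obtain ⟨q, hq, rfl⟩ := (hT _).1 hU'
        rw [FF_sup, FF_span, ← LX_inter] at h1
        exact ⟨h1.1, q, hq, h1.2⟩
  have hvan := ST_van (M := M) (x := x) (W := W) (𝒰 := {U' | U < U' ∧ U' ≤ W}) (fun U' h => h.2)
    (fun U1 h1 U2 h2 => ⟨h1.1.trans_le le_sup_left, sup_le h1.2 h2.2⟩)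
    (fun U' h' => row_rel hM h'.2 hfg (hR U' h'.1 h'.2) hx hRW) _ T rfl (by
      intro U' hU'
      obtain ⟨q, hq, rfl⟩ := (hT _).1 hU'
      exact ⟨hUlt q hq, hUle q⟩)
  rw [← hS] at hvan
  have hWS : LX (FF M W) ⊆ LX (FF M U) ∩ SQ (QQ p 2) := by rw [hS]; exact fun t ht => Or.inl ht
  obtain ⟨hrow, hne⟩ := gap_row hUW hWS inter_subset_left hl hR0 hRW hvan
  -- two lines of homology, that is `b = 1`, would give `2 + N + 1 ≤ N + 2`
  have key := AL_rank (p := p) (r := 2) (N := n + 4 + l0 + l + 2) hM (by omega) (𝓛 := 𝓝 x)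
    (locF_nhds fun q => hx _ (hfW _)) (FF_closed U) (fun q z hz => FF_inv U _ z hz)
    (fun m hm => by
      have := hrow m
      rw [if_neg (by omega), if_neg (by omega), add_zero] at this
      exact nonpos_iff_eq_zero.1 this) (by norm_num) (b := 1) (fun m => by
      refine (Finset.sum_le_sum fun i _ => hrow i).trans ?_
      rw [Finset.sum_add_distrib, Finset.sum_ite_eq', Finset.sum_ite_eq']
      exact add_le_add (by split_ifs <;> simp) (by split_ifs <;> simp)) ⟨l0, hne⟩
  omega

/-- The ranks of the isotropy groups are bounded. -/
theorem isotropy_bound {n : ℕ} [PreconnectedSpace M] (hM : LocStr (ZMod p) M n) (hfaith : ∀ v : V, v ≠ 0 → Fv M v ≠ univ) :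
    ∃ R, ∀ (x : M) (W : Submodule (ZMod p) V), W.FG → x ∈ FF M W → Module.finrank (ZMod p) W < R := by
  classical
  by_contra hcon
  push Not at hcon
  have hrow : ∀ {x : M} {W : Submodule (ZMod p) V}, W.FG → x ∈ FF M W → ∃ l ≤ n, Row p x (FF M W) l := by
    intro x W hfg hx
    refine row_le hM.coord bot_le hfg ?_ hx
    rw [FF_bot]
    exact row_univ hM x
  -- `A l`: there are arbitrarily large isotropy groups with local dimension at least `l`
  let A : ℕ → Prop := fun l => ∀ R, ∃ (x : M) (W : Submodule (ZMod p) V) (l' : ℕ), W.FG ∧ x ∈ FF M W ∧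
    R ≤ Module.finrank (ZMod p) W ∧ Row p x (FF M W) l' ∧ l ≤ l'
  have hA0 : A 0 := by
    intro R
    obtain ⟨x, W, hfg, hx, hR⟩ := hcon R
    obtain ⟨l, -, hl⟩ := hrow hfg hx
    exact ⟨x, W, l, hfg, hx, hR, hl, Nat.zero_le _⟩
  have hAn : ¬ A (n + 1) := by
    intro h
    obtain ⟨x, W, l', hfg, hx, -, hl, hle⟩ := h 0
    obtain ⟨l, hln, hl'⟩ := hrow hfg hx
    have := hl.uniq hl'
    omega
  obtain ⟨l, hAl, hAl'⟩ : ∃ l, A l ∧ ¬ A (l + 1) := by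
    by_contra hc
    push Not at hc
    exact hAn (Nat.rec hA0 hc (n + 1))
  obtain ⟨R0, hR0⟩ := not_forall.1 hAl'
  push Not at hR0
  obtain ⟨x, W, l', hfg, hx, hrank, hRW, hle⟩ := hAl (R0 + 2)
  have hll : l' = l := by
    have := hR0 x W l' hfg hx (by omega) hRW
    omega
  subst hll
  haveI : FiniteDimensional (ZMod p) W := Module.Finite.iff_fg.2 hfg
  have hfgU : ∀ U', U' ≤ W → U'.FG := fun U' hU' =>
    Module.Finite.iff_fg.1 (Submodule.finiteDimensional_of_le hU')
  -- the row of `W` lies below the dimension of `M`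
  have hln : l' < n := by
    have hW0 : W ≠ ⊥ := by
      rintro rfl
      rw [finrank_bot] at hrank
      omega
    obtain ⟨v, hvW, hv⟩ := Submodule.exists_mem_ne_zero_of_ne_bot hW0
    obtain ⟨l1, hl1, h1⟩ := row_vec hM (hfaith v hv) (hx v hvW)
    rw [← FF_span (p := p)] at h1
    obtain ⟨l2, hl2, h2⟩ := row_le hM.coord (by rwa [Submodule.span_singleton_le_iff_mem]) hfg h1 hx
    have := hRW.uniq h2
    omega
  -- a subspace of maximal rank among those with local dimension above that of `W` contradicts `no_gap`
  let B : ℕ → Prop := fun j => ∃ U ≤ W, (∃ l0, l' < l0 ∧ Row p x (FF M U) l0) ∧ Module.finrank (ZMod p) U = j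
  have hB0 : B 0 := ⟨⊥, bot_le, ⟨n, hln, by rw [FF_bot]; exact row_univ hM x⟩, finrank_bot _ _⟩
  have hBlt : ∀ j, B j → j < R0 := by
    rintro j ⟨U, hU, ⟨l0, hl0, hR⟩, rfl⟩
    by_contra hc
    have := hR0 x U l0 (hfgU U hU) (FF_anti hU hx) (by omega) hR
    omega
  obtain ⟨U, hU, ⟨l0, hl0, hRU⟩, hUj⟩ := Nat.findGreatest_spec (P := B) (Nat.zero_le R0) hB0
  have hUR := hBlt _ ⟨U, hU, ⟨l0, hl0, hRU⟩, rfl⟩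
  refine no_gap hM.coord hU hfg hx (by omega) (l := l') (by omega) hRU fun U' hUU' hU'W => ?_
  haveI : FiniteDimensional (ZMod p) U' := Submodule.finiteDimensional_of_le hU'W
  obtain ⟨l2, -, h2⟩ := hrow (hfgU U' hU'W) (FF_anti hU'W hx)
  obtain ⟨l3, hl3, h3⟩ := row_le hM.coord hU'W hfg h2 hx
  have e3 := h3.uniq hRW
  have hle2 : l2 ≤ l' := by
    by_contra hc
    have hB : B (Module.finrank (ZMod p) U') := ⟨U', hU'W, ⟨l2, by omega, h2⟩, rfl⟩
    have := Nat.le_findGreatest (hBlt _ hB).le hB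
    have := Submodule.finrank_lt_finrank_of_lt hUU'
    omega
  have : l2 = l' := by omega
  rwa [this] at h2

end

/-! ### No faithful action on a connected manifold -/

section
variable {k : Type*} [Field k] {V : Type*} [AddCommGroup V] [Module k V]

/-- The dual of a finite-dimensional subquotient is finite-dimensional. -/
lemma L_dual {Z B : Submodule k V} (h : L Z B < ⊤) : L B.dualAnnihilator Z.dualAnnihilator < ⊤ := by
  have h1 : IsFiniteLength k (Z.map B.mkQ) := Module.length_ne_top_iff.1 h.ne
  have h2 : IsNoetherian k (Z.map B.mkQ) := (isFiniteLength_iff_isNoetherian_isArtinian.1 h1).1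
  have h3 : Module.Finite k (Z.map B.mkQ) := inferInstance
  obtain ⟨r, g, hg⟩ := Submodule.fg_iff_exists_fin_generating_family.1 (Module.Finite.iff_fg.1 h3)
  have h4 : ∀ i, g i ∈ Z.map B.mkQ := fun i => hg ▸ Submodule.subset_span (mem_range_self i)
  choose z hz hzg using h4
  refine lt_of_le_of_lt (L_map (LinearMap.pi fun i => Module.Dual.eval k V (z i)) (P' := ⊤) (Q' := ⊥)
    (fun _ _ => trivial) fun a ha h0 => ?_) (b := L (⊤ : Submodule k (Fin r → k)) ⊥) ?_
  · have h0' : ∀ i, a (z i) = 0 := fun i => congrFun ((Submodule.mem_bot k).1 h0) i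
    rw [Submodule.mem_dualAnnihilator] at ha ⊢
    let a' : V ⧸ B →ₗ[k] k := B.liftQ a fun b hb => ha b hb
    have h5 : Z.map B.mkQ ≤ a'.ker := by
      rw [← hg, Submodule.span_le]
      rintro _ ⟨i, rfl⟩
      rw [← hzg i]
      exact h0' i
    exact fun w hw => h5 ⟨w, hw, rfl⟩
  · rw [lt_top_iff_ne_top, L, Module.length_ne_top_iff, isFiniteLength_iff_isNoetherian_isArtinian]
    exact ⟨inferInstance, inferInstance⟩

end

section
variable {p : ℕ} [Fact p.Prime] {M : Type*} [MetricSpace M] [CompactSpace M]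

lemma mem_NN_top {k : Type*} [Field k] {m : ℕ} {a : Ch k M} :
    a ∈ NN k (⊤ : Filter M) m ↔ ∀ φ ∈ I k m (∅ : Set M), a φ = 0 := by
  rw [mem_NN]
  constructor
  · rintro ⟨U, hU, h⟩
    rw [mem_top.1 hU, compl_univ] at h
    exact h
  · intro h
    exact ⟨univ, univ_mem, by rwa [compl_univ]⟩

/-- The reduced homology of `M` is finite-dimensional, by duality with Alexander–Spanier cohomology. -/
lemma finite_hom {k : Type*} [Field k] {n : ℕ} (hM : LocStr k M n) (m : ℕ) : h bd (AA k M) (NN k (⊤ : Filter M)) m < ⊤ := by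
  let B : Submodule k (List M → k) := (I k m (∅ : Set M)).map d ⊔ I k (m + 1) univ
  have h1 : L (Zc k (m + 1) (univ : Set M)) B < ⊤ := by
    refine lt_of_le_of_lt (L_split (Bc k (m + 1) univ)) (ENat.add_lt_top.2 ⟨finite_coh hM (m + 1), ?_⟩)
    refine lt_of_le_of_lt (L_le_one (d fun _ => 1) ?_) (by decide)
    rintro w ⟨-, hw⟩
    obtain ⟨ψ, hψ⟩ := mem_Bc.1 hw
    refine ⟨ψ [], Submodule.mem_sup.2 ⟨d (ψ - ψ [] • fun _ => 1), ⟨_, ?_, rfl⟩, _, hψ, ?_⟩⟩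
    · cases m with
      | zero => exact mem_I_zero.2 (by simp)
      | succ m => exact mem_I_empty (by omega) _
    · rw [map_sub, map_smul]; abel
  refine lt_of_le_of_lt ?_ (L_dual h1)
  refine L_mono ?_ ?_
  · rintro a ⟨ha, hb⟩
    rw [Submodule.mem_dualAnnihilator]
    intro w hw
    obtain ⟨_, ⟨φ, hφ, rfl⟩, z, hz, rfl⟩ := Submodule.mem_sup.1 hw
    rw [map_add, mem_AA.1 ha z hz, add_zero]
    exact mem_NN_top.1 hb φ hφ
  · rintro a - ha
    rw [Submodule.mem_dualAnnihilator] at ha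
    obtain ⟨a', h2, h3⟩ := exists_extend (d : (List M → k) →ₗ[k] (List M → k)) ⊤ (I k (m + 2) univ) a
      fun u _ hu => ha u hu
    refine Submodule.mem_sup_left ⟨a', mem_AA.2 h2, ?_⟩
    ext φ
    exact h3 φ trivial

lemma EE_top_nil {k : Type*} [Field k] {S : Set (List M)} (hS : ∀ t ∈ S, t = []) :
    EE k (⊤ : Filter M) S = NN k ⊤ := by
  funext m
  refine le_antisymm ?_ (NN_le_EE S m)
  intro a ha
  cases m with
  | zero => exact AA_zero_le ha.1
  | succ m =>
    have h1 := (mem_EE.1 ha).2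
    have h2 : P S a = 0 := by
      ext φ
      refine mem_AA.1 ha.1 _ (mem_I.2 ⟨fun h => by omega, fun y _ => ⟨univ, univ_mem, fun t ht _ => ?_⟩⟩)
      rw [cut_apply, if_neg]
      intro h
      rw [hS t h] at ht
      simp at ht
    rwa [h2, sub_zero] at h1

/-- A point of `X` represents a nonzero class in degree zero. -/
lemma point_class {k : Type*} [Field k] {X : Set M} {x : M} (hx : x ∈ X) :
    h bd (EE k (⊤ : Filter M) (LX X)) (NN k ⊤) 0 ≠ 0 := by
  intro h0
  rw [h_eq_zero] at h0
  have hmem : [x] ∈ LX X := by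
    intro z hz
    rw [List.mem_singleton.1 hz]
    exact hx
  let a : Ch k M := LinearMap.proj [x]
  have haA : a ∈ EE k (⊤ : Filter M) (LX X) 1 := by
    refine mem_EE.2 ⟨mem_AA.2 fun φ hφ => ?_, ?_⟩
    · obtain ⟨U, hU, h2⟩ := (mem_I.1 hφ).2 x trivial
      exact h2 [x] rfl fun z hz => by rw [List.mem_singleton.1 hz]; exact mem_of_mem_nhds hU
    · have : a - P (LX X) a = 0 := by
        ext φ
        change φ [x] - cut (LX X) φ [x] = 0
        rw [cut_apply, if_pos hmem, sub_self]
      rw [this]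
      exact zero_mem _
  have hab : bd a ∈ NN k (⊤ : Filter M) 0 := by
    refine mem_NN_top.2 fun φ hφ => ?_
    change d φ [x] = 0
    rw [d_cons, d_nil, sub_zero]
    exact mem_I_zero.1 hφ
  obtain ⟨a', ha', h1⟩ := h0 a haA hab
  -- the cochain equal to one on points is a cocycle that takes the value one on `a`
  let φ : List M → k := fun t => if t.length = 1 then 1 else 0
  have h2 := mem_NN_top.1 h1 φ (mem_I_empty (by omega) _)
  have h3 : a' (d φ) = 0 := by
    refine mem_AA.1 ha'.1 _ (mem_I.2 ⟨fun h => by omega, fun y _ => ⟨univ, univ_mem, fun t ht _ => ?_⟩⟩)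
    match t, ht with
    | [y, z], _ => simp [d_cons, sh, φ]
  rw [LinearMap.sub_apply, bd_apply, h3, sub_zero] at h2
  change φ [x] = 0 at h2
  simp [φ] at h2

variable {V : Type*} [AddCommGroup V] [Module (ZMod p) V] [MulAction (Multiplicative V) M]
variable [ContinuousConstSMul (Multiplicative V) M]

/-- The Smith inequality for the fixed set of a finite set of vectors. -/
lemma sum_FF {n N : ℕ} (hM : LocCoord M n) (hN : n + 4 ≤ N) (s : Finset V) :
    ∑ i ∈ Finset.range N, h bd (EE (ZMod p) (⊤ : Filter M) (LX (FF M (Submodule.span (ZMod p) (s : Set V))))) (NN (ZMod p) ⊤) i ≤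
      ∑ i ∈ Finset.range N, h bd (AA (ZMod p) M) (NN (ZMod p) (⊤ : Filter M)) i := by
  classical
  induction s using Finset.induction_on with
  | empty => rw [Finset.coe_empty, Submodule.span_empty, FF_bot, LX_univ, EE_univ]
  | insert v s hv ih =>
    rw [Finset.coe_insert, Submodule.span_insert, sup_comm, FF_sup, FF_span]
    obtain ⟨D, Nm, H⟩ := smithV hM hN (locV_top (p := p) (v := v)) (FF_closed (M := M) (Submodule.span (ZMod p) (s : Set V)))
      (FF_inv _)
    have := H.sum_le N 0 (by omega)
    simp only [zero_add] at this
    exact this.trans ih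

/-- An infinite elementary abelian `p`-group does not act faithfully on a compact connected manifold. -/
theorem no_faithful {n : ℕ} [PreconnectedSpace M] [Nonempty M] (hM : LocStr (ZMod p) M n)
    (hfaith : ∀ v : V, v ≠ 0 → Fv M v ≠ univ) (hinf : ¬ Module.Finite (ZMod p) V) : False := by
  classical
  obtain ⟨R, hR⟩ := isotropy_bound hM hfaith
  -- `W` is taken of maximal rank with nonempty fixed set; any complement then acts freely on that set
  let A : ℕ → Prop := fun j => ∃ (W : Submodule (ZMod p) V), W.FG ∧ (FF M W).Nonempty ∧ Module.finrank (ZMod p) W = j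
  have hA0 : A 0 := ⟨⊥, Submodule.fg_bot, by rw [FF_bot]; exact univ_nonempty, finrank_bot _ _⟩
  obtain ⟨W, hfg, ⟨x, hx⟩, hWj⟩ := Nat.findGreatest_spec (P := A) (Nat.zero_le R) hA0
  haveI : FiniteDimensional (ZMod p) W := Module.Finite.iff_fg.2 hfg
  have hmax : ∀ v, v ∉ W → FF M W ∩ Fv M v = ∅ := by
    intro v hv
    rw [← FF_span (p := p), ← FF_sup]
    by_contra hne
    have hfg' : (W ⊔ Submodule.span (ZMod p) {v}).FG := hfg.sup (Submodule.fg_span_singleton v)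
    haveI : FiniteDimensional (ZMod p) ↥(W ⊔ Submodule.span (ZMod p) {v}) := Module.Finite.iff_fg.2 hfg'
    obtain ⟨z, hz⟩ := nonempty_iff_ne_empty.2 hne
    have h1 := Nat.le_findGreatest (P := A) (hR z _ hfg' hz).le ⟨_, hfg', ⟨z, hz⟩, rfl⟩
    have h2 : W < W ⊔ Submodule.span (ZMod p) {v} := by
      refine lt_of_le_of_ne le_sup_left fun h => hv ?_
      rw [h]
      exact Submodule.mem_sup_right (Submodule.mem_span_singleton_self v)
    have := Submodule.finrank_lt_finrank_of_lt h2
    omega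
  have hsum : ∑ i ∈ Finset.range (n + 4), h bd (AA (ZMod p) M) (NN (ZMod p) (⊤ : Filter M)) i < ⊤ :=
    WithTop.sum_lt_top.2 fun i _ => finite_hom hM i
  obtain ⟨b, hb⟩ := ENat.ne_top_iff_exists.1 hsum.ne
  -- a group of rank `b * (n + 6) + 1` meeting `W` trivially exceeds the rank bound
  have hinfQ : ¬ Module.Finite (ZMod p) (V ⧸ W) := fun hq => hinf (Module.Finite.of_submodule_quotient W)
  have hrank : ((b * (n + 4 + 2) + 1 : ℕ) : Cardinal) ≤ Module.rank (ZMod p) (V ⧸ W) := by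
    have : Cardinal.aleph0 ≤ Module.rank (ZMod p) (V ⧸ W) := by
      rw [← not_lt, Module.rank_lt_aleph0_iff]
      exact hinfQ
    exact (Cardinal.natCast_lt_aleph0).le.trans this
  obtain ⟨g, hg⟩ := exists_linearIndependent_of_le_rank hrank
  obtain ⟨f, -, hf⟩ := lift_lin (W := ⊤) hg (by
    intro i
    rw [Submodule.map_top, Submodule.range_mkQ]
    trivial)
  letI := actR M f
  haveI := actR_cont (M := M) f
  have hnil : ∀ t ∈ LX (FF M W) ∩ SQ (QQ p (b * (n + 4 + 2) + 1)), t = [] := by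
    rintro t ⟨h1, q, hq, h2⟩
    by_contra hne
    obtain ⟨z, hz⟩ := List.exists_mem_of_ne_nil t hne
    have hqW : f (Multiplicative.toAdd q) ∉ W := fun h => hq (Multiplicative.toAdd.injective (hf _ h))
    have : z ∈ FF M W ∩ Fv M (f (Multiplicative.toAdd q)) := ⟨h1 z hz, h2 z hz⟩
    rw [hmax _ hqW] at this
    exact this
  have hE := EE_top_nil (k := ZMod p) hnil
  have hvan : ∀ m, n + 4 ≤ m → h bd (EE (ZMod p) (⊤ : Filter M) (LX (FF M W))) (NN (ZMod p) ⊤) m = 0 :=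
    fun m hm => EE_van hM.coord opnF_top (FF_closed W) hm
  have key := AL_rank (p := p) (r := b * (n + 4 + 2) + 1) (N := n + 4) hM.coord le_rfl (𝓛 := ⊤) locF_top (FF_closed W)
    (fun q z hz => FF_inv W _ z hz) (by rw [hE]; exact hvan) (by omega) (b := b) (by
      rw [hE]
      intro m
      obtain ⟨s, hs⟩ := hfg
      calc ∑ i ∈ Finset.range m, h bd (EE (ZMod p) (⊤ : Filter M) (LX (FF M W))) (NN (ZMod p) ⊤) i
          ≤ ∑ i ∈ Finset.range (n + 4), h bd (EE (ZMod p) (⊤ : Filter M) (LX (FF M W))) (NN (ZMod p) ⊤) i := by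
            refine Finset.sum_le_sum_of_ne_zero fun i _ hi => ?_
            rw [Finset.mem_range]
            by_contra hc
            exact hi (hvan i (by omega))
        _ ≤ (b : ℕ∞) := by
            rw [hb, ← hs]
            exact sum_FF hM.coord le_rfl s
        _ ≤ b + 1 := le_self_add) (by rw [hE]; exact ⟨0, point_class hx⟩)
  omega

end

/-! ### Reduction to a connected manifold -/

/-- The version of `no_faithful` that does not fix a metric. -/
lemma no_faithful' {p : ℕ} [Fact p.Prime] {C : Type*} [TopologicalSpace C] [TopologicalSpace.MetrizableSpace C] [CompactSpace C]
    [PreconnectedSpace C] [Nonempty C] {V : Type*} [AddCommGroup V] [Module (ZMod p) V] [MulAction (Multiplicative V) C]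
    [ContinuousConstSMul (Multiplicative V) C] {n : ℕ}
    (hC : ∀ x : C, ∃ e : OpenPartialHomeomorph C (Fin n → ℝ), x ∈ e.source)
    (hfaith : ∀ v : V, v ≠ 0 → ∃ x : C, Multiplicative.ofAdd v • x ≠ x) (hinf : ¬ Module.Finite (ZMod p) V) : False := by
  letI : MetricSpace C := TopologicalSpace.metrizableSpaceMetric C
  refine no_faithful (M := C) (V := V) (locStr (k := ZMod p) hC) (fun v hv h => ?_) hinf
  obtain ⟨x, hx⟩ := hfaith v hv
  exact hx (h.symm ▸ mem_univ x : x ∈ Fv C v)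

lemma directSum_infinite (p : ℕ) [Fact p.Prime] : Infinite (DirectSum ℕ fun _ : ℕ => ZMod p) :=
  Infinite.of_injective (fun i => DirectSum.of (fun _ : ℕ => ZMod p) i 1) fun i j hij => by
    by_contra hne
    have := DFunLike.congr_fun hij i
    rw [DirectSum.of_eq_same, DirectSum.of_eq_of_ne _ _ _ hne] at this
    exact one_ne_zero this

/-- An infinite simple group acts trivially on the components of a compact locally connected space. -/
lemma trivial_on_components {Γ : Type*} [Group Γ] [IsSimpleGroup Γ] [Infinite Γ] {M : Type*} [TopologicalSpace M]
    [CompactSpace M] [LocallyConnectedSpace M] [MulAction Γ M] [ContinuousConstSMul Γ M] (γ : Γ) (x : M) :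
    γ • x ∈ connectedComponent x := by
  letI : MulAction Γ (ConnectedComponents M) :=
    { smul := fun γ c => (continuous_const_smul γ : Continuous fun z : M => γ • z).connectedComponentsMap c
      one_smul := fun c => by
        obtain ⟨z, rfl⟩ := ConnectedComponents.surjective_coe c
        exact congrArg _ (one_smul Γ z)
      mul_smul := fun a b c => by
        obtain ⟨z, rfl⟩ := ConnectedComponents.surjective_coe c
        exact congrArg _ (mul_smul a b z) }
  haveI : Finite (ConnectedComponents M) := finite_of_compact_of_discrete
  have hker : (MulAction.toPermHom Γ (ConnectedComponents M)).ker = ⊤ := by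
    refine (MonoidHom.normal_ker _).eq_bot_or_eq_top.resolve_left fun h => ?_
    exact not_finite_iff_infinite.2 ‹Infinite Γ› (Finite.of_injective _ ((MonoidHom.ker_eq_bot_iff _).1 h))
  have hγ : γ ∈ (MulAction.toPermHom Γ (ConnectedComponents M)).ker := by rw [hker]; trivial
  have h1 := Equiv.congr_fun (MonoidHom.mem_ker.1 hγ) (x : ConnectedComponents M)
  exact ConnectedComponents.coe_eq_coe'.1 h1

/-- The action on the finite set of components is trivial since `Γ` is infinite and simple. Were it nontrivial
on some component, it would be faithful there, contradicting `no_faithful`. -/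
theorem reduction (p : ℕ) [Fact p.Prime] (Γ : Type*) [Group Γ] [IsSimpleGroup Γ] (H : Subgroup Γ)
    (e : H ≃* Multiplicative (DirectSum ℕ fun _ : ℕ => ZMod p)) (M : Type*) [TopologicalSpace M] [CompactSpace M] [T2Space M]
    (n : ℕ) [ChartedSpace (EuclideanSpace ℝ (Fin n)) M] [MulAction Γ M] [ContinuousConstSMul Γ M] (γ : Γ) (x : M) :
    γ • x = x := by
  by_contra hγ
  haveI := directSum_infinite p
  haveI : Infinite H := Infinite.of_injective (fun v => e.symm (Multiplicative.ofAdd v))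
    (e.symm.injective.comp Multiplicative.ofAdd.injective)
  haveI : Infinite Γ := Infinite.of_injective (H.subtype) H.subtype_injective
  haveI : SecondCountableTopology M := ChartedSpace.secondCountable_of_sigmaCompact (EuclideanSpace ℝ (Fin n)) M
  haveI : LocallyConnectedSpace M := ChartedSpace.locallyConnectedSpace (EuclideanSpace ℝ (Fin n)) M
  have hopen : IsOpen (connectedComponent x) := isOpen_connectedComponent
  let C : SubMulAction Γ M :=
    { carrier := connectedComponent x
      smul_mem' := fun a z hz => by
        rw [connectedComponent_eq hz]
        exact trivial_on_components a z }
  haveI : CompactSpace C := isCompact_iff_compactSpace.1 (isClosed_connectedComponent (x := x)).isCompact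
  haveI : PreconnectedSpace C := isPreconnected_iff_preconnectedSpace.1 (isPreconnected_connectedComponent (x := x))
  haveI : TopologicalSpace.MetrizableSpace M := TopologicalSpace.metrizableSpace_of_t3_secondCountable M
  haveI : TopologicalSpace.MetrizableSpace C := IsEmbedding.subtypeVal.metrizableSpace
  let x0 : C := ⟨x, mem_connectedComponent⟩
  haveI : Nonempty C := ⟨x0⟩
  have hker : (MulAction.toPermHom Γ C).ker = ⊥ := by
    refine (MonoidHom.normal_ker _).eq_bot_or_eq_top.resolve_right fun h => hγ ?_
    have h1 : γ ∈ (MulAction.toPermHom Γ C).ker := by rw [h]; trivial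
    exact congrArg Subtype.val (Equiv.congr_fun (MonoidHom.mem_ker.1 h1) x0)
  letI : MulAction (Multiplicative (DirectSum ℕ fun _ : ℕ => ZMod p)) C :=
    MulAction.compHom C (H.subtype.comp e.symm.toMonoidHom)
  haveI : ContinuousConstSMul (Multiplicative (DirectSum ℕ fun _ : ℕ => ZMod p)) C :=
    ⟨fun v => ((continuous_const_smul (H.subtype (e.symm v))).comp continuous_subtype_val).subtype_mk _⟩
  refine no_faithful' (p := p) (C := C) (V := DirectSum ℕ fun _ : ℕ => ZMod p) (n := n) (fun z => ?_) (fun v hv => ?_) fun hfin => ?_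
  · let e1 := (hopen.isOpenEmbedding_subtypeVal : IsOpenEmbedding (Subtype.val : C → M)).toOpenPartialHomeomorph
    refine ⟨(e1.trans (chartAt (EuclideanSpace ℝ (Fin n)) (z : M))).transHomeomorph
      (PiLp.homeomorph 2 fun _ : Fin n => ℝ), ?_⟩
    simp only [OpenPartialHomeomorph.transHomeomorph_source, OpenPartialHomeomorph.trans_source]
    exact ⟨trivial, mem_chart_source _ _⟩
  · by_contra hc
    push Not at hc
    have h1 : H.subtype (e.symm (Multiplicative.ofAdd v)) ∈ (MulAction.toPermHom Γ C).ker :=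
      MonoidHom.mem_ker.2 (Equiv.ext hc)
    rw [hker, Subgroup.mem_bot, ← map_one H.subtype] at h1
    have h2 := H.subtype_injective h1
    rw [← map_one e.symm] at h2
    exact hv (Multiplicative.ofAdd.injective (e.symm.injective h2))
  · exact not_finite_iff_infinite.2 (directSum_infinite p) (Module.finite_of_finite (ZMod p))

end

end MS

/-- A nontrivial simple group containing a copy of `⨁_{i ∈ ℕ} ℤ/pℤ` has no nontrivial action
by homeomorphisms on a compact topological manifold. -/
theorem simple_group_with_elementary_abelian_infty_no_action
    (p : ℕ) (hp : p.Prime)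
    (Γ : Type*) [Group Γ] [IsSimpleGroup Γ]
    (hsub : ∃ H : Subgroup Γ, Nonempty (H ≃* Multiplicative (DirectSum ℕ fun _ : ℕ => ZMod p)))
    (M : Type*) [TopologicalSpace M] [CompactSpace M] [T2Space M]
    (hman : ∃ n : ℕ, Nonempty (ChartedSpace (EuclideanSpace ℝ (Fin n)) M))
    (φ : Γ →* (M ≃ₜ M)) (γ : Γ) :
    φ γ = 1 := by
  haveI := Fact.mk hp
  obtain ⟨H, ⟨e⟩⟩ := hsub
  obtain ⟨n, ⟨hn⟩⟩ := hman
  letI : MulAction Γ M :=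
    { smul := fun γ x => φ γ x
      one_smul := fun x => by
        change φ 1 x = x
        rw [map_one]
        rfl
      mul_smul := fun a b x => by
        change φ (a * b) x = φ a (φ b x)
        rw [map_mul]
        rfl }
  haveI : ContinuousConstSMul Γ M := ⟨fun a => (φ a).continuous⟩
  exact Homeomorph.ext fun x => MS.reduction p Γ H e M n γ x
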